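/- The Dirichlet Laplacian on the Fichera layer Λ has at most finitely many bound states below the threshold λ₁(Γ): the linear span in L²(Λ) of all nonzero functions u ∈ H¹₀(Λ) satisfying −Δu = λu weakly in Λ for some λ < λ₁(Γ) is finite-dimensional. -/

import Mathlib

/-!
The proof shows that the form `∫_Λ |∇u|² - λ₁(Γ) ∫_Λ u²` is nonnegative on a subspace of finite
codimension; eigenfunctions with eigenvalue below `λ₁(Γ)` span a space on which this form is
negative definite, so that space embeds into the finite-dimensional quotient (`finite_of_form`).

*Gap in the guide.* A symmetrised product trial function gives `λ₁(Γ) < π²` (`gap`), where `π²` is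
the first Dirichlet eigenvalue of the section `(-1,0)` of a branch of `Γ`. Put
`ω² = π² - λ₁(Γ) > 0`.

*Truncated guide.* A `C¹` function `g` on `Γ ∩ {x₁, x₂ < L}`, without condition at the truncation,
is multiplied by the cutoff `χ(x₁) χ(x₂)` with `χ(t) = (1 - (t₊/L)⁴)₊²` and tested in the
variational inequality for `λ₁(Γ)`. In the branches the loss `χ'²` is paid by `ω²`, except on
`t < t0`, where it is of size `K0 / L⁴`. Hence the form on the truncated guide is bounded below by
`-K0/L⁴ ∫_{x₁, x₂ < t0} g²` (`slice`).

*Tubes.* Away from the core `{x₁, x₂, x₃ ≤ R}` the layer splits, according to the largest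
coordinate, into three tubes. In the first one the section at `x₁ = t` is `Γ` truncated at `L = t`,
so `slice` leaves the error `K0 / t⁴`, and the derivative `∂₁u` absorbs it through Hardy's
inequality on the half-line `t > R`, up to a small multiple of `∫ ((∂₁u)² + u²)` over the core
(`tube1`). The other tubes follow by permuting coordinates, and the form on `Λ` is at least
`½ ∫_core |∇u|² - (λ₁(Γ) + 1) ∫_core u²` (`core_bound`).

*Core.* The core part of `Λ` is bounded. Poincaré's inequality on the cells of a sufficiently fine
grid shows that this lower bound is nonnegative as soon as the finitely many cell integrals of `u`
vanish (`form_bound`).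

*Regularity.* The estimates are proved for `C¹` functions with compact support in `Λ`. A continuous
finite-energy function vanishing off `Λ` is approximated by composing it with a function that
vanishes near `0` and multiplying by a cutoff at infinity (`exists_approx`). This extends the
estimate (`form_bound_nice`) and turns the classical eigenvalue equation into its weak form
(`green_nice`), from which eigenfunctions of different eigenvalues are orthogonal for both forms.
-/

noncomputable section
open MeasureTheory Set Real

/-- The interval `I = (-1,0)`. -/
def II : Set ℝ := Set.Ioo (-1) 0

/-- The broken guide `Γ = {x ∈ ℝ² : -1 < min(x₁,x₂) < 0}`. -/
def Gam : Set (ℝ × ℝ) := {p | -1 < min p.1 p.2 ∧ min p.1 p.2 < 0}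

/-- The box `□_L = {x : max(|x₁+1|,|x₂+1|) < L}`. -/
def Box (L : ℝ) : Set (ℝ × ℝ) := {p | |p.1 + 1| < L ∧ |p.2 + 1| < L}

/-- The finite guide `Γ_R = Γ ∩ □_{R+1}`. -/
def GamR (R : ℝ) : Set (ℝ × ℝ) := Gam ∩ Box (R + 1)

/-- The Neumann part `Σ_R = ∂Γ_R ∩ ∂□_{R+1}` of the boundary. -/
def Sig (R : ℝ) : Set (ℝ × ℝ) := frontier (GamR R) ∩ frontier (Box (R + 1))

/-- The Dirichlet part `∂Γ_R ∖ Σ_R` of the boundary. -/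
def DirB (R : ℝ) : Set (ℝ × ℝ) := frontier (GamR R) \ Sig R

/-- Squared gradient `|∇u|² = (∂₁u)² + (∂₂u)²`. -/
def gradSq2 (u : ℝ × ℝ → ℝ) (p : ℝ × ℝ) : ℝ :=
  (fderiv ℝ u p (1, 0)) ^ 2 + (fderiv ℝ u p (0, 1)) ^ 2

/-- Admissible functions for the mixed problem on `Γ_R`: `C¹` up to the boundary
(modelled by a globally `C¹` extension) vanishing on the Dirichlet part. -/
def AdmR (R : ℝ) (u : ℝ × ℝ → ℝ) : Prop :=
  ContDiff ℝ 1 u ∧ ∀ p ∈ DirB R, u p = 0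

/-- First Rayleigh quotient `λ₁(Γ_R)` of the mixed Dirichlet–Neumann Laplacian on `Γ_R`. -/
def lamR (R : ℝ) : ℝ :=
  sInf {r | ∃ u : ℝ × ℝ → ℝ, AdmR R u ∧ (∫ p in GamR R, (u p) ^ 2) ≠ 0 ∧
    r = (∫ p in GamR R, gradSq2 u p) / ∫ p in GamR R, (u p) ^ 2}

/-- First Rayleigh quotient `λ₁(Γ)` of the Dirichlet Laplacian on the broken guide `Γ`. -/
def lamG : ℝ :=
  sInf {r | ∃ u : ℝ × ℝ → ℝ, ContDiff ℝ 1 u ∧ HasCompactSupport u ∧ tsupport u ⊆ Gam ∧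
    (∫ p in Gam, (u p) ^ 2) ≠ 0 ∧
    r = (∫ p in Gam, gradSq2 u p) / ∫ p in Gam, (u p) ^ 2}

/-- `ω = √(π² − λ₁(Γ))`. -/
def omega : ℝ := Real.sqrt (π ^ 2 - lamG)

/-- The Fichera layer `Λ = {x ∈ ℝ³ : -1 < min(x₁,x₂,x₃) < 0}`. -/
def Lam3 : Set (ℝ × ℝ × ℝ) :=
  {x | -1 < min x.1 (min x.2.1 x.2.2) ∧ min x.1 (min x.2.1 x.2.2) < 0}

/-- The residual domain `Ω_R³ = {x : x₃ > R and (x₁,x₂) ∈ Γ_{x₃}}`. -/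
def Om3 (R : ℝ) : Set (ℝ × ℝ × ℝ) := {x | R < x.2.2 ∧ (x.1, x.2.1) ∈ GamR x.2.2}

/-- Squared gradient in 3D: `|∇u|² = (∂₁u)² + (∂₂u)² + (∂₃u)²`. -/
def gradSq3 (u : ℝ × ℝ × ℝ → ℝ) (x : ℝ × ℝ × ℝ) : ℝ :=
  (fderiv ℝ u x (1, 0, 0)) ^ 2 + (fderiv ℝ u x (0, 1, 0)) ^ 2 + (fderiv ℝ u x (0, 0, 1)) ^ 2

/-- Partial derivative in direction `e` in 3D. -/
def pd3 (e : ℝ × ℝ × ℝ) (u : ℝ × ℝ × ℝ → ℝ) : ℝ × ℝ × ℝ → ℝ := fun x => fderiv ℝ u x e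

/-- Laplacian in 3D. -/
def lap3 (u : ℝ × ℝ × ℝ → ℝ) (x : ℝ × ℝ × ℝ) : ℝ :=
  pd3 (1,0,0) (pd3 (1,0,0) u) x + pd3 (0,1,0) (pd3 (0,1,0) u) x +
    pd3 (0,0,1) (pd3 (0,0,1) u) x

/-- Eigenfunction of the Dirichlet Laplacian on the Fichera layer `Λ` with eigenvalue
`lam`: a nonzero function in `H¹₀(Λ) ∩ L²`, extended by `0` outside `Λ`, classical
solution of `-Δu = λ u` in `Λ`. -/
def IsEigenLam (lam : ℝ) (u : ℝ × ℝ × ℝ → ℝ) : Prop :=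
  Continuous u ∧ (∀ x ∉ Lam3, u x = 0) ∧ ContDiffOn ℝ 2 u Lam3 ∧
  IntegrableOn (fun x => (u x) ^ 2) Lam3 ∧ IntegrableOn (fun x => gradSq3 u x) Lam3 ∧
  (∀ x ∈ Lam3, -(lap3 u x) = lam * u x) ∧ (∃ x, u x ≠ 0)

open Filter Topology

/-! ### One-dimensional inequalities -/

theorem hcs_deriv {f f' : ℝ → ℝ} (hf : ∀ x, HasDerivAt f (f' x) x) (hc : HasCompactSupport f) :
    HasCompactSupport f' := by
  have : f' = deriv f := by ext x; exact (hf x).deriv.symm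
  rw [this]; exact hc.deriv

/-- The sharp Dirichlet inequality on `(-1,0)`, obtained by completing the square:
`f'² - π² f² = (f' - π cot(πx) f)² + (π cot(πx) f²)'`. -/
theorem wirtinger {f f' : ℝ → ℝ} (hf : ∀ x, HasDerivAt f (f' x) x) (hf'c : Continuous f')
    (hc : HasCompactSupport f) (hs : tsupport f ⊆ Ioo (-1) 0) :
    0 ≤ ∫ x, ((f' x) ^ 2 - π ^ 2 * (f x) ^ 2) := by
  have hfc : Continuous f := continuous_iff_continuousAt.2 fun x => (hf x).continuousAt
  have hc' := hcs_deriv hf hc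
  set k : ℝ → ℝ := fun x => (f x) ^ 2 * (π * (cos (π * x) / sin (π * x))) with hk
  set k' : ℝ → ℝ := fun x => 2 * f x * f' x * (π * (cos (π * x) / sin (π * x)))
    - (f x) ^ 2 * (π ^ 2 * (1 / sin (π * x) ^ 2)) with hk'
  have hsin : ∀ x ∈ Ioo (-1 : ℝ) 0, sin (π * x) ≠ 0 := by
    intro x hx
    apply ne_of_lt
    apply sin_neg_of_neg_of_neg_pi_lt
    · exact mul_neg_of_pos_of_neg pi_pos hx.2
    · nlinarith [pi_pos, hx.1]
  have hout : ∀ x ∉ tsupport f, f =ᶠ[nhds x] 0 := fun x hx => notMem_tsupport_iff_eventuallyEq.1 hx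
  have hder : ∀ x, HasDerivAt k (k' x) x := by
    intro x
    by_cases hx : x ∈ tsupport f
    · have h0 := hsin x (hs hx)
      have h1 : HasDerivAt (fun x : ℝ => π * x) π x := by simpa using (hasDerivAt_id x).const_mul π
      have := ((hf x).pow 2).mul ((((hasDerivAt_cos _).comp x h1).div ((hasDerivAt_sin _).comp x h1) h0).const_mul π)
      refine this.congr_deriv ?_
      simp only [hk', Function.comp]
      have h2 := sin_sq_add_cos_sq (π * x)
      simp
      field_simp
      linear_combination (-(f x)^2 * π) * h2
    · have h0 := hout x hx
      have h1 : k =ᶠ[nhds x] 0 := by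
        filter_upwards [h0] with y hy
        simp [hk, hy]
      have h2 : k' x = 0 := by
        have := h0.eq_of_nhds
        simp [hk', this]
      rw [h2]
      exact (hasDerivAt_const x (0:ℝ)).congr_of_eventuallyEq h1
  have hkc : HasCompactSupport k := by
    apply hc.mono
    intro x hx
    simp only [hk, Function.mem_support] at hx ⊢
    intro h; simp [h] at hx
  have hkcont : Continuous k := continuous_iff_continuousAt.2 fun x => (hder x).continuousAt
  have hk'cont : Continuous k' := by
    rw [continuous_iff_continuousAt]
    intro x
    by_cases hx : x ∈ tsupport f
    · have h0 := hsin x (hs hx)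
      have h1 : sin (π * x) ^ 2 ≠ 0 := pow_ne_zero _ h0
      simp only [hk']
      have a1 := hfc.continuousAt (x := x)
      have a2 := hf'c.continuousAt (x := x)
      fun_prop (disch := assumption)
    · have h0 := hout x hx
      have h1 : k' =ᶠ[nhds x] fun _ => 0 := by
        filter_upwards [h0] with y hy
        simp [hk', hy]
      exact continuousAt_const.congr h1.symm
  have hkint : ∫ x, k' x = 0 := by
    apply integral_eq_zero_of_hasDerivAt_of_integrable hder
    · exact hk'cont.integrable_of_hasCompactSupport (hcs_deriv hder hkc)
    · exact hkcont.integrable_of_hasCompactSupport hkc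
  have hi1 : Integrable (fun x => (f' x) ^ 2 - π ^ 2 * (f x) ^ 2) := by
    apply Continuous.integrable_of_hasCompactSupport (by fun_prop)
    apply HasCompactSupport.sub
    · exact hc'.comp_left (g := fun y => y ^ 2) (by simp)
    · exact hc.comp_left (g := fun y => π ^ 2 * y ^ 2) (by simp)
  have hi2 : Integrable k' := hk'cont.integrable_of_hasCompactSupport (hcs_deriv hder hkc)
  have : ∫ x, ((f' x) ^ 2 - π ^ 2 * (f x) ^ 2) = ∫ x, ((f' x) ^ 2 - π ^ 2 * (f x) ^ 2) - k' x := by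
    rw [integral_sub hi1 hi2, hkint, sub_zero]
  rw [this]
  apply integral_nonneg
  intro x
  show 0 ≤ (f' x) ^ 2 - π ^ 2 * (f x) ^ 2 - k' x
  by_cases hx : x ∈ tsupport f
  · have h0 := hsin x (hs hx)
    have e : (f' x) ^ 2 - π ^ 2 * (f x) ^ 2 - k' x = (f' x - π * (cos (π * x) / sin (π * x)) * f x) ^ 2 := by
      have h2 := sin_sq_add_cos_sq (π * x)
      simp only [hk']
      field_simp
      linear_combination (-(π ^ 2 * (f x)^2)) * h2
    rw [e]; positivity
  · have h0 := hout x hx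
    have a := h0.eq_of_nhds
    have b : f' x = 0 := by
      have : HasDerivAt f 0 x := (hasDerivAt_const x (0:ℝ)).congr_of_eventuallyEq h0
      exact (hf x).unique this
    simp [hk', a, b]

/-- A Hardy inequality on a half-line without boundary condition: the boundary term is paid for on
the unit interval to the left of `R`. Integrating `(f' - f/(2t))² ≥ 0` over `t > R` leaves the term
`f(R)²/(2R)`, which is the integral over `[R-1,R]` of the derivative of `(t-(R-1)) f(t)²/(2R)`. -/
theorem hardy {f f' : ℝ → ℝ} (hf : ∀ x, HasDerivAt f (f' x) x) (hf'c : Continuous f')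
    (hc : HasCompactSupport f) {R : ℝ} (hR : 1 ≤ R) :
    ∫ t in Ioi R, (f t) ^ 2 / (4 * t ^ 2) ≤
      (∫ t in Ioi R, (f' t) ^ 2) + ∫ t in Ioc (R - 1) R, ((f' t) ^ 2 + (f t) ^ 2) := by
  have hfc : Continuous f := continuous_iff_continuousAt.2 fun x => (hf x).continuousAt
  have hc' := hcs_deriv hf hc
  have hR0 : 0 < R := by linarith
  have h1 : (f R) ^ 2 / (2 * R) ≤ ∫ t in Ioc (R - 1) R, ((f' t) ^ 2 + (f t) ^ 2) := by
    have hd : ∀ t ∈ uIcc (R - 1) R, HasDerivAt (fun t => (t - (R - 1)) / (2 * R) * (f t) ^ 2)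
        (1 / (2 * R) * (f t) ^ 2 + (t - (R - 1)) / (2 * R) * (2 * f t * f' t)) t := by
      intro t _
      have a : HasDerivAt (fun t : ℝ => (t - (R - 1)) / (2 * R)) (1 / (2 * R)) t :=
        ((hasDerivAt_id t).sub_const _).div_const _
      refine (a.mul ((hf t).pow 2)).congr_deriv ?_
      simp
    have e := intervalIntegral.integral_eq_sub_of_hasDerivAt hd
      (Continuous.intervalIntegrable (by fun_prop) _ _)
    rw [intervalIntegral.integral_of_le (by linarith)] at e
    have e2 : (f R) ^ 2 / (2 * R) = ∫ t in Ioc (R - 1) R,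
        (1 / (2 * R) * (f t) ^ 2 + (t - (R - 1)) / (2 * R) * (2 * f t * f' t)) := by
      rw [e]; field_simp; ring
    rw [e2]
    apply setIntegral_mono_on
    · exact (Continuous.integrableOn_Icc (by fun_prop)).mono_set Ioc_subset_Icc_self
    · exact (Continuous.integrableOn_Icc (by fun_prop)).mono_set Ioc_subset_Icc_self
    · exact measurableSet_Ioc
    · intro t ht
      set h := (t - (R - 1)) / (2 * R) with hh
      have b1 : 1 / (2 * R) ≤ 1 / 2 := by
        rw [div_le_div_iff₀ (by linarith) (by norm_num)]; linarith
      have b2 : 0 ≤ h := div_nonneg (by linarith [ht.1]) (by linarith)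
      have b3 : h ≤ 1 / 2 := by
        rw [hh, div_le_div_iff₀ (by linarith) (by norm_num)]; linarith [ht.2]
      nlinarith [sq_nonneg (f' t - h * f t), sq_nonneg (f t), mul_nonneg b2 (sub_nonneg.2 b3),
        mul_nonneg (sub_nonneg.2 b1) (sq_nonneg (f t)),
        mul_nonneg (mul_nonneg b2 (sub_nonneg.2 b3)) (sq_nonneg (f t)),
        mul_nonneg (sub_nonneg.2 b3) (sq_nonneg (f t))]
  have h2 : ∫ t in Ioi R, (f t) ^ 2 / (4 * t ^ 2) ≤ (∫ t in Ioi R, (f' t) ^ 2) + (f R) ^ 2 / (2 * R) := by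
    -- the boundary term at `R` comes from the antiderivative `-f²/(2t)`
    set m : ℝ → ℝ := fun t => max t R with hm
    have hmpos : ∀ t, m t ≠ 0 := fun t => (lt_of_lt_of_le hR0 (le_max_right _ _)).ne'
    have hmpos2 : ∀ t, 4 * m t ^ 2 ≠ 0 := fun t => by have := hmpos t; positivity
    have hmpos3 : ∀ t, 2 * m t ^ 2 ≠ 0 := fun t => by have := hmpos t; positivity
    have hmpos4 : ∀ t, 2 * m t ≠ 0 := fun t => by have := hmpos t; positivity
    have hmc : Continuous m := by fun_prop
    have hme : ∀ t ∈ Ioi R, m t = t := fun t ht => max_eq_left (le_of_lt ht)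
    have hd : ∀ t ∈ Ioi R, HasDerivAt (fun t => -(f t) ^ 2 / (2 * t))
        ((f t) ^ 2 / (2 * m t ^ 2) - f t * f' t / m t) t := by
      intro t ht
      have ht0 : t ≠ 0 := (hR0.trans ht).ne'
      rw [hme t ht]
      have a : HasDerivAt (fun t : ℝ => 2 * t) 2 t := by simpa using (hasDerivAt_id t).const_mul 2
      refine ((((hf t).pow 2).neg).div a (by positivity)).congr_deriv ?_
      simp
      field_simp
      ring
    have hcs1 : HasCompactSupport (fun t => (f t) ^ 2 / (2 * m t ^ 2) - f t * f' t / m t) := by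
      apply hc.mono
      intro x hx h
      apply hx; simp [h]
    have hcs2 : HasCompactSupport (fun t => (f t) ^ 2 / (4 * m t ^ 2)) := by
      apply hc.mono
      intro x hx h
      apply hx; simp [h]
    have i1 : Integrable (fun t => (f t) ^ 2 / (2 * m t ^ 2) - f t * f' t / m t) :=
      Continuous.integrable_of_hasCompactSupport (by fun_prop (disch := assumption)) hcs1
    have i2 : Integrable (fun t => (f t) ^ 2 / (4 * m t ^ 2)) :=
      Continuous.integrable_of_hasCompactSupport (by fun_prop (disch := assumption)) hcs2
    have i3 : Integrable (fun t => (f' t) ^ 2) :=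
      Continuous.integrable_of_hasCompactSupport (by fun_prop) (hc'.comp_left (g := fun y => y ^ 2) (by simp))
    have htend : Filter.Tendsto (fun t => -(f t) ^ 2 / (2 * t)) Filter.atTop (nhds 0) := by
      have h0 : f =ᶠ[Filter.cocompact ℝ] 0 := by
        simpa [Filter.coclosedCompact_eq_cocompact] using hasCompactSupport_iff_eventuallyEq.1 hc
      have h0' : f =ᶠ[Filter.atTop] 0 := h0.filter_mono atTop_le_cocompact
      apply tendsto_const_nhds.congr'
      filter_upwards [h0'] with t ht
      simp [ht]
    have e := integral_Ioi_of_hasDerivAt_of_tendsto (a := R)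
      (ContinuousAt.continuousWithinAt (by
        have := hfc.continuousAt (x := R)
        have h2 : (2 * R) ≠ 0 := by positivity
        fun_prop (disch := assumption))) hd i1.integrableOn htend
    have e3 : ∫ t in Ioi R, (f t) ^ 2 / (4 * t ^ 2) = ∫ t in Ioi R, (f t) ^ 2 / (4 * m t ^ 2) := by
      apply setIntegral_congr_fun measurableSet_Ioi
      intro t ht
      simp only [hme t ht]
    rw [e3]
    have e4 : (f R) ^ 2 / (2 * R) = ∫ t in Ioi R, ((f t) ^ 2 / (2 * m t ^ 2) - f t * f' t / m t) := by
      rw [e]; ring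
    rw [e4, ← integral_add i3.integrableOn i1.integrableOn]
    apply setIntegral_mono_on i2.integrableOn (i3.add i1).integrableOn measurableSet_Ioi
    intro t ht
    have hm0 := hmpos t
    have : (f' t) ^ 2 + ((f t) ^ 2 / (2 * m t ^ 2) - f t * f' t / m t) - (f t) ^ 2 / (4 * m t ^ 2)
      = (f' t - f t / (2 * m t)) ^ 2 := by
      field_simp; ring
    have h3 := sq_nonneg (f' t - f t / (2 * m t))
    rw [← this] at h3
    simp only [Pi.add_apply]
    linarith
  linarith

/-- Cauchy–Schwarz against the constant function on an interval of length `h`. -/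
theorem cs_interval {g : ℝ → ℝ} (hg : Continuous g) (a : ℝ) {h : ℝ} (hh : 0 < h) :
    (∫ t in Ioc a (a + h), g t) ^ 2 ≤ h * ∫ t in Ioc a (a + h), (g t) ^ 2 := by
  have i1 : IntegrableOn g (Ioc a (a + h)) := hg.integrableOn_Icc.mono_set Ioc_subset_Icc_self
  have i2 : IntegrableOn (fun t => (g t) ^ 2) (Ioc a (a + h)) :=
    (Continuous.integrableOn_Icc (by fun_prop)).mono_set Ioc_subset_Icc_self
  set A := ∫ t in Ioc a (a + h), g t
  set B := ∫ t in Ioc a (a + h), (g t) ^ 2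
  have e : ∫ t in Ioc a (a + h), (h * g t - A) ^ 2 = h ^ 2 * B - 2 * h * A * A + A ^ 2 * h := by
    have : ∀ t, (h * g t - A) ^ 2 = h ^ 2 * (g t) ^ 2 - 2 * h * A * g t + A ^ 2 := fun t => by ring
    simp_rw [this]
    rw [integral_add (by exact (i2.const_mul _).sub (i1.const_mul _)) (by simp),
      integral_sub (i2.const_mul _) (i1.const_mul _), integral_const_mul, integral_const_mul]
    simp [hh.le]
    ring
  have p : 0 ≤ ∫ t in Ioc a (a + h), (h * g t - A) ^ 2 := integral_nonneg fun t => by positivity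
  rw [e] at p
  have : 0 ≤ h * (h * B - A ^ 2) := by nlinarith
  nlinarith [nonneg_of_mul_nonneg_right this hh]

/-- Poincaré's inequality with mean value on an interval of length `h`. -/
theorem poincare1 {f f' : ℝ → ℝ} (hf : ∀ x, HasDerivAt f (f' x) x) (hf'c : Continuous f')
    (a : ℝ) {h : ℝ} (hh : 0 < h) :
    ∫ t in Ioc a (a + h), (f t) ^ 2 ≤
      1 / h * (∫ t in Ioc a (a + h), f t) ^ 2 + h ^ 2 * ∫ t in Ioc a (a + h), (f' t) ^ 2 := by
  have hfc : Continuous f := continuous_iff_continuousAt.2 fun x => (hf x).continuousAt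
  have ii : ∀ {g : ℝ → ℝ}, Continuous g → IntegrableOn g (Ioc a (a + h)) :=
    fun hg => hg.integrableOn_Icc.mono_set Ioc_subset_Icc_self
  set A := ∫ t in Ioc a (a + h), f t with hA
  set D := ∫ t in Ioc a (a + h), |f' t| with hD
  have hvol : volume.real (Ioc a (a + h)) = h := by simp [hh.le]
  have hD2 : D ^ 2 ≤ h * ∫ t in Ioc a (a + h), (f' t) ^ 2 := by
    have := cs_interval (g := fun t => |f' t|) (by fun_prop) a hh
    simpa [sq_abs] using this
  have osc : ∀ t ∈ Ioc a (a + h), ∀ s ∈ Ioc a (a + h), |f t - f s| ≤ D := by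
    intro t ht s hs
    have e := intervalIntegral.integral_eq_sub_of_hasDerivAt (a := s) (b := t) (fun x _ => hf x)
      (hf'c.intervalIntegrable _ _)
    rw [← e]
    have b := intervalIntegral.norm_integral_le_integral_norm_uIoc (f := f') (a := s) (b := t) (μ := volume)
    rw [Real.norm_eq_abs] at b
    refine b.trans ?_
    simp only [Real.norm_eq_abs]
    apply setIntegral_mono_set (ii (by fun_prop))
    · exact Filter.Eventually.of_forall fun x => abs_nonneg _
    · refine LE.le.eventuallyLE ?_
      intro x hx
      rw [mem_uIoc] at hx
      constructor
      · rcases hx with hx | hx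
        · exact hs.1.trans hx.1
        · exact ht.1.trans hx.1
      · rcases hx with hx | hx
        · exact hx.2.trans ht.2
        · exact hx.2.trans hs.2
  have dev : ∀ t ∈ Ioc a (a + h), |h * f t - A| ≤ D * h := by
    intro t ht
    have e : h * f t - A = ∫ s in Ioc a (a + h), (f t - f s) := by
      rw [integral_sub (by simp) (ii hfc)]
      simp [hh.le, hA]
    rw [e, ← Real.norm_eq_abs]
    have := norm_setIntegral_le_of_norm_le_const (f := fun s => f t - f s) (C := D)
      (s := Ioc a (a + h)) (μ := volume) (by simp) (fun s hs => osc t ht s hs)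
    rwa [hvol] at this
  have key : ∫ t in Ioc a (a + h), (h * f t - A) ^ 2 ≤ (D * h) ^ 2 * h := by
    have : ∫ t in Ioc a (a + h), (h * f t - A) ^ 2 ≤ ∫ t in Ioc a (a + h), (D * h) ^ 2 := by
      apply setIntegral_mono_on (ii (by fun_prop)) (ii continuous_const) measurableSet_Ioc
      intro t ht
      rw [← sq_abs (h * f t - A)]
      exact pow_le_pow_left₀ (abs_nonneg _) (dev t ht) 2
    refine this.trans (le_of_eq ?_)
    simp [hh.le]; ring
  have e : ∫ t in Ioc a (a + h), (h * f t - A) ^ 2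
      = h ^ 2 * (∫ t in Ioc a (a + h), (f t) ^ 2) - 2 * h * A * A + A ^ 2 * h := by
    have : ∀ t, (h * f t - A) ^ 2 = h ^ 2 * (f t) ^ 2 - 2 * h * A * f t + A ^ 2 := fun t => by ring
    simp_rw [this]
    rw [integral_add (ii (by fun_prop)) (by simp),
      integral_sub (ii (by fun_prop)) (ii (by fun_prop)), integral_const_mul, integral_const_mul]
    simp [hh.le]
    ring
  rw [e] at key
  set X := ∫ t in Ioc a (a + h), (f t) ^ 2
  set Y := ∫ t in Ioc a (a + h), (f' t) ^ 2
  have k2 : h ^ 2 * X ≤ h * A ^ 2 + h ^ 2 * (h ^ 2 * Y) := by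
    have : D ^ 2 * (h ^ 2 * h) ≤ h * Y * (h ^ 2 * h) := by gcongr
    nlinarith
  have k3 : h ^ 2 * X ≤ h ^ 2 * (1 / h * A ^ 2 + h ^ 2 * Y) := by
    have : h ^ 2 * (1 / h * A ^ 2 + h ^ 2 * Y) = h * A ^ 2 + h ^ 2 * (h ^ 2 * Y) := by
      field_simp
    rw [this]; exact k2
  exact le_of_mul_le_mul_left k3 (by positivity)

/-! ### Truncation near the zero set -/

/-- A smooth function vanishing on `[-1,1]` and equal to the identity where `s² ≥ 2`. -/
def phi (s : ℝ) : ℝ := s * Real.smoothTransition (s ^ 2 - 1)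

/-- The rescaled truncation `s ↦ φ((n+1)s)/(n+1)`; it vanishes for `|s| ≤ 1/(n+1)` and tends to the
identity. -/
def phin (n : ℕ) (s : ℝ) : ℝ := phi ((n + 1) * s) / (n + 1)

/-- The derivative of `phin n`. -/
def phid (n : ℕ) (s : ℝ) : ℝ := deriv phi ((n + 1) * s)

theorem phi_contDiff : ContDiff ℝ 2 phi := by
  unfold phi
  exact contDiff_id.mul (Real.smoothTransition.contDiff.comp (by fun_prop))

theorem phi_zero {s : ℝ} (h : |s| ≤ 1) : phi s = 0 := by
  unfold phi
  rw [Real.smoothTransition.zero_of_nonpos, mul_zero]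
  have := (sq_le_one_iff_abs_le_one s).2 h
  linarith

theorem phi_id {s : ℝ} (h : 2 ≤ s ^ 2) : phi s = s := by
  unfold phi
  rw [Real.smoothTransition.one_of_one_le (by linarith), mul_one]

theorem phi_le (s : ℝ) : |phi s| ≤ |s| := by
  unfold phi
  rw [abs_mul, abs_of_nonneg (Real.smoothTransition.nonneg _)]
  exact mul_le_of_le_one_right (abs_nonneg _) (Real.smoothTransition.le_one _)

theorem phi_deriv_zero : deriv phi 0 = 0 := by
  have : phi =ᶠ[𝓝 0] fun _ => 0 := by
    filter_upwards [Metric.ball_mem_nhds (0:ℝ) one_pos] with s hs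
    apply phi_zero
    simp at hs; exact hs.le
  rw [this.deriv_eq]; simp

theorem phi_deriv_one {s : ℝ} (h : 2 < s ^ 2) : deriv phi s = 1 := by
  have : phi =ᶠ[𝓝 s] fun t => t := by
    have ho : IsOpen {t : ℝ | 2 < t ^ 2} := isOpen_lt (by fun_prop) (by fun_prop)
    filter_upwards [ho.mem_nhds h] with t ht
    exact phi_id (le_of_lt ht)
  rw [this.deriv_eq]; simp

theorem phi_deriv_cont : Continuous (deriv phi) := phi_contDiff.continuous_deriv (by norm_num)

theorem phi_deriv_bdd : ∃ C : ℝ, 1 ≤ C ∧ ∀ s, |deriv phi s| ≤ C := by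
  obtain ⟨C, hC⟩ := (isCompact_Icc (a := (-2:ℝ)) (b := 2)).exists_bound_of_continuousOn
    phi_deriv_cont.continuousOn
  refine ⟨max C 1, le_max_right _ _, fun s => ?_⟩
  by_cases hs : s ∈ Icc (-2:ℝ) 2
  · exact (hC s hs).trans (le_max_left _ _)
  · rw [phi_deriv_one, abs_one]
    · exact le_max_right _ _
    · rw [mem_Icc, not_and_or] at hs
      rcases hs with h | h <;> nlinarith

theorem phin_contDiff (n : ℕ) : ContDiff ℝ 2 (phin n) := by
  unfold phin
  exact (phi_contDiff.comp (contDiff_const.mul contDiff_id)).div_const _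

theorem phin_le (n : ℕ) (s : ℝ) : |phin n s| ≤ |s| := by
  unfold phin
  have hn : (0:ℝ) < n + 1 := by positivity
  rw [abs_div, abs_of_pos hn, div_le_iff₀ hn]
  calc _ ≤ _ := phi_le _
    _ = _ := by rw [abs_mul, abs_of_pos hn, mul_comm]

theorem phin_zero {n : ℕ} {s : ℝ} (h : |s| ≤ 1 / (n + 1)) : phin n s = 0 := by
  unfold phin
  have hn : (0:ℝ) < n + 1 := by positivity
  rw [phi_zero, zero_div]
  rw [abs_mul, abs_of_pos hn]
  rw [le_div_iff₀ hn] at h; linarith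

theorem phin_hasDerivAt (n : ℕ) (s : ℝ) : HasDerivAt (phin n) (phid n s) s := by
  have hn : (n + 1 : ℝ) ≠ 0 := by positivity
  have h1 : HasDerivAt (fun s : ℝ => (n + 1 : ℝ) * s) (n + 1) s := by
    simpa using (hasDerivAt_id s).const_mul (n + 1 : ℝ)
  have h2 : HasDerivAt phi (deriv phi ((n + 1) * s)) ((n + 1) * s) :=
    (phi_contDiff.differentiable (by norm_num) _).hasDerivAt
  refine ((h2.comp s h1).div_const (n + 1 : ℝ)).congr_deriv ?_
  rw [phid]; field_simp

theorem phid_cont (n : ℕ) : Continuous (phid n) := phi_deriv_cont.comp (by fun_prop)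

theorem eventually_big {s : ℝ} (hs : s ≠ 0) : ∀ᶠ n : ℕ in atTop, 2 < (((n:ℝ) + 1) * s) ^ 2 := by
  have : Tendsto (fun n : ℕ => ((n:ℝ) + 1) * |s|) atTop atTop :=
    (tendsto_atTop_add_const_right _ _ tendsto_natCast_atTop_atTop).atTop_mul_const (abs_pos.2 hs)
  filter_upwards [this.eventually_gt_atTop 2] with n hn
  rw [← sq_abs, abs_mul, abs_of_pos (by positivity : (0:ℝ) < n + 1)]
  nlinarith

theorem phin_tendsto (s : ℝ) : Tendsto (fun n => phin n s) atTop (𝓝 s) := by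
  by_cases hs : s = 0
  · subst hs
    apply tendsto_const_nhds.congr
    intro n
    rw [phin_zero]; simp; positivity
  · apply tendsto_const_nhds.congr'
    filter_upwards [eventually_big hs] with n hn
    rw [phin, phi_id hn.le]
    field_simp

theorem phid_tendsto {s : ℝ} (hs : s ≠ 0) : Tendsto (fun n => phid n s) atTop (𝓝 1) := by
  apply tendsto_const_nhds.congr'
  filter_upwards [eventually_big hs] with n hn
  rw [phid, phi_deriv_one hn]

theorem phid_zero (n : ℕ) : phid n 0 = 0 := by simp [phid, phi_deriv_zero]

section trunc
set_option linter.unusedSectionVars false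
variable {E : Type*} [NormedAddCommGroup E] [NormedSpace ℝ E] {f : E → ℝ} {U : Set E}

/-- Composition with `phin n` moves the support of a function vanishing off `U` into a closed subset of `U`. -/
theorem trunc_tsupport (hf : Continuous f) (h0 : ∀ x ∉ U, f x = 0) (n : ℕ) :
    tsupport (fun x => phin n (f x)) ⊆ {x | 1 / ((n:ℝ) + 1) ≤ |f x|} ∧
    {x | 1 / ((n:ℝ) + 1) ≤ |f x|} ⊆ U := by
  constructor
  · apply closure_minimal
    · intro x hx
      by_contra h
      simp only [mem_ofPred_eq, not_le] at h
      exact hx (phin_zero h.le)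
    · exact isClosed_le continuous_const (by fun_prop)
  · intro x hx
    by_contra h
    simp only [mem_ofPred_eq, h0 x h, abs_zero] at hx
    have : (0:ℝ) < 1 / (n + 1) := by positivity
    linarith

theorem trunc_eventually (hf : Continuous f) {x : E} (hx : f x = 0) (n : ℕ) :
    (fun x => phin n (f x)) =ᶠ[𝓝 x] fun _ => 0 := by
  have : ∀ᶠ y in 𝓝 x, |f y| < 1 / ((n:ℝ) + 1) := by
    apply (continuous_abs.comp hf).continuousAt.eventually_lt continuousAt_const
    simp [hx]; positivity
  filter_upwards [this] with y hy
  exact phin_zero hy.le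

/-- Since the truncation vanishes near the zero set of `f`, it is `C¹` everywhere although `f` is only `C¹` in `U`. -/
theorem trunc_contDiff (hf : Continuous f) (hU : IsOpen U) (hfU : ContDiffOn ℝ 1 f U)
    (h0 : ∀ x ∉ U, f x = 0) (n : ℕ) : ContDiff ℝ 1 (fun x => phin n (f x)) := by
  rw [contDiff_iff_contDiffAt]
  intro x
  by_cases hx : x ∈ U
  · exact ((phin_contDiff n).of_le (by norm_num)).contDiffAt.comp x
      (hfU.contDiffAt (hU.mem_nhds hx))
  · exact contDiffAt_const.congr_of_eventuallyEq (trunc_eventually hf (h0 x hx) n)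

theorem trunc_fderiv (hf : Continuous f) (hU : IsOpen U) (hfU : ContDiffOn ℝ 1 f U)
    (h0 : ∀ x ∉ U, f x = 0) (n : ℕ) (x : E) :
    fderiv ℝ (fun x => phin n (f x)) x = phid n (f x) • fderiv ℝ f x := by
  by_cases hx : x ∈ U
  · have h1 : DifferentiableAt ℝ f x := (hfU.contDiffAt (hU.mem_nhds hx)).differentiableAt (by norm_num)
    exact ((phin_hasDerivAt n (f x)).comp_hasFDerivAt x h1.hasFDerivAt).fderiv
  · rw [(trunc_eventually hf (h0 x hx) n).fderiv_eq, h0 x hx, phid_zero]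
    simp
end trunc

/-! ### The variational inequality for `λ₁(Γ)` -/

/-- `C¹` functions with compact support in the broken guide. -/
def Test2 (g : ℝ × ℝ → ℝ) : Prop := ContDiff ℝ 1 g ∧ HasCompactSupport g ∧ tsupport g ⊆ Gam

theorem gradSq2_nonneg (u : ℝ × ℝ → ℝ) (p) : 0 ≤ gradSq2 u p := by unfold gradSq2; positivity

theorem lamG_bdd : BddBelow {r | ∃ u : ℝ × ℝ → ℝ, ContDiff ℝ 1 u ∧ HasCompactSupport u ∧ tsupport u ⊆ Gam ∧
    (∫ p in Gam, (u p) ^ 2) ≠ 0 ∧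
    r = (∫ p in Gam, gradSq2 u p) / ∫ p in Gam, (u p) ^ 2} := by
  refine ⟨0, ?_⟩
  rintro r ⟨u, -, -, -, -, rfl⟩
  exact div_nonneg (integral_nonneg fun p => gradSq2_nonneg u p) (integral_nonneg fun p => sq_nonneg _)

theorem lamG_nonneg : 0 ≤ lamG := by
  apply Real.sInf_nonneg
  rintro r ⟨u, -, -, -, -, rfl⟩
  exact div_nonneg (integral_nonneg fun p => gradSq2_nonneg u p) (integral_nonneg fun p => sq_nonneg _)

theorem gradSq2_cont {g : ℝ × ℝ → ℝ} (hg : ContDiff ℝ 1 g) : Continuous (gradSq2 g) := by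
  have := hg.continuous_fderiv (by norm_num)
  unfold gradSq2
  fun_prop

theorem gradSq2_hcs {g : ℝ × ℝ → ℝ} (hg : HasCompactSupport g) : HasCompactSupport (gradSq2 g) := by
  have := hg.fderiv (𝕜 := ℝ)
  exact this.comp_left (g := fun L : (ℝ × ℝ) →L[ℝ] ℝ => (L (1, 0)) ^ 2 + (L (0, 1)) ^ 2) (by simp)

theorem sq_hcs {E : Type*} [TopologicalSpace E] {g : E → ℝ} (hg : HasCompactSupport g) :
    HasCompactSupport (fun x => (g x) ^ 2) :=
  hg.comp_left (g := fun y => y ^ 2) (by simp)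

theorem gradSq2_eq_zero {g : ℝ × ℝ → ℝ} {p} (h : p ∉ tsupport g) : gradSq2 g p = 0 := by
  have h0 : fderiv ℝ g p = 0 := by
    have := notMem_tsupport_iff_eventuallyEq.1 h
    rw [this.fderiv_eq]; simp
  simp [gradSq2, h0]

/-- The variational inequality defining `λ₁(Γ)`. -/
theorem lamG_le {g : ℝ × ℝ → ℝ} (hg : Test2 g) :
    0 ≤ ∫ p, (gradSq2 g p - lamG * (g p) ^ 2) := by
  obtain ⟨h1, h2, h3⟩ := hg
  have i1 : Integrable (gradSq2 g) := (gradSq2_cont h1).integrable_of_hasCompactSupport (gradSq2_hcs h2)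
  have i2 : Integrable (fun p => (g p) ^ 2) :=
    Continuous.integrable_of_hasCompactSupport (by have := h1.continuous; fun_prop) (sq_hcs h2)
  rw [integral_sub i1 (i2.const_mul _), integral_const_mul]
  have e1 : ∫ p in Gam, (g p) ^ 2 = ∫ p, (g p) ^ 2 := by
    apply setIntegral_eq_integral_of_forall_compl_eq_zero
    intro p hp
    have : p ∉ tsupport g := fun h => hp (h3 h)
    simp [image_eq_zero_of_notMem_tsupport this]
  have e2 : ∫ p in Gam, gradSq2 g p = ∫ p, gradSq2 g p := by
    apply setIntegral_eq_integral_of_forall_compl_eq_zero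
    intro p hp
    exact gradSq2_eq_zero fun h => hp (h3 h)
  by_cases h0 : ∫ p in Gam, (g p) ^ 2 = 0
  · rw [← e1, h0, ← e2, mul_zero, sub_zero]
    exact integral_nonneg fun p => gradSq2_nonneg g p
  · have hle : lamG ≤ (∫ p in Gam, gradSq2 g p) / ∫ p in Gam, (g p) ^ 2 :=
      csInf_le lamG_bdd ⟨g, h1, h2, h3, h0, rfl⟩
    have hpos : 0 < ∫ p in Gam, (g p) ^ 2 :=
      lt_of_le_of_ne (integral_nonneg fun p => sq_nonneg _) (Ne.symm h0)
    rw [le_div_iff₀ hpos, e1, e2] at hle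
    linarith

/-- Testing the variational inequality with the symmetrised product
`a(x₂+1) s(x₁+1) + s(x₂+1) a(x₁+1)`. -/
theorem lamG_prod {a a' s s' : ℝ → ℝ} (ha : ContDiff ℝ 1 a) (hs : ContDiff ℝ 1 s)
    (hac : HasCompactSupport a) (hsc : HasCompactSupport s)
    (ha' : ∀ x, HasDerivAt a (a' x) x) (hs' : ∀ x, HasDerivAt s (s' x) x)
    (hat : tsupport a ⊆ Ioi 0) (hst : tsupport s ⊆ Ioo 0 1) :
    0 ≤ 2 * (∫ x, a' x ^ 2) * (∫ x, s x ^ 2) + 2 * (∫ x, a x ^ 2) * (∫ x, s' x ^ 2)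
      + 4 * (∫ x, a x * s x) * (∫ x, a' x * s' x)
      - lamG * (2 * (∫ x, a x ^ 2) * (∫ x, s x ^ 2) + 2 * (∫ x, a x * s x) ^ 2) := by
  set g : ℝ × ℝ → ℝ := fun p => a (p.2 + 1) * s (p.1 + 1) + s (p.2 + 1) * a (p.1 + 1) with hg
  have ea : a' = deriv a := by ext x; exact (ha' x).deriv.symm
  have es : s' = deriv s := by ext x; exact (hs' x).deriv.symm
  have ca : Continuous a := ha.continuous
  have cs : Continuous s := hs.continuous
  have ca' : Continuous a' := ea ▸ ha.continuous_deriv (by norm_num)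
  have cs' : Continuous s' := es ▸ hs.continuous_deriv (by norm_num)
  have hac' := hcs_deriv ha' hac
  have hsc' := hcs_deriv hs' hsc
  set K : Set (ℝ × ℝ) := {p | (p.2 + 1 ∈ tsupport a ∧ p.1 + 1 ∈ tsupport s) ∨
    (p.2 + 1 ∈ tsupport s ∧ p.1 + 1 ∈ tsupport a)} with hK
  have hKc : IsCompact K := by
    have e : K = ((fun p : ℝ × ℝ => (p.1 - 1, p.2 - 1)) '' (tsupport s ×ˢ tsupport a)) ∪
        ((fun p : ℝ × ℝ => (p.1 - 1, p.2 - 1)) '' (tsupport a ×ˢ tsupport s)) := by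
      ext p
      constructor
      · rintro (h | h)
        · exact Or.inl ⟨(p.1 + 1, p.2 + 1), ⟨h.2, h.1⟩, by simp⟩
        · exact Or.inr ⟨(p.1 + 1, p.2 + 1), ⟨h.2, h.1⟩, by simp⟩
      · rintro (⟨q, hq, rfl⟩ | ⟨q, hq, rfl⟩)
        · left; simpa using ⟨hq.2, hq.1⟩
        · right; simpa using ⟨hq.2, hq.1⟩
    rw [e]
    exact ((IsCompact.prod hsc hac).image (by fun_prop)).union ((IsCompact.prod hac hsc).image (by fun_prop))
  have hsup : Function.support g ⊆ K := by
    intro p hp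
    by_contra h
    apply hp
    simp only [hK, mem_ofPred_eq, not_or, not_and_or] at h
    have z1 : a (p.2 + 1) * s (p.1 + 1) = 0 := by
      rcases h.1 with h | h
      · rw [image_eq_zero_of_notMem_tsupport h, zero_mul]
      · rw [image_eq_zero_of_notMem_tsupport h, mul_zero]
    have z2 : s (p.2 + 1) * a (p.1 + 1) = 0 := by
      rcases h.2 with h | h
      · rw [image_eq_zero_of_notMem_tsupport h, zero_mul]
      · rw [image_eq_zero_of_notMem_tsupport h, mul_zero]
    simp [hg, z1, z2]
  have htest : Test2 g := by
    refine ⟨?_, HasCompactSupport.of_support_subset_isCompact hKc hsup, ?_⟩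
    · fun_prop
    · refine (closure_minimal hsup hKc.isClosed).trans ?_
      rintro p (h | h)
      · have h1 := hat h.1
        have h2 := hst h.2
        simp only [mem_Ioi, mem_Ioo] at h1 h2
        refine ⟨lt_min (by linarith [h2.1]) (by linarith), lt_of_le_of_lt (min_le_left _ _) (by linarith [h2.2])⟩
      · have h1 := hat h.2
        have h2 := hst h.1
        simp only [mem_Ioi, mem_Ioo] at h1 h2
        refine ⟨lt_min (by linarith) (by linarith [h2.1]), lt_of_le_of_lt (min_le_right _ _) (by linarith [h2.2])⟩
  have hfd : ∀ p : ℝ × ℝ, HasFDerivAt g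
      ((a (p.2 + 1) * s' (p.1 + 1) + s (p.2 + 1) * a' (p.1 + 1)) • ContinuousLinearMap.fst ℝ ℝ ℝ +
       (a' (p.2 + 1) * s (p.1 + 1) + s' (p.2 + 1) * a (p.1 + 1)) • ContinuousLinearMap.snd ℝ ℝ ℝ) p := by
    intro p
    have f1 : HasFDerivAt (fun p : ℝ × ℝ => p.1 + 1) (ContinuousLinearMap.fst ℝ ℝ ℝ) p :=
      hasFDerivAt_fst.add_const _
    have f2 : HasFDerivAt (fun p : ℝ × ℝ => p.2 + 1) (ContinuousLinearMap.snd ℝ ℝ ℝ) p :=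
      hasFDerivAt_snd.add_const _
    have a1 := (ha' (p.1 + 1)).comp_hasFDerivAt p f1
    have a2 := (ha' (p.2 + 1)).comp_hasFDerivAt p f2
    have s1 := (hs' (p.1 + 1)).comp_hasFDerivAt p f1
    have s2 := (hs' (p.2 + 1)).comp_hasFDerivAt p f2
    refine ((a2.mul s1).add (s2.mul a1)).congr_fderiv ?_
    ext <;> simp <;> ring
  have key := lamG_le htest
  have hgrad : ∀ p : ℝ × ℝ, gradSq2 g p - lamG * (g p) ^ 2 =
      (s' (p.1+1) ^ 2 * a (p.2+1) ^ 2 + a' (p.1+1) ^ 2 * s (p.2+1) ^ 2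
      + s (p.1+1) ^ 2 * a' (p.2+1) ^ 2 + a (p.1+1) ^ 2 * s' (p.2+1) ^ 2
      + 2 * ((a' (p.1+1) * s' (p.1+1)) * (a (p.2+1) * s (p.2+1)))
      + 2 * ((a (p.1+1) * s (p.1+1)) * (a' (p.2+1) * s' (p.2+1))))
      - lamG * (s (p.1+1) ^ 2 * a (p.2+1) ^ 2 + a (p.1+1) ^ 2 * s (p.2+1) ^ 2
        + 2 * ((a (p.1+1) * s (p.1+1)) * (a (p.2+1) * s (p.2+1)))) := by
    intro p
    rw [gradSq2, (hfd p).fderiv]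
    simp [hg]
    ring
  have pint : ∀ {f h : ℝ → ℝ}, Continuous f → Continuous h → HasCompactSupport f → HasCompactSupport h →
      Integrable (fun p : ℝ × ℝ => f (p.1 + 1) * h (p.2 + 1)) := by
    intro f h cf ch hf hh
    exact ((cf.integrable_of_hasCompactSupport hf).comp_add_right 1).mul_prod
      ((ch.integrable_of_hasCompactSupport hh).comp_add_right 1)
  have pval : ∀ (f h : ℝ → ℝ), ∫ p : ℝ × ℝ, f (p.1 + 1) * h (p.2 + 1) = (∫ x, f x) * ∫ x, h x := by
    intro f h
    have := integral_prod_mul (μ := (volume : Measure ℝ)) (ν := (volume : Measure ℝ))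
      (fun x => f (x + 1)) (fun x => h (x + 1))
    rw [integral_add_right_eq_self f, integral_add_right_eq_self h] at this
    exact this
  have mulc : ∀ {f h : ℝ → ℝ}, HasCompactSupport f → HasCompactSupport (fun x => f x * h x) :=
    fun hf => hf.mul_right
  have I1 := pint (cs'.pow 2) (ca.pow 2) (sq_hcs hsc') (sq_hcs hac)
  have I2 := pint (ca'.pow 2) (cs.pow 2) (sq_hcs hac') (sq_hcs hsc)
  have I3 := pint (cs.pow 2) (ca'.pow 2) (sq_hcs hsc) (sq_hcs hac')
  have I4 := pint (ca.pow 2) (cs'.pow 2) (sq_hcs hac) (sq_hcs hsc')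
  have I5 := (pint (ca'.mul cs') (ca.mul cs) (mulc hac') (mulc hac)).const_mul 2
  have I6 := (pint (ca.mul cs) (ca'.mul cs') (mulc hac) (mulc hac')).const_mul 2
  have I7 := pint (cs.pow 2) (ca.pow 2) (sq_hcs hsc) (sq_hcs hac)
  have I8 := pint (ca.pow 2) (cs.pow 2) (sq_hcs hac) (sq_hcs hsc)
  have I9 := (pint (ca.mul cs) (ca.mul cs) (mulc hac) (mulc hac)).const_mul 2
  simp_rw [hgrad] at key
  have e : ∫ p : ℝ × ℝ, ((s' (p.1+1) ^ 2 * a (p.2+1) ^ 2 + a' (p.1+1) ^ 2 * s (p.2+1) ^ 2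
      + s (p.1+1) ^ 2 * a' (p.2+1) ^ 2 + a (p.1+1) ^ 2 * s' (p.2+1) ^ 2
      + 2 * ((a' (p.1+1) * s' (p.1+1)) * (a (p.2+1) * s (p.2+1)))
      + 2 * ((a (p.1+1) * s (p.1+1)) * (a' (p.2+1) * s' (p.2+1))))
      - lamG * (s (p.1+1) ^ 2 * a (p.2+1) ^ 2 + a (p.1+1) ^ 2 * s (p.2+1) ^ 2
        + 2 * ((a (p.1+1) * s (p.1+1)) * (a (p.2+1) * s (p.2+1))))) =
      ((∫ x, s' x ^ 2) * (∫ x, a x ^ 2) + (∫ x, a' x ^ 2) * (∫ x, s x ^ 2)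
      + (∫ x, s x ^ 2) * (∫ x, a' x ^ 2) + (∫ x, a x ^ 2) * (∫ x, s' x ^ 2)
      + 2 * ((∫ x, a' x * s' x) * (∫ x, a x * s x)) + 2 * ((∫ x, a x * s x) * (∫ x, a' x * s' x)))
      - lamG * ((∫ x, s x ^ 2) * (∫ x, a x ^ 2) + (∫ x, a x ^ 2) * (∫ x, s x ^ 2)
        + 2 * ((∫ x, a x * s x) * (∫ x, a x * s x))) := by
    rw [integral_sub (by exact ((((I1.add I2).add I3).add I4).add I5).add I6)
      (by exact ((I7.add I8).add I9).const_mul _), integral_const_mul,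
      integral_add (by exact (((I1.add I2).add I3).add I4).add I5) (by exact I6),
      integral_add (by exact ((I1.add I2).add I3).add I4) (by exact I5),
      integral_add (by exact (I1.add I2).add I3) (by exact I4),
      integral_add (by exact I1.add I2) (by exact I3), integral_add (by exact I1) (by exact I2),
      integral_add (by exact I7.add I8) (by exact I9), integral_add (by exact I7) (by exact I8)]
    simp only [integral_const_mul]
    rw [pval (fun x => s' x ^ 2) (fun x => a x ^ 2), pval (fun x => a' x ^ 2) (fun x => s x ^ 2),
      pval (fun x => s x ^ 2) (fun x => a' x ^ 2), pval (fun x => a x ^ 2) (fun x => s' x ^ 2),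
      pval (fun x => a' x * s' x) (fun x => a x * s x), pval (fun x => a x * s x) (fun x => a' x * s' x),
      pval (fun x => s x ^ 2) (fun x => a x ^ 2), pval (fun x => a x ^ 2) (fun x => s x ^ 2),
      pval (fun x => a x * s x) (fun x => a x * s x)]
  rw [e] at key
  nlinarith [key]

/-! ### Profiles for the trial function in the broken guide -/

/-- Dominated convergence in the form used for the truncations: the limit lives on `A`. -/
theorem conv_on {X : Type*} [MeasurableSpace X] {μ : Measure X} {A : Set X} (hA : MeasurableSet A)
    {F : ℕ → X → ℝ} {G H : X → ℝ} {C : ℝ}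
    (hm : ∀ n, AEStronglyMeasurable (F n) (μ.restrict A)) (h0 : ∀ n, ∀ x ∉ A, F n x = 0)
    (hb : ∀ n, ∀ x ∈ A, |F n x| ≤ C * |H x|) (hH : IntegrableOn H A μ)
    (hl : ∀ x ∈ A, Tendsto (fun n => F n x) atTop (𝓝 (G x))) :
    Tendsto (fun n => ∫ x, F n x ∂μ) atTop (𝓝 (∫ x in A, G x ∂μ)) := by
  have e : ∀ n, ∫ x, F n x ∂μ = ∫ x in A, F n x ∂μ := fun n =>
    (setIntegral_eq_integral_of_forall_compl_eq_zero (h0 n)).symm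
  simp_rw [e]
  apply tendsto_integral_of_dominated_convergence (fun x => C * |H x|) hm
  · exact (Integrable.abs hH).const_mul _
  · intro n
    filter_upwards [ae_restrict_mem hA] with x hx
    exact hb n x hx
  · filter_upwards [ae_restrict_mem hA] with x hx
    exact hl x hx

/-- The profile `x e^{-x/4}` on the half-line. -/
def prA (x : ℝ) : ℝ := max x 0 * exp (-x / 4)

/-- The profile `sin (πx)` on `(0,1)`, extended by zero. -/
def prS (x : ℝ) : ℝ := sin (π * max 0 (min 1 x))

theorem prA_cont : Continuous prA := by unfold prA; fun_prop
theorem prS_cont : Continuous prS := by unfold prS; fun_prop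

theorem prA_off : ∀ x ∉ Ioi (0:ℝ), prA x = 0 := by
  intro x hx
  simp only [mem_Ioi, not_lt] at hx
  simp [prA, hx]

theorem prS_off : ∀ x ∉ Ioo (0:ℝ) 1, prS x = 0 := by
  intro x hx
  rw [mem_Ioo, not_and_or, not_lt, not_lt] at hx
  rcases hx with h | h
  · have : min 1 x ≤ 0 := (min_le_right _ _).trans h
    simp [prS, this]
  · simp [prS, h]

theorem prA_ev {x : ℝ} (hx : x ∈ Ioi (0:ℝ)) : prA =ᶠ[𝓝 x] fun x => x * exp (-x / 4) := by
  filter_upwards [isOpen_Ioi.mem_nhds hx] with y hy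
  simp only [mem_Ioi] at hy
  simp [prA, hy.le]

theorem prS_ev {x : ℝ} (hx : x ∈ Ioo (0:ℝ) 1) : prS =ᶠ[𝓝 x] fun x => sin (π * x) := by
  filter_upwards [isOpen_Ioo.mem_nhds hx] with y hy
  simp [prS, hy.2.le, hy.1.le]

theorem prA_C1 : ContDiffOn ℝ 1 prA (Ioi 0) := by
  intro x hx
  apply ContDiffAt.contDiffWithinAt
  apply ContDiffAt.congr_of_eventuallyEq _ (prA_ev hx)
  fun_prop

theorem prS_C1 : ContDiffOn ℝ 1 prS (Ioo 0 1) := by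
  intro x hx
  apply ContDiffAt.contDiffWithinAt
  apply ContDiffAt.congr_of_eventuallyEq _ (prS_ev hx)
  fun_prop

theorem prA_deriv {x : ℝ} (hx : x ∈ Ioi (0:ℝ)) : deriv prA x = (1 - x / 4) * exp (-x / 4) := by
  rw [(prA_ev hx).deriv_eq]
  have h1 : HasDerivAt (fun x : ℝ => -x / 4) (-1 / 4) x := ((hasDerivAt_id x).neg).div_const 4
  have := ((hasDerivAt_id x).mul h1.exp).deriv
  simp only [id] at this
  refine Eq.trans ?_ (this.trans ?_)
  · rfl
  · ring

theorem prS_deriv {x : ℝ} (hx : x ∈ Ioo (0:ℝ) 1) : deriv prS x = π * cos (π * x) := by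
  rw [(prS_ev hx).deriv_eq]
  have h1 : HasDerivAt (fun x : ℝ => π * x) π x := by simpa using (hasDerivAt_id x).const_mul π
  have := h1.sin.deriv
  rw [this]; ring

theorem trunc_hasDerivAt {f : ℝ → ℝ} {U : Set ℝ} (hf : Continuous f) (hU : IsOpen U)
    (hfU : ContDiffOn ℝ 1 f U) (h0 : ∀ x ∉ U, f x = 0) (n : ℕ) (x : ℝ) :
    HasDerivAt (fun x => phin n (f x)) (phid n (f x) * deriv f x) x := by
  have h1 := ((trunc_contDiff hf hU hfU h0 n).differentiable (by norm_num) x).hasDerivAt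
  refine h1.congr_deriv ?_
  rw [← fderiv_apply_one_eq_deriv, trunc_fderiv hf hU hfU h0 n x]
  simp

theorem tendsto_poly_exp (n : ℕ) : Tendsto (fun x : ℝ => x ^ n * exp (-x / 2)) atTop (𝓝 0) := by
  have h := (Real.tendsto_pow_mul_exp_neg_atTop_nhds_zero n).comp
    (tendsto_id.atTop_div_const (by norm_num : (0:ℝ) < 2))
  have h2 := h.const_mul ((2:ℝ) ^ n)
  simp only [mul_zero] at h2
  refine h2.congr fun x => ?_
  simp only [Function.comp, id]
  rw [div_pow, neg_div]
  field_simp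

/-- The integrand is the derivative of `-(α x² + β x + γ) e^{-x/2}`. -/
theorem exp_integral (α β γ : ℝ) (P : ℝ → ℝ)
    (hP : ∀ x, P x = ((α * x ^ 2 + β * x + γ) / 2 - 2 * α * x - β) * exp (-x / 2))
    (hpos : ∀ x, 0 ≤ P x) :
    IntegrableOn P (Ioi 0) ∧ ∫ x in Ioi 0, P x = γ := by
  have hd : ∀ x, HasDerivAt (fun x => -(α * x ^ 2 + β * x + γ) * exp (-x / 2)) (P x) x := by
    intro x
    have h1 : HasDerivAt (fun x : ℝ => -x / 2) (-1 / 2) x := ((hasDerivAt_id x).neg).div_const 2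
    have h2 : HasDerivAt (fun x : ℝ => -(α * x ^ 2 + β * x + γ)) (-(2 * α * x + β)) x := by
      have := ((((hasDerivAt_pow 2 x).const_mul α).add ((hasDerivAt_id x).const_mul β)).add_const γ).neg
      refine this.congr_deriv ?_
      simp; ring
    refine (h2.mul h1.exp).congr_deriv ?_
    rw [hP]; ring
  have ht : Tendsto (fun x => -(α * x ^ 2 + β * x + γ) * exp (-x / 2)) atTop (𝓝 0) := by
    have := (((tendsto_poly_exp 2).const_mul (-α)).add ((tendsto_poly_exp 1).const_mul (-β))).add
      ((tendsto_poly_exp 0).const_mul (-γ))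
    simp only [mul_zero, add_zero] at this
    refine this.congr fun x => ?_
    ring
  have hi := integrableOn_Ioi_deriv_of_nonneg' (a := 0) (fun x _ => hd x) (fun x _ => hpos x) ht
  refine ⟨hi, ?_⟩
  rw [integral_Ioi_of_hasDerivAt_of_tendsto' (fun x _ => hd x) hi ht]
  simp

theorem prA_hcs (n : ℕ) : HasCompactSupport (fun x => phin n (prA x)) := by
  have ht : Tendsto prA atTop (𝓝 0) := by
    have h := (Real.tendsto_pow_mul_exp_neg_atTop_nhds_zero 1).comp
      (tendsto_id.atTop_div_const (by norm_num : (0:ℝ) < 4))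
    have h2 := h.const_mul (4:ℝ)
    simp only [mul_zero] at h2
    refine h2.congr' ?_
    filter_upwards [eventually_ge_atTop 0] with x hx
    simp only [Function.comp, id, prA, max_eq_left hx, neg_div]
    ring
  have hpos : (0:ℝ) < 1 / (n + 1) := by positivity
  obtain ⟨M, hM⟩ := eventually_atTop.1 (ht.abs.eventually (gt_mem_nhds (by simpa using hpos : |(0:ℝ)| < 1 / (n + 1))))
  apply HasCompactSupport.of_support_subset_isCompact (isCompact_Icc (a := 0) (b := M))
  intro x hx
  by_contra h
  apply hx
  rw [mem_Icc, not_and_or, not_le, not_le] at h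
  apply phin_zero
  rcases h with h | h
  · rw [prA_off x (by simpa using h.le)]; simpa using hpos.le
  · exact (hM x h.le).le

theorem prS_hcs (n : ℕ) : HasCompactSupport (fun x => phin n (prS x)) := by
  apply HasCompactSupport.of_support_subset_isCompact (isCompact_Icc (a := 0) (b := 1))
  intro x hx
  by_contra h
  apply hx
  apply phin_zero
  rw [prS_off x (fun h' => h ⟨h'.1.le, h'.2.le⟩)]
  simp; positivity

/-! ### The threshold lies below `π²` -/

/-- Convergence of integrals of products of truncations that live on `A`. -/
theorem conv_mul {A : Set ℝ} (hA : MeasurableSet A) {X Y : ℕ → ℝ → ℝ} {f g : ℝ → ℝ} {C : ℝ} (hC : 0 ≤ C)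
    (hX : ∀ n, Measurable (X n)) (hY : ∀ n, Measurable (Y n)) (h0 : ∀ n, ∀ x ∉ A, Y n x = 0)
    (bX : ∀ n, ∀ x ∈ A, |X n x| ≤ C * |f x|) (bY : ∀ n, ∀ x ∈ A, |Y n x| ≤ C * |g x|)
    (hi : IntegrableOn (fun x => f x * g x) A)
    (lX : ∀ x ∈ A, Tendsto (fun n => X n x) atTop (𝓝 (f x)))
    (lY : ∀ x ∈ A, Tendsto (fun n => Y n x) atTop (𝓝 (g x))) :
    Tendsto (fun n => ∫ x, X n x * Y n x) atTop (𝓝 (∫ x in A, f x * g x)) := by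
  refine conv_on (C := C * C) (H := fun x => f x * g x) hA
    (fun n => ((hX n).mul (hY n)).aestronglyMeasurable) (fun n x hx => by simp [h0 n x hx]) ?_ hi
    (fun x hx => (lX x hx).mul (lY x hx))
  intro n x hx
  have h1 := bX n x hx
  have h2 := bY n x hx
  rw [abs_mul, abs_mul]
  calc |X n x| * |Y n x| ≤ (C * |f x|) * (C * |g x|) := by gcongr
    _ = _ := by ring

/-- The limit form of `lamG_prod` for the profiles `x e^{-x/4}` and `sin (πx)`. -/
theorem gap_limit :
    0 ≤ 2 * (∫ x in Ioi (0:ℝ), ((1 - x / 4) * exp (-x / 4)) * ((1 - x / 4) * exp (-x / 4)))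
        * (∫ x in Ioo (0:ℝ) 1, sin (π * x) * sin (π * x))
      + 2 * (∫ x in Ioi (0:ℝ), (x * exp (-x / 4)) * (x * exp (-x / 4)))
        * (∫ x in Ioo (0:ℝ) 1, (π * cos (π * x)) * (π * cos (π * x)))
      + 4 * (∫ x in Ioo (0:ℝ) 1, (x * exp (-x / 4)) * sin (π * x))
        * (∫ x in Ioo (0:ℝ) 1, ((1 - x / 4) * exp (-x / 4)) * (π * cos (π * x)))
      - lamG * (2 * (∫ x in Ioi (0:ℝ), (x * exp (-x / 4)) * (x * exp (-x / 4)))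
        * (∫ x in Ioo (0:ℝ) 1, sin (π * x) * sin (π * x))
        + 2 * (∫ x in Ioo (0:ℝ) 1, (x * exp (-x / 4)) * sin (π * x)) ^ 2) := by
  obtain ⟨C, hC1, hC⟩ := phi_deriv_bdd
  have hC0 : 0 ≤ C := by linarith
  have hCd : ∀ n s, |phid n s| ≤ C := fun n s => hC _
  have ioo : Ioo (0:ℝ) 1 ⊆ Ioi 0 := fun x hx => hx.1
  have hpA : ∀ x ∈ Ioi (0:ℝ), prA x = x * exp (-x / 4) := fun x hx => (prA_ev hx).self_of_nhds
  have hpS : ∀ x ∈ Ioo (0:ℝ) 1, prS x = sin (π * x) := fun x hx => (prS_ev hx).self_of_nhds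
  have hA0 : ∀ x ∈ Ioi (0:ℝ), prA x ≠ 0 := fun x hx => by
    rw [hpA x hx]; exact mul_ne_zero (ne_of_gt hx) (exp_ne_zero _)
  have hS0 : ∀ x ∈ Ioo (0:ℝ) 1, prS x ≠ 0 := fun x hx => by
    rw [hpS x hx]
    have := sin_pos_of_pos_of_lt_pi (mul_pos pi_pos hx.1) (by nlinarith [pi_pos, hx.2])
    exact this.ne'
  have mA : ∀ n, Measurable (fun x => phin n (prA x)) := fun n =>
    ((phin_contDiff n).continuous.comp prA_cont).measurable
  have mS : ∀ n, Measurable (fun x => phin n (prS x)) := fun n =>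
    ((phin_contDiff n).continuous.comp prS_cont).measurable
  have mA' : ∀ n, Measurable (fun x => phid n (prA x) * deriv prA x) := fun n =>
    ((phid_cont n).comp prA_cont).measurable.mul (measurable_deriv _)
  have mS' : ∀ n, Measurable (fun x => phid n (prS x) * deriv prS x) := fun n =>
    ((phid_cont n).comp prS_cont).measurable.mul (measurable_deriv _)
  have zA : ∀ n, ∀ x ∉ Ioi (0:ℝ), phin n (prA x) = 0 := fun n x hx => by
    rw [prA_off x hx]; apply phin_zero; simp; positivity
  have zS : ∀ n, ∀ x ∉ Ioo (0:ℝ) 1, phin n (prS x) = 0 := fun n x hx => by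
    rw [prS_off x hx]; apply phin_zero; simp; positivity
  have zA' : ∀ n, ∀ x ∉ Ioi (0:ℝ), phid n (prA x) * deriv prA x = 0 := fun n x hx => by
    rw [prA_off x hx, phid_zero, zero_mul]
  have zS' : ∀ n, ∀ x ∉ Ioo (0:ℝ) 1, phid n (prS x) * deriv prS x = 0 := fun n x hx => by
    rw [prS_off x hx, phid_zero, zero_mul]
  have bA : ∀ n, ∀ x ∈ Ioi (0:ℝ), |phin n (prA x)| ≤ C * |x * exp (-x / 4)| := fun n x hx => by
    rw [← hpA x hx]
    exact (phin_le n _).trans (le_mul_of_one_le_left (abs_nonneg _) hC1)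
  have bS : ∀ n, ∀ x ∈ Ioo (0:ℝ) 1, |phin n (prS x)| ≤ C * |sin (π * x)| := fun n x hx => by
    rw [← hpS x hx]
    exact (phin_le n _).trans (le_mul_of_one_le_left (abs_nonneg _) hC1)
  have bA' : ∀ n, ∀ x ∈ Ioi (0:ℝ), |phid n (prA x) * deriv prA x| ≤ C * |(1 - x / 4) * exp (-x / 4)| :=
    fun n x hx => by
      rw [← prA_deriv hx, abs_mul]
      exact mul_le_mul_of_nonneg_right (hCd _ _) (abs_nonneg _)
  have bS' : ∀ n, ∀ x ∈ Ioo (0:ℝ) 1, |phid n (prS x) * deriv prS x| ≤ C * |π * cos (π * x)| :=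
    fun n x hx => by
      rw [← prS_deriv hx, abs_mul]
      exact mul_le_mul_of_nonneg_right (hCd _ _) (abs_nonneg _)
  have lA : ∀ x ∈ Ioi (0:ℝ), Tendsto (fun n => phin n (prA x)) atTop (𝓝 (x * exp (-x / 4))) :=
    fun x hx => by rw [← hpA x hx]; exact phin_tendsto _
  have lS : ∀ x ∈ Ioo (0:ℝ) 1, Tendsto (fun n => phin n (prS x)) atTop (𝓝 (sin (π * x))) :=
    fun x hx => by rw [← hpS x hx]; exact phin_tendsto _
  have lA' : ∀ x ∈ Ioi (0:ℝ), Tendsto (fun n => phid n (prA x) * deriv prA x) atTop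
      (𝓝 ((1 - x / 4) * exp (-x / 4))) := fun x hx => by
    rw [← prA_deriv hx]; simpa using (phid_tendsto (hA0 x hx)).mul_const (deriv prA x)
  have lS' : ∀ x ∈ Ioo (0:ℝ) 1, Tendsto (fun n => phid n (prS x) * deriv prS x) atTop
      (𝓝 (π * cos (π * x))) := fun x hx => by
    rw [← prS_deriv hx]; simpa using (phid_tendsto (hS0 x hx)).mul_const (deriv prS x)
  have iAA : IntegrableOn (fun x => (x * exp (-x / 4)) * (x * exp (-x / 4))) (Ioi (0:ℝ)) :=
    (exp_integral 2 8 16 _ (fun x => by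
      have : exp (-x / 2) = exp (-x / 4) * exp (-x / 4) := by rw [← exp_add]; ring_nf
      rw [this]; ring) (fun x => mul_self_nonneg _)).1
  have iA'A' : IntegrableOn (fun x => ((1 - x / 4) * exp (-x / 4)) * ((1 - x / 4) * exp (-x / 4)))
      (Ioi (0:ℝ)) :=
    (exp_integral (1 / 8) (-1 / 2) 1 _ (fun x => by
      have : exp (-x / 2) = exp (-x / 4) * exp (-x / 4) := by rw [← exp_add]; ring_nf
      rw [this]; ring) (fun x => mul_self_nonneg _)).1
  have iC : ∀ f : ℝ → ℝ, Continuous f → IntegrableOn f (Ioo (0:ℝ) 1) := fun f hf =>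
    (hf.integrableOn_Icc (a := 0) (b := 1)).mono_set Ioo_subset_Icc_self
  have t1 := conv_mul measurableSet_Ioi hC0 mA' mA' zA' bA' bA' iA'A' lA' lA'
  have t2 := conv_mul measurableSet_Ioo hC0 mS mS zS bS bS (iC _ (by fun_prop)) lS lS
  have t3 := conv_mul measurableSet_Ioi hC0 mA mA zA bA bA iAA lA lA
  have t4 := conv_mul measurableSet_Ioo hC0 mS' mS' zS' bS' bS' (iC _ (by fun_prop)) lS' lS'
  have t5 := conv_mul measurableSet_Ioo hC0 mA mS zS (fun n x hx => bA n x (ioo hx)) bS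
    (iC _ (by fun_prop)) (fun x hx => lA x (ioo hx)) lS
  have t6 := conv_mul measurableSet_Ioo hC0 mA' mS' zS' (fun n x hx => bA' n x (ioo hx)) bS'
    (iC _ (by fun_prop)) (fun x hx => lA' x (ioo hx)) lS'
  have key := (((((t1.const_mul 2).mul t2).add ((t3.const_mul 2).mul t4)).add
    ((t5.const_mul 4).mul t6)).sub ((((t3.const_mul 2).mul t2).add ((t5.pow 2).const_mul 2)).const_mul lamG))
  refine ge_of_tendsto' key fun n => ?_
  have := lamG_prod (trunc_contDiff prA_cont isOpen_Ioi prA_C1 prA_off n)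
    (trunc_contDiff prS_cont isOpen_Ioo prS_C1 prS_off n) (prA_hcs n) (prS_hcs n)
    (trunc_hasDerivAt prA_cont isOpen_Ioi prA_C1 prA_off n)
    (trunc_hasDerivAt prS_cont isOpen_Ioo prS_C1 prS_off n)
    ((trunc_tsupport prA_cont prA_off n).1.trans (trunc_tsupport prA_cont prA_off n).2)
    ((trunc_tsupport prS_cont prS_off n).1.trans (trunc_tsupport prS_cont prS_off n).2)
  simpa only [pow_two] using this

/-- With the profiles of `gap_limit`, put
`y = π ∫₀¹ x e^{-x/4} sin (πx) dx`; evaluating the integrals, `π² ≤ λ₁(Γ)` would give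
`0 ≤ 1 + 2y² - 4 e^{-1/4} y`, which fails because `3/4 < e^{-1/4} ≤ y ≤ 1`. -/
theorem gap : lamG < π ^ 2 := by
  have key := gap_limit
  have I1 : ∫ x in Ioi (0:ℝ), ((1 - x / 4) * exp (-x / 4)) * ((1 - x / 4) * exp (-x / 4)) = 1 :=
    (exp_integral (1 / 8) (-1 / 2) 1 _ (fun x => by
      have : exp (-x / 2) = exp (-x / 4) * exp (-x / 4) := by rw [← exp_add]; ring_nf
      rw [this]; ring) (fun x => mul_self_nonneg _)).2
  have I3 : ∫ x in Ioi (0:ℝ), (x * exp (-x / 4)) * (x * exp (-x / 4)) = 16 :=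
    (exp_integral 2 8 16 _ (fun x => by
      have : exp (-x / 2) = exp (-x / 4) * exp (-x / 4) := by rw [← exp_add]; ring_nf
      rw [this]; ring) (fun x => mul_self_nonneg _)).2
  have cv : ∀ f : ℝ → ℝ, ∫ x in Ioo (0:ℝ) 1, f x = ∫ x in (0:ℝ)..1, f x := fun f => by
    rw [← integral_Ioc_eq_integral_Ioo, intervalIntegral.integral_of_le zero_le_one]
  have ftc : ∀ F f : ℝ → ℝ, (∀ x, HasDerivAt F (f x) x) → Continuous f →
      ∫ x in (0:ℝ)..1, f x = F 1 - F 0 := fun F f h hc =>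
    intervalIntegral.integral_eq_sub_of_hasDerivAt (fun x _ => h x) (hc.intervalIntegrable _ _)
  have hpi := pi_pos
  have dpi : ∀ x : ℝ, HasDerivAt (fun x : ℝ => π * x) π x := fun x => by
    simpa using (hasDerivAt_id x).const_mul π
  have dexp : ∀ x : ℝ, HasDerivAt (fun x : ℝ => exp (-x / 4)) (exp (-x / 4) * (-1 / 4)) x := fun x =>
    (((hasDerivAt_id x).neg).div_const 4).exp
  have I2 : ∫ x in Ioo (0:ℝ) 1, sin (π * x) * sin (π * x) = 1 / 2 := by
    rw [cv, ftc (fun x => x / 2 - sin (π * x) * cos (π * x) / (2 * π)) _ _ (by fun_prop)]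
    · simp
    · intro x
      have := ((hasDerivAt_id x).div_const 2).sub ((((dpi x).sin).mul ((dpi x).cos)).div_const (2 * π))
      refine this.congr_deriv ?_
      have h := sin_sq_add_cos_sq (π * x)
      field_simp
      linear_combination (-1) * h
  have I4 : ∫ x in Ioo (0:ℝ) 1, (π * cos (π * x)) * (π * cos (π * x)) = π ^ 2 / 2 := by
    rw [cv, ftc (fun x => π ^ 2 * (x / 2) + π * sin (π * x) * cos (π * x) / 2) _ _ (by fun_prop)]
    · simp; ring
    · intro x
      have := (((hasDerivAt_id x).div_const 2).const_mul (π ^ 2)).add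
        (((((dpi x).sin).const_mul π).mul ((dpi x).cos)).div_const 2)
      refine this.congr_deriv ?_
      have h := sin_sq_add_cos_sq (π * x)
      linear_combination (-π ^ 2 / 2) * h
  have I0 : ∫ x in Ioo (0:ℝ) 1, x * sin (π * x) = 1 / π := by
    rw [cv, ftc (fun x => sin (π * x) / π ^ 2 - x * cos (π * x) / π) _ _ (by fun_prop)]
    · simp; ring
    · intro x
      have := (((dpi x).sin).div_const (π ^ 2)).sub
        ((((hasDerivAt_id x)).mul ((dpi x).cos)).div_const π)
      refine this.congr_deriv ?_
      simp only [id]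
      field_simp
      ring
  have iC : ∀ f : ℝ → ℝ, Continuous f → IntegrableOn f (Ioo (0:ℝ) 1) := fun f hf =>
    (hf.integrableOn_Icc (a := 0) (b := 1)).mono_set Ioo_subset_Icc_self
  set m := ∫ x in Ioo (0:ℝ) 1, (x * exp (-x / 4)) * sin (π * x) with hm
  have I6 : ∫ x in Ioo (0:ℝ) 1, ((1 - x / 4) * exp (-x / 4)) * (π * cos (π * x))
      = -π * exp (-1 / 4) + π ^ 2 * m := by
    have h1 : (∫ x in Ioo (0:ℝ) 1, ((1 - x / 4) * exp (-x / 4)) * (π * cos (π * x))) - π ^ 2 * m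
        = -π * exp (-1 / 4) := by
      rw [hm, ← integral_const_mul, ← integral_sub (iC _ (by fun_prop)) (iC _ (by fun_prop)), cv,
        ftc (fun x => x * exp (-x / 4) * (π * cos (π * x))) _ _ (by fun_prop)]
      · simp [mul_comm]
      · intro x
        have := ((hasDerivAt_id x).mul (dexp x)).mul (((dpi x).cos).const_mul π)
        refine this.congr_deriv ?_
        simp only [id, Pi.mul_apply]
        ring
    linarith
  have snn : ∀ x ∈ Ioo (0:ℝ) 1, 0 ≤ x * sin (π * x) := fun x hx =>
    mul_nonneg hx.1.le (sin_nonneg_of_nonneg_of_le_pi (by nlinarith [hx.1]) (by nlinarith [hx.2]))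
  have m1 : m ≤ 1 / π := by
    rw [← I0, hm]
    apply setIntegral_mono_on (iC _ (by fun_prop)) (iC _ (by fun_prop)) measurableSet_Ioo
    intro x hx
    have h1 : exp (-x / 4) ≤ 1 := exp_le_one_iff.2 (by linarith [hx.1])
    nlinarith [snn x hx]
  have m2 : exp (-1 / 4) * (1 / π) ≤ m := by
    rw [← I0, hm, ← integral_const_mul]
    apply setIntegral_mono_on (iC _ (by fun_prop)) (iC _ (by fun_prop)) measurableSet_Ioo
    intro x hx
    have h1 : exp (-1 / 4) ≤ exp (-x / 4) := exp_le_exp.2 (by linarith [hx.2])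
    nlinarith [snn x hx]
  rw [I1, I2, I3, I4, I6] at key
  by_contra hcon
  push Not at hcon
  have he : 3 / 4 < exp (-1 / 4) := by
    have := add_one_lt_exp (x := -1 / 4) (by norm_num)
    linarith
  have y1 : π * m ≤ 1 := by
    have := mul_le_mul_of_nonneg_left m1 hpi.le
    rwa [mul_one_div_cancel hpi.ne'] at this
  have y2 : exp (-1 / 4) ≤ π * m := by
    have := mul_le_mul_of_nonneg_left m2 hpi.le
    field_simp at this
    linarith
  have h3 : π ^ 2 * (16 + 2 * m ^ 2) ≤ lamG * (16 + 2 * m ^ 2) :=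
    mul_le_mul_of_nonneg_right hcon (by positivity)
  set y := π * m with hy
  have h4 : 0 ≤ 1 + 2 * y ^ 2 - 4 * exp (-1 / 4) * y := by
    rw [hy]; nlinarith
  nlinarith

/-! ### Cutoffs adapted to the spectral gap -/

/-- The length `8/ω` beyond which the cutoff error is absorbed by the spectral gap. -/
def t0 : ℝ := 8 / omega
/-- The constant in the cutoff error `K0 / L ^ 4`. -/
def K0 : ℝ := 64 * t0 ^ 2

theorem omega_pos : 0 < omega := Real.sqrt_pos.2 (by linarith [gap])
theorem omega_sq : omega ^ 2 = π ^ 2 - lamG := Real.sq_sqrt (by linarith [gap])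
theorem t0_pos : 0 < t0 := div_pos (by norm_num) omega_pos
theorem K0_nonneg : 0 ≤ K0 := by unfold K0; positivity
theorem t0_sq : t0 ^ 2 * omega ^ 2 = 64 := by
  have := omega_pos
  unfold t0; field_simp; norm_num

/-- The square of the positive part is `C¹`. -/
theorem m2_hasDerivAt (y : ℝ) : HasDerivAt (fun y : ℝ => (max 0 y) ^ 2) (2 * max 0 y) y := by
  rcases lt_trichotomy y 0 with h | h | h
  · have : (fun y : ℝ => (max 0 y) ^ 2) =ᶠ[𝓝 y] fun _ => 0 := by
      filter_upwards [isOpen_Iio.mem_nhds (show y ∈ Iio 0 from h)] with z hz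
      simp only [mem_Iio] at hz
      simp [hz.le]
    rw [max_eq_left h.le, mul_zero]
    exact (hasDerivAt_const y (0:ℝ)).congr_of_eventuallyEq this
  · subst h
    rw [hasDerivAt_iff_isLittleO_nhds_zero]
    have : (fun h : ℝ => (max 0 (0 + h)) ^ 2 - (max 0 (0:ℝ)) ^ 2 - h • (2 * max 0 (0:ℝ))) =O[𝓝 0]
        fun h : ℝ => h ^ 2 := by
      apply Asymptotics.IsBigO.of_bound 1
      filter_upwards with h
      simp only [zero_add, max_self, mul_zero, smul_zero, sub_zero, norm_pow, norm_eq_abs, one_mul]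
      norm_num
      rcases le_total 0 h with h' | h'
      · simp [h']
      · simp [h']; positivity
    exact this.trans_isLittleO (by simpa using Asymptotics.isLittleO_pow_id (𝕜 := ℝ) (n := 2) (by norm_num))
  · have : (fun y : ℝ => (max 0 y) ^ 2) =ᶠ[𝓝 y] fun y => y ^ 2 := by
      filter_upwards [isOpen_Ioi.mem_nhds (show y ∈ Ioi 0 from h)] with z hz
      simp only [mem_Ioi] at hz
      simp [hz.le]
    rw [max_eq_right h.le]
    simpa using (hasDerivAt_pow 2 y).congr_of_eventuallyEq this

/-- A cutoff, equal to `1` on the negative axis and to `0` beyond `L`, whose derivative is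
controlled by the gap, up to an error of size `K0 / L ^ 4` on `t < t0`. -/
theorem cutoff {L : ℝ} (hL : 0 < L) : ∃ χ χ' : ℝ → ℝ, Continuous χ' ∧ (∀ t, HasDerivAt χ (χ' t) t) ∧
    (∀ t ≤ 0, χ t = 1 ∧ χ' t = 0) ∧ (∀ t, L ≤ t → χ t = 0 ∧ χ' t = 0) ∧ (∀ t, 0 ≤ χ t ∧ χ t ≤ 1) ∧
    ∀ t, χ' t ^ 2 ≤ (1 - χ t ^ 2) *
      (omega ^ 2 * (1 - χ t ^ 2) + if t < t0 then K0 / L ^ 4 else 0) := by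
  set s : ℝ → ℝ := fun t => ((max 0 t) ^ 2) ^ 2 / L ^ 4 with hs
  set s' : ℝ → ℝ := fun t => 2 * (max 0 t) ^ 2 * (2 * max 0 t) / L ^ 4 with hs'
  have hL4 : 0 < L ^ 4 := by positivity
  have ds : ∀ t, HasDerivAt s (s' t) t := by
    intro t
    have := ((m2_hasDerivAt t).pow 2).div_const (L ^ 4)
    refine this.congr_deriv ?_
    simp [hs']
  have s0 : ∀ t, 0 ≤ s t := fun t => by simp only [hs]; positivity
  have sneg : ∀ t ≤ 0, s t = 0 := fun t ht => by simp [hs, ht]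
  have sbig : ∀ t, L ≤ t → 1 ≤ s t := fun t ht => by
    simp only [hs, max_eq_right (hL.le.trans ht)]
    rw [le_div_iff₀ hL4, one_mul, ← pow_mul]
    exact pow_le_pow_left₀ hL.le ht 4
  refine ⟨fun t => (max 0 (1 - s t)) ^ 2, fun t => 2 * max 0 (1 - s t) * (- s' t), ?_, ?_, ?_, ?_, ?_, ?_⟩
  · simp only [hs, hs']; fun_prop
  · intro t
    exact (m2_hasDerivAt (1 - s t)).comp t ((ds t).const_sub 1)
  · intro t ht
    simp [sneg t ht, hs', ht]
  · intro t ht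
    have := sbig t ht
    simp [this]
  · intro t
    refine ⟨by positivity, ?_⟩
    have h1 : max 0 (1 - s t) ≤ 1 := max_le zero_le_one (by linarith [s0 t])
    exact pow_le_one₀ (le_max_left _ _) h1
  · intro t
    rcases le_total t 0 with ht | ht
    · simp [sneg t ht, hs', ht]
    rcases le_total 1 (s t) with h1 | h1
    · beta_reduce
      rw [max_eq_left (by linarith : 1 - s t ≤ 0)]
      have : 0 ≤ if t < t0 then K0 / L ^ 4 else 0 := by
        split_ifs
        · exact div_nonneg K0_nonneg hL4.le
        · exact le_rfl
      simp only [ne_eq, OfNat.ofNat_ne_zero, not_false_eq_true, zero_pow, mul_zero, zero_mul, sub_zero, one_mul]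
      positivity
    beta_reduce
    rw [max_eq_right (by linarith : (0:ℝ) ≤ 1 - s t)]
    have es : s t * L ^ 4 = t ^ 4 := by
      simp only [hs, max_eq_right ht]; field_simp
    have es' : s' t * L ^ 4 = 4 * t ^ 3 := by
      simp only [hs', max_eq_right ht]; field_simp; ring
    have eq2 : s' t ^ 2 * t ^ 2 = 16 * s t ^ 2 := by
      have : (s' t ^ 2 * t ^ 2) * (L ^ 4) ^ 2 = (16 * s t ^ 2) * (L ^ 4) ^ 2 := by
        linear_combination t ^ 2 * (s' t * L ^ 4 + 4 * t ^ 3) * es' - 16 * (s t * L ^ 4 + t ^ 4) * es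
      exact mul_right_cancel₀ (by positivity) this
    have eq3 : s' t ^ 2 * L ^ 4 = 16 * t ^ 2 * s t := by
      have : (s' t ^ 2 * L ^ 4) * L ^ 4 = (16 * t ^ 2 * s t) * L ^ 4 := by
        linear_combination (s' t * L ^ 4 + 4 * t ^ 3) * es' - 16 * t ^ 2 * es
      exact mul_right_cancel₀ (by positivity) this
    have hs0 := s0 t
    have hD : s t ≤ 1 - ((1 - s t) ^ 2) ^ 2 := by
      have h5 : (1 - s t) ^ 3 ≤ 1 := pow_le_one₀ (by linarith) (by linarith)
      nlinarith
    have h4 : (2 * (1 - s t) * -s' t) ^ 2 ≤ 4 * s' t ^ 2 := by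
      have : (1 - s t) ^ 2 ≤ 1 := pow_le_one₀ (by linarith) (by linarith)
      nlinarith [sq_nonneg (s' t)]
    refine h4.trans ?_
    set D := 1 - ((1 - s t) ^ 2) ^ 2
    have hD0 : 0 ≤ D := hs0.trans hD
    split_ifs with hc
    · have h6 : 4 * s' t ^ 2 ≤ K0 / L ^ 4 * s t := by
        rw [div_mul_eq_mul_div, le_div_iff₀ hL4]
        have : t ^ 2 ≤ t0 ^ 2 := pow_le_pow_left₀ ht hc.le 2
        unfold K0
        nlinarith
      have h7 : K0 / L ^ 4 * s t ≤ K0 / L ^ 4 * D :=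
        mul_le_mul_of_nonneg_left hD (div_nonneg K0_nonneg hL4.le)
      nlinarith [mul_nonneg hD0 (mul_nonneg (sq_nonneg omega) hD0)]
    · push Not at hc
      have ht2 : t0 ^ 2 ≤ t ^ 2 := pow_le_pow_left₀ t0_pos.le hc 2
      have h6 : 4 * s' t ^ 2 ≤ omega ^ 2 * s t ^ 2 := by
        have h8 : 4 * s' t ^ 2 * t0 ^ 2 ≤ omega ^ 2 * s t ^ 2 * t0 ^ 2 := by
          have := t0_sq
          nlinarith [sq_nonneg (s' t)]
        exact le_of_mul_le_mul_right h8 (by have := t0_pos; positivity)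
      have h7 : omega ^ 2 * s t ^ 2 ≤ omega ^ 2 * D ^ 2 :=
        mul_le_mul_of_nonneg_left (pow_le_pow_left₀ hs0 hD 2) (sq_nonneg _)
      nlinarith

/-- Pointwise comparison of the form of `χ g` with the form of `g` in a branch of the guide, with `y`
the longitudinal and `x` the transverse variable. The last term integrates to something nonpositive
by the Dirichlet inequality across the strip, and `ε` is the cutoff error. The difference, multiplied
by `D = 1 - χ²`, is the square of `D gy - χ χ' g` plus a nonnegative multiple of `g²`. -/
theorem slice_alg {χ χ' gx gy g ε : ℝ} (hχ : 0 ≤ χ) (hχ1 : χ ≤ 1)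
    (h : χ' ^ 2 ≤ (1 - χ ^ 2) * (omega ^ 2 * (1 - χ ^ 2) + ε)) (hε : 0 ≤ ε) :
    (χ * gy + χ' * g) ^ 2 + (χ * gx) ^ 2 - lamG * (χ ^ 2 * g ^ 2) ≤
      gx ^ 2 + gy ^ 2 - lamG * g ^ 2 + ε * g ^ 2 - (1 - χ ^ 2) * (gx ^ 2 - π ^ 2 * g ^ 2) := by
  rw [omega_sq] at h
  have hD : 0 ≤ 1 - χ ^ 2 := by nlinarith
  have hl : lamG = π ^ 2 - omega ^ 2 := by rw [omega_sq]; ring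
  rw [← omega_sq] at h
  rw [hl]
  set D := 1 - χ ^ 2 with hDdef
  have hχ2 : χ ^ 2 = 1 - D := by rw [hDdef]; ring
  rcases hD.eq_or_lt with h0 | hpos
  · have hχ'0 : χ' = 0 := by
      rw [← h0] at h
      nlinarith [sq_nonneg χ']
    have hχ1 : χ = 1 := by nlinarith
    rw [hχ'0, ← h0, hχ1]
    nlinarith [mul_nonneg hε (sq_nonneg g)]
  · -- complete the square in `gy`: multiply by `D > 0`
    have key : 0 ≤ D * ((gx ^ 2 + gy ^ 2 - (π ^ 2 - omega ^ 2) * g ^ 2 + ε * g ^ 2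
        - D * (gx ^ 2 - π ^ 2 * g ^ 2)) - ((χ * gy + χ' * g) ^ 2 + (χ * gx) ^ 2
        - (π ^ 2 - omega ^ 2) * (χ ^ 2 * g ^ 2))) := by
      have e : D * ((gx ^ 2 + gy ^ 2 - (π ^ 2 - omega ^ 2) * g ^ 2 + ε * g ^ 2
        - D * (gx ^ 2 - π ^ 2 * g ^ 2)) - ((χ * gy + χ' * g) ^ 2 + (χ * gx) ^ 2
        - (π ^ 2 - omega ^ 2) * (χ ^ 2 * g ^ 2)))
        = (D * gy - χ * χ' * g) ^ 2 + (D * (omega ^ 2 * D + ε) - χ' ^ 2) * g ^ 2 := by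
        linear_combination (-D * gy ^ 2 - D * gx ^ 2 + D * (π ^ 2 - omega ^ 2) * g ^ 2 - χ' ^ 2 * g ^ 2) * hχ2
      rw [e]
      have : 0 ≤ (D * (omega ^ 2 * D + ε) - χ' ^ 2) * g ^ 2 :=
        mul_nonneg (by linarith) (sq_nonneg g)
      nlinarith [sq_nonneg (D * gy - χ * χ' * g)]
    have := nonneg_of_mul_nonneg_right key hpos
    linarith

/-! ### The form on truncated cross-sections -/

theorem fderiv_eq_zero_of_notMem {E : Type*} [NormedAddCommGroup E] [NormedSpace ℝ E] {g : E → ℝ} {p : E}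
    (h : p ∉ tsupport g) : fderiv ℝ g p = 0 := by
  have := notMem_tsupport_iff_eventuallyEq.1 h
  rw [this.fderiv_eq]; simp

theorem fderiv_apply_cont {E : Type*} [NormedAddCommGroup E] [NormedSpace ℝ E] {g : E → ℝ}
    (h : ContDiff ℝ 1 g) (e : E) : Continuous (fun x => fderiv ℝ g x e) := by
  have := h.continuous_fderiv (by norm_num)
  fun_prop

theorem fderiv_apply_hcs {E : Type*} [NormedAddCommGroup E] [NormedSpace ℝ E] {g : E → ℝ}
    (h : HasCompactSupport g) (e : E) : HasCompactSupport (fun x => fderiv ℝ g x e) :=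
  (h.fderiv (𝕜 := ℝ)).comp_left (g := fun L : E →L[ℝ] ℝ => L e) (by simp)

/-- Bounded measurable weights preserve integrability. -/
theorem integrable_weight {X : Type*} [MeasurableSpace X] {μ : Measure X} {c F : X → ℝ}
    (hc : Measurable c) (hb : ∀ x, |c x| ≤ 1) (hF : Integrable F μ) :
    Integrable (fun x => c x * F x) μ := by
  refine hF.mono (hc.aestronglyMeasurable.mul hF.aestronglyMeasurable) ?_
  filter_upwards with x
  rw [Real.norm_eq_abs, Real.norm_eq_abs, abs_mul]
  exact mul_le_of_le_one_left (abs_nonneg _) (hb x)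

/-- In the branch `p₂ ≥ 0` of the guide the section in `p₁` is `(-1,0)`, so `wirtinger` applies to
each line, with an arbitrary weight `0 ≤ c ≤ 1` depending on `p₂`. -/
theorem strip_fst {g : ℝ × ℝ → ℝ} (hg : Test2 g) {c : ℝ → ℝ} (hc : Measurable c)
    (hc0 : ∀ t, 0 ≤ c t) (hc1 : ∀ t, c t ≤ 1) (hcn : ∀ t < 0, c t = 0) :
    Integrable (fun p : ℝ × ℝ => c p.2 * ((fderiv ℝ g p (1, 0)) ^ 2 - π ^ 2 * (g p) ^ 2)) ∧
    0 ≤ ∫ p : ℝ × ℝ, c p.2 * ((fderiv ℝ g p (1, 0)) ^ 2 - π ^ 2 * (g p) ^ 2) := by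
  obtain ⟨h1, h2, h3⟩ := hg
  have i1 : Integrable (fun p : ℝ × ℝ => (fderiv ℝ g p (1, 0)) ^ 2 - π ^ 2 * (g p) ^ 2) := by
    apply Continuous.integrable_of_hasCompactSupport
    · have := fderiv_apply_cont h1 (1, 0)
      have := h1.continuous
      fun_prop
    · exact (sq_hcs (fderiv_apply_hcs h2 _)).sub ((sq_hcs h2).mul_left (f := fun _ => π ^ 2))
  have i2 : Integrable (fun p : ℝ × ℝ => c p.2 * ((fderiv ℝ g p (1, 0)) ^ 2 - π ^ 2 * (g p) ^ 2)) :=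
    integrable_weight (c := fun p : ℝ × ℝ => c p.2) (hc.comp measurable_snd)
      (fun p => by rw [abs_of_nonneg (hc0 _)]; exact hc1 _) i1
  refine ⟨i2, ?_⟩
  rw [Measure.volume_eq_prod] at i2 ⊢
  rw [integral_prod_symm _ i2]
  refine integral_nonneg fun y => ?_
  simp only [Pi.zero_apply]
  rcases lt_or_ge y 0 with hy | hy
  · simp [hcn y hy]
  rw [integral_const_mul]
  refine mul_nonneg (hc0 y) ?_
  have hd : ∀ x, HasDerivAt (fun x => g (x, y)) (fderiv ℝ g (x, y) (1, 0)) x := by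
    intro x
    have h5 := ((h1.differentiable (by norm_num)) (x, y)).hasFDerivAt
    have h6 : HasDerivAt (fun x : ℝ => (x, y)) ((1:ℝ), (0:ℝ)) x := (hasDerivAt_id x).prodMk (hasDerivAt_const x y)
    exact h5.comp_hasDerivAt x h6
  have hcont : Continuous (fun x : ℝ => (x, y)) := by fun_prop
  have hts : tsupport (fun x => g (x, y)) ⊆ (fun x => (x, y)) ⁻¹' tsupport g :=
    tsupport_comp_subset_preimage g hcont
  have hsub : tsupport (fun x => g (x, y)) ⊆ Ioo (-1) 0 := by
    intro x hx
    have h7 := h3 (hts hx)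
    simp only [Gam, mem_ofPred_eq] at h7
    rcases min_lt_iff.1 h7.2 with h | h
    · exact ⟨(lt_min_iff.1 h7.1).1, h⟩
    · exact absurd h (not_lt.2 hy)
  refine wirtinger hd ?_ ?_ hsub
  · exact (fderiv_apply_cont h1 (1, 0)).comp hcont
  · exact HasCompactSupport.of_support_subset_isCompact (isCompact_Icc (a := -1) (b := 0))
      ((subset_tsupport _).trans (hsub.trans Ioo_subset_Icc_self))

theorem test2_swap {g : ℝ × ℝ → ℝ} (hg : Test2 g) : Test2 (fun p => g p.swap) := by
  obtain ⟨h1, h2, h3⟩ := hg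
  have hc : Continuous (Prod.swap : ℝ × ℝ → ℝ × ℝ) := continuous_swap
  refine ⟨h1.comp (contDiff_snd.prodMk contDiff_fst), ?_, ?_⟩
  · exact h2.comp_homeomorph (Homeomorph.prodComm ℝ ℝ)
  · intro p hp
    have := h3 (tsupport_comp_subset_preimage g hc hp)
    simp only [Gam, mem_ofPred_eq, Prod.fst_swap, Prod.snd_swap] at this ⊢
    rwa [min_comm]

theorem fderiv_swap {g : ℝ × ℝ → ℝ} (h1 : Differentiable ℝ g) (p : ℝ × ℝ) (a b : ℝ) :
    fderiv ℝ (fun p => g p.swap) p (a, b) = fderiv ℝ g p.swap (b, a) := by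
  have h5 := (h1 p.swap).hasFDerivAt
  have h6 : HasFDerivAt (fun p : ℝ × ℝ => p.swap)
      ((ContinuousLinearMap.snd ℝ ℝ ℝ).prod (ContinuousLinearMap.fst ℝ ℝ ℝ)) p :=
    hasFDerivAt_snd.prodMk hasFDerivAt_fst
  have h7 : HasFDerivAt (fun p : ℝ × ℝ => g p.swap) _ p := h5.comp p h6
  rw [h7.fderiv]
  simp

/-- The mirror image of `strip_fst`. -/
theorem strip_snd {g : ℝ × ℝ → ℝ} (hg : Test2 g) {c : ℝ → ℝ} (hc : Measurable c)
    (hc0 : ∀ t, 0 ≤ c t) (hc1 : ∀ t, c t ≤ 1) (hcn : ∀ t < 0, c t = 0) :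
    Integrable (fun p : ℝ × ℝ => c p.1 * ((fderiv ℝ g p (0, 1)) ^ 2 - π ^ 2 * (g p) ^ 2)) ∧
    0 ≤ ∫ p : ℝ × ℝ, c p.1 * ((fderiv ℝ g p (0, 1)) ^ 2 - π ^ 2 * (g p) ^ 2) := by
  have h := strip_fst (test2_swap hg) hc hc0 hc1 hcn
  simp only [fderiv_swap (hg.1.differentiable (by norm_num))] at h
  have mp : MeasurePreserving (Prod.swap : ℝ × ℝ → ℝ × ℝ) volume volume := Measure.measurePreserving_swap
  have me : MeasurableEmbedding (Prod.swap : ℝ × ℝ → ℝ × ℝ) := MeasurableEquiv.prodComm.measurableEmbedding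
  set F : ℝ × ℝ → ℝ := fun p => c p.1 * ((fderiv ℝ g p (0, 1)) ^ 2 - π ^ 2 * (g p) ^ 2) with hF
  refine ⟨(mp.integrable_comp_emb me (g := F)).1 h.1, ?_⟩
  rw [← mp.integral_comp me]
  exact h.2

/-- The two-dimensional form on the truncated guide `p₁, p₂ < L` (with free boundary at the
truncation) is nonnegative up to an error of size `K0 / L ^ 4` localized near the corner. -/
theorem slice {L : ℝ} (hL : 0 < L) {g : ℝ × ℝ → ℝ} (hg : Test2 g) :
    0 ≤ (∫ p in {p : ℝ × ℝ | p.1 < L ∧ p.2 < L}, (gradSq2 g p - lamG * (g p) ^ 2))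
      + K0 / L ^ 4 * ∫ p in {p : ℝ × ℝ | p.1 < t0 ∧ p.2 < t0}, (g p) ^ 2 := by
  obtain ⟨χ, χ', hχ'c, hχd, hneg, hbig, h01, hest⟩ := cutoff hL
  have hg' := hg
  obtain ⟨h1, h2, h3⟩ := hg'
  have hχ : ContDiff ℝ 1 χ := contDiff_one_iff_deriv.2
    ⟨fun t => (hχd t).differentiableAt, by rw [show deriv χ = χ' from funext fun t => (hχd t).deriv]; exact hχ'c⟩
  set G : ℝ × ℝ → ℝ := fun p => g p * (χ p.1 * χ p.2) with hG
  have hGts : tsupport G ⊆ tsupport g := closure_mono (by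
    intro p hp hgp
    apply hp
    simp [hG, hgp])
  have hGt : Test2 G := by
    refine ⟨h1.mul ((hχ.comp contDiff_fst).mul (hχ.comp contDiff_snd)), h2.mul_right, hGts.trans h3⟩
  have hGd : ∀ p (v : ℝ × ℝ), fderiv ℝ G p v =
      g p * (χ p.1 * (χ' p.2 * v.2) + χ p.2 * (χ' p.1 * v.1)) + χ p.1 * χ p.2 * fderiv ℝ g p v := by
    intro p v
    have a1 : HasFDerivAt (fun p : ℝ × ℝ => χ p.1) (χ' p.1 • ContinuousLinearMap.fst ℝ ℝ ℝ) p :=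
      (hχd p.1).comp_hasFDerivAt p hasFDerivAt_fst
    have a2 : HasFDerivAt (fun p : ℝ × ℝ => χ p.2) (χ' p.2 • ContinuousLinearMap.snd ℝ ℝ ℝ) p :=
      (hχd p.2).comp_hasFDerivAt p hasFDerivAt_snd
    have a3 : HasFDerivAt G _ p := ((h1.differentiable (by norm_num)) p).hasFDerivAt.mul (a1.mul a2)
    rw [a3.fderiv]
    simp [mul_add]
  set S : Set (ℝ × ℝ) := {p : ℝ × ℝ | p.1 < L ∧ p.2 < L} with hS
  set S0 : Set (ℝ × ℝ) := {p : ℝ × ℝ | p.1 < t0 ∧ p.2 < t0} with hS0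
  have mS : MeasurableSet S :=
    (measurableSet_lt measurable_fst measurable_const).inter (measurableSet_lt measurable_snd measurable_const)
  have mS0 : MeasurableSet S0 :=
    (measurableSet_lt measurable_fst measurable_const).inter (measurableSet_lt measurable_snd measurable_const)
  set c : ℝ → ℝ := (Iio L).indicator (fun t => 1 - χ t ^ 2) with hc
  have hcm : Measurable c := by
    have := hχ.continuous.measurable
    exact Measurable.indicator (by fun_prop) measurableSet_Iio
  have hD0 : ∀ t, 0 ≤ 1 - χ t ^ 2 := fun t => by nlinarith [h01 t]
  have hc0 : ∀ t, 0 ≤ c t := fun t => indicator_nonneg (fun t _ => hD0 t) t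
  have hc1 : ∀ t, c t ≤ 1 := fun t => by
    rw [hc, indicator_apply]; split_ifs
    · nlinarith [sq_nonneg (χ t)]
    · exact zero_le_one
  have hcn0 : ∀ t ≤ 0, c t = 0 := fun t ht => by
    rw [hc, indicator_apply, (hneg t ht).1]; simp
  have hcn : ∀ t < 0, c t = 0 := fun t ht => hcn0 t ht.le
  obtain ⟨if1, pf1⟩ := strip_fst hg hcm hc0 hc1 hcn
  obtain ⟨if2, pf2⟩ := strip_snd hg hcm hc0 hc1 hcn
  have i1 : Integrable (gradSq2 g) := (gradSq2_cont h1).integrable_of_hasCompactSupport (gradSq2_hcs h2)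
  have i2 : Integrable (fun p => (g p) ^ 2) :=
    Continuous.integrable_of_hasCompactSupport (by have := h1.continuous; fun_prop) (sq_hcs h2)
  have iq : Integrable (fun p => gradSq2 g p - lamG * (g p) ^ 2) := i1.sub (i2.const_mul _)
  have iG : Integrable (fun p => gradSq2 G p - lamG * (G p) ^ 2) :=
    ((gradSq2_cont hGt.1).integrable_of_hasCompactSupport (gradSq2_hcs hGt.2.1)).sub
      ((Continuous.integrable_of_hasCompactSupport (f := fun p => (G p) ^ 2)
        (by have := hGt.1.continuous; fun_prop) (sq_hcs hGt.2.1)).const_mul _)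
  have hpos := lamG_le hGt
  have hε : 0 ≤ K0 / L ^ 4 := div_nonneg K0_nonneg (by positivity)
  have hpt : ∀ p, gradSq2 G p - lamG * (G p) ^ 2 ≤
      S.indicator (fun p => gradSq2 g p - lamG * (g p) ^ 2) p
      + K0 / L ^ 4 * S0.indicator (fun p => (g p) ^ 2) p
      - c p.2 * ((fderiv ℝ g p (1, 0)) ^ 2 - π ^ 2 * (g p) ^ 2)
      - c p.1 * ((fderiv ℝ g p (0, 1)) ^ 2 - π ^ 2 * (g p) ^ 2) := by
    intro p
    by_cases hp : p ∈ tsupport g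
    swap
    · have e0 : g p = 0 := image_eq_zero_of_notMem_tsupport hp
      have e1 := fderiv_eq_zero_of_notMem hp
      have e3 : gradSq2 g p = 0 := by simp [gradSq2, e1]
      have e2 := gradSq2_eq_zero (fun h => hp (hGts h))
      have e4 : G p = 0 := by simp [hG, e0]
      simp [e0, e1, e2, e3, e4, indicator_apply]
    have hpG := h3 hp
    simp only [Gam, mem_ofPred_eq] at hpG
    simp only [gradSq2, hGd]
    have hS0e : S0.indicator (fun p => (g p) ^ 2) p = if p.1 < t0 ∧ p.2 < t0 then (g p) ^ 2 else 0 := by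
      rw [indicator_apply]; rfl
    have hSe : S.indicator (fun p => (fderiv ℝ g p (1, 0)) ^ 2 + (fderiv ℝ g p (0, 1)) ^ 2 - lamG * (g p) ^ 2) p
        = if p.1 < L ∧ p.2 < L then
          (fderiv ℝ g p (1, 0)) ^ 2 + (fderiv ℝ g p (0, 1)) ^ 2 - lamG * (g p) ^ 2 else 0 := by
      rw [indicator_apply]; rfl
    have hce : ∀ t, c t = if t < L then 1 - χ t ^ 2 else 0 := fun t => by
      rw [hc, indicator_apply]; rfl
    rw [hS0e, hSe]
    rcases min_lt_iff.1 hpG.2 with hlt | hlt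
    · rw [hcn0 _ hlt.le, (hneg _ hlt.le).1, (hneg _ hlt.le).2, hce]
      simp only [hlt.trans hL, hlt.trans t0_pos, true_and, hG]
      rw [(hneg _ hlt.le).1]
      by_cases hb : p.2 < L
      · have := slice_alg (gx := fderiv ℝ g p (1, 0)) (gy := fderiv ℝ g p (0, 1)) (g := g p)
          (h01 p.2).1 (h01 p.2).2 (hest p.2) (by split_ifs; exacts [hε, le_rfl])
        simp only [if_pos hb]
        split_ifs at this ⊢ <;> nlinarith
      · simp only [if_neg hb, (hbig _ (not_lt.1 hb)).1, (hbig _ (not_lt.1 hb)).2]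
        split_ifs
        · nlinarith [mul_nonneg hε (sq_nonneg (g p))]
        · simp
    · rw [hcn0 _ hlt.le, (hneg _ hlt.le).1, (hneg _ hlt.le).2, hce]
      simp only [hlt.trans hL, hlt.trans t0_pos, and_true, hG]
      rw [(hneg _ hlt.le).1]
      by_cases hb : p.1 < L
      · have := slice_alg (gx := fderiv ℝ g p (0, 1)) (gy := fderiv ℝ g p (1, 0)) (g := g p)
          (h01 p.1).1 (h01 p.1).2 (hest p.1) (by split_ifs; exacts [hε, le_rfl])
        simp only [if_pos hb]
        split_ifs at this ⊢ <;> nlinarith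
      · simp only [if_neg hb, (hbig _ (not_lt.1 hb)).1, (hbig _ (not_lt.1 hb)).2]
        split_ifs
        · nlinarith [mul_nonneg hε (sq_nonneg (g p))]
        · simp
  have iA := iq.indicator mS
  have iB := (i2.indicator mS0).const_mul (K0 / L ^ 4)
  have hle := integral_mono iG (((iA.add iB).sub if1).sub if2) hpt
  have e1 := integral_sub ((iA.add iB).sub if1) if2
  have e2 := integral_sub (iA.add iB) if1
  have e3 := integral_add iA iB
  rw [integral_indicator mS, integral_const_mul, integral_indicator mS0] at e3
  simp only [Pi.add_apply, Pi.sub_apply] at e1 e2 e3 hle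
  linarith

/-! ### The estimate in one tube -/

/-- `C¹` test functions with compact support in the layer `Λ`. -/
def Test3 (w : ℝ × ℝ × ℝ → ℝ) : Prop := ContDiff ℝ 1 w ∧ HasCompactSupport w ∧ tsupport w ⊆ Lam3

theorem slice_fst_hasDerivAt {w : ℝ × ℝ × ℝ → ℝ} (hw : ContDiff ℝ 1 w) (p : ℝ × ℝ) (t : ℝ) :
    HasDerivAt (fun t => w (t, p)) (fderiv ℝ w (t, p) (1, 0, 0)) t := by
  have h5 := ((hw.differentiable (by norm_num)) (t, p)).hasFDerivAt
  have h6 : HasDerivAt (fun x : ℝ => (x, p)) ((1:ℝ), (0:ℝ × ℝ)) t :=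
    (hasDerivAt_id t).prodMk (hasDerivAt_const t p)
  exact h5.comp_hasDerivAt t h6

theorem slice_snd_fderiv {w : ℝ × ℝ × ℝ → ℝ} (hw : ContDiff ℝ 1 w) (t : ℝ) (p v : ℝ × ℝ) :
    fderiv ℝ (fun p => w (t, p)) p v = fderiv ℝ w (t, p) (0, v) := by
  have h5 := ((hw.differentiable (by norm_num)) (t, p)).hasFDerivAt
  have h6 : HasFDerivAt (fun p : ℝ × ℝ => (t, p)) (ContinuousLinearMap.inr ℝ ℝ (ℝ × ℝ)) p :=
    hasFDerivAt_prodMk_right t p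
  have h7 : HasFDerivAt (fun p => w (t, p)) _ p := h5.comp p h6
  rw [h7.fderiv]; simp

theorem hcs_slice_snd {w : ℝ × ℝ × ℝ → ℝ} (hw : HasCompactSupport w) (t : ℝ) :
    HasCompactSupport (fun p => w (t, p)) := by
  apply HasCompactSupport.of_support_subset_isCompact (IsCompact.image hw continuous_snd)
  intro p hp
  exact ⟨(t, p), subset_tsupport _ hp, rfl⟩

theorem hcs_slice_fst {w : ℝ × ℝ × ℝ → ℝ} (hw : HasCompactSupport w) (p : ℝ × ℝ) :
    HasCompactSupport (fun t => w (t, p)) := by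
  apply HasCompactSupport.of_support_subset_isCompact (IsCompact.image hw continuous_fst)
  intro t hp
  exact ⟨(t, p), subset_tsupport _ hp, rfl⟩

/-- For `t ≥ 0` the section of `Λ` at `x₁ = t` is the broken guide. -/
theorem test2_slice {w : ℝ × ℝ × ℝ → ℝ} (hw : Test3 w) {t : ℝ} (ht : 0 ≤ t) :
    Test2 (fun p => w (t, p)) := by
  refine ⟨hw.1.comp (contDiff_const.prodMk contDiff_id), hcs_slice_snd hw.2.1 t, ?_⟩
  intro p hp
  have h := hw.2.2 (tsupport_comp_subset_preimage w (by fun_prop : Continuous fun p : ℝ × ℝ => (t, p)) hp)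
  simp only [Lam3, Gam, mem_ofPred_eq] at h ⊢
  refine ⟨(lt_min_iff.1 h.1).2, ?_⟩
  rcases min_lt_iff.1 h.2 with h' | h'
  · exact absurd h' (not_lt.2 ht)
  · exact h'

theorem int_sq {w : ℝ × ℝ × ℝ → ℝ} (hw : ContDiff ℝ 1 w) (hc : HasCompactSupport w) :
    Integrable (fun x => (w x) ^ 2) :=
  Continuous.integrable_of_hasCompactSupport (by have := hw.continuous; fun_prop) (sq_hcs hc)

theorem int_pd {w : ℝ × ℝ × ℝ → ℝ} (hw : ContDiff ℝ 1 w) (hc : HasCompactSupport w) (e) :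
    Integrable (fun x => (fderiv ℝ w x e) ^ 2) :=
  Continuous.integrable_of_hasCompactSupport (by have := fderiv_apply_cont hw e; fun_prop)
    (sq_hcs (fderiv_apply_hcs hc e))

theorem int_grad {w : ℝ × ℝ × ℝ → ℝ} (hw : ContDiff ℝ 1 w) (hc : HasCompactSupport w) :
    Integrable (gradSq3 w) :=
  ((int_pd hw hc (1, 0, 0)).add (int_pd hw hc (0, 1, 0))).add (int_pd hw hc (0, 0, 1))

/-- The tube where `x₁` is the largest coordinate and exceeds `R`. -/
def Tube1 (R : ℝ) : Set (ℝ × ℝ × ℝ) := {x | R < x.1 ∧ x.2.1 < x.1 ∧ x.2.2 < x.1}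
/-- The region where all coordinates are at most `R`; it meets `Λ` in a bounded set. -/
def Core (R : ℝ) : Set (ℝ × ℝ × ℝ) := {x | x.1 ≤ R ∧ x.2.1 ≤ R ∧ x.2.2 ≤ R}

theorem Tube1_meas (R : ℝ) : MeasurableSet (Tube1 R) :=
  (measurableSet_lt measurable_const measurable_fst).inter
    ((measurableSet_lt (measurable_fst.comp measurable_snd) measurable_fst).inter
      (measurableSet_lt (measurable_snd.comp measurable_snd) measurable_fst))

theorem Core_meas (R : ℝ) : MeasurableSet (Core R) :=
  (measurableSet_le measurable_fst measurable_const).inter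
    ((measurableSet_le (measurable_fst.comp measurable_snd) measurable_const).inter
      (measurableSet_le (measurable_snd.comp measurable_snd) measurable_const))

/-- Hardy's inequality absorbs the slice error `K0 / t ^ 4` into the longitudinal derivative. -/
theorem hardy_tube {R : ℝ} (hR : 1 ≤ R) (hK : 24 * K0 ≤ R ^ 2)
    {f f' : ℝ → ℝ} (hf : ∀ x, HasDerivAt f (f' x) x) (hf'c : Continuous f') (hc : HasCompactSupport f) :
    -(1 / 6) * ∫ t in Ioc (R - 1) R, ((f' t) ^ 2 + (f t) ^ 2) ≤
      ∫ t in Ioi R, ((f' t) ^ 2 - K0 / (max t R) ^ 4 * (f t) ^ 2) := by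
  have hfc : Continuous f := continuous_iff_continuousAt.2 fun x => (hf x).continuousAt
  have hR0 : 0 < R := by linarith
  have i1 : Integrable (fun t => (f' t) ^ 2) :=
    Continuous.integrable_of_hasCompactSupport (by fun_prop) (sq_hcs (hcs_deriv hf hc))
  have i2 : Integrable (fun t => (f t) ^ 2) :=
    Continuous.integrable_of_hasCompactSupport (by fun_prop) (sq_hcs hc)
  have hm : ∀ t, 0 < max t R := fun t => hR0.trans_le (le_max_right _ _)
  have i3 : Integrable (fun t => K0 / (max t R) ^ 4 * (f t) ^ 2) := by
    apply Continuous.integrable_of_hasCompactSupport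
    · refine Continuous.mul (Continuous.div continuous_const (by fun_prop) fun t => ?_) (by fun_prop)
      have := hm t; positivity
    · exact (sq_hcs hc).mul_left
  have i4 : IntegrableOn (fun t => (f t) ^ 2 / (4 * t ^ 2)) (Ioi R) := by
    have : Integrable (fun t => (f t) ^ 2 / (4 * (max t R) ^ 2)) := by
      simp_rw [div_eq_mul_inv]
      apply Continuous.integrable_of_hasCompactSupport
      · refine Continuous.mul (by fun_prop) (Continuous.inv₀ (by fun_prop) fun t => ?_)
        have := hm t; positivity
      · exact (sq_hcs hc).mul_right
    refine this.integrableOn.congr_fun (fun t ht => ?_) measurableSet_Ioi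
    simp only [max_eq_left (le_of_lt (mem_Ioi.1 ht))]
  have hh := hardy hf hf'c hc hR
  rw [integral_sub i1.integrableOn i3.integrableOn]
  have h5 : ∫ t in Ioi R, K0 / (max t R) ^ 4 * (f t) ^ 2 ≤ ∫ t in Ioi R, (1 / 6) * ((f t) ^ 2 / (4 * t ^ 2)) := by
    apply setIntegral_mono_on i3.integrableOn (i4.const_mul _) measurableSet_Ioi
    intro t ht
    have ht' : R < t := ht
    have ht0 : 0 < t := hR0.trans ht'
    rw [max_eq_left ht'.le]
    have : K0 / t ^ 4 ≤ 1 / 6 / (4 * t ^ 2) := by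
      rw [div_le_div_iff₀ (by positivity) (by positivity)]
      have : R ^ 2 ≤ t ^ 2 := pow_le_pow_left₀ hR0.le ht'.le 2
      nlinarith [sq_nonneg t]
    calc K0 / t ^ 4 * f t ^ 2 ≤ 1 / 6 / (4 * t ^ 2) * f t ^ 2 :=
          mul_le_mul_of_nonneg_right this (sq_nonneg _)
      _ = _ := by ring
  rw [integral_const_mul] at h5
  have h6 : 0 ≤ ∫ t in Ioi R, (f' t) ^ 2 := integral_nonneg fun t => sq_nonneg _
  linarith

/-- The form on the tube is bounded below by a small multiple of core quantities. On the slices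
`x₁ = t` the section of the tube is the guide truncated at `L = t`, and `slice` leaves the error
`K0 / t ^ 4` on `x₂, x₃ < t0`; along the lines `(x₂, x₃) = const` this error is absorbed by
`hardy_tube`. -/
theorem tube1 {R : ℝ} (hR : 1 ≤ R) (hRt : t0 ≤ R) (hK : 24 * K0 ≤ R ^ 2) {w : ℝ × ℝ × ℝ → ℝ} (hw : Test3 w) :
    -(1 / 6) * ∫ x in Core R, ((fderiv ℝ w x (1, 0, 0)) ^ 2 + (w x) ^ 2) ≤
      ∫ x in Tube1 R, (gradSq3 w x - lamG * (w x) ^ 2) := by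
  have hR0 : 0 < R := by linarith
  obtain ⟨h1, h2, h3⟩ := id hw
  have hmx : ∀ t, R ≤ max t R := fun t => le_max_right _ _
  have i1 := int_pd h1 h2 (1, 0, 0)
  have i2 := int_sq h1 h2
  have iQ : Integrable (fun x => gradSq3 w x - lamG * (w x) ^ 2) := (int_grad h1 h2).sub (i2.const_mul _)
  have hκ : ∀ t, 0 ≤ K0 / (max t R) ^ 4 := fun t => div_nonneg K0_nonneg (by positivity)
  have hκ1 : ∀ t, |K0 / (max t R) ^ 4| ≤ 1 := fun t => by
    rw [abs_of_nonneg (hκ t), div_le_one (by have := hmx t; positivity)]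
    have : R ^ 4 ≤ (max t R) ^ 4 := pow_le_pow_left₀ hR0.le (hmx t) 4
    have h5 : R ^ 2 ≤ R ^ 4 := pow_le_pow_right₀ hR (by norm_num)
    linarith [K0_nonneg]
  have i3 : Integrable (fun x : ℝ × ℝ × ℝ => K0 / (max x.1 R) ^ 4 * (w x) ^ 2) :=
    integrable_weight (c := fun x : ℝ × ℝ × ℝ => K0 / (max x.1 R) ^ 4) (by fun_prop) (fun x => hκ1 x.1) i2
  set A : Set (ℝ × ℝ) := {p | p.1 < t0 ∧ p.2 < t0} with hA
  have mA : MeasurableSet A :=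
    (measurableSet_lt measurable_fst measurable_const).inter (measurableSet_lt measurable_snd measurable_const)
  set H0 : ℝ × ℝ × ℝ → ℝ := fun x => (fderiv ℝ w x (1, 0, 0)) ^ 2 - K0 / (max x.1 R) ^ 4 * (w x) ^ 2 with hH0
  have iH0 : Integrable H0 := i1.sub i3
  set Z0 : ℝ × ℝ × ℝ → ℝ := fun x => (fderiv ℝ w x (1, 0, 0)) ^ 2 + (w x) ^ 2 with hZ0
  have iZ0 : Integrable Z0 := i1.add i2
  have mIA : MeasurableSet (Ioi R ×ˢ A) := measurableSet_Ioi.prod mA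
  have mJA : MeasurableSet (Ioc (R - 1) R ×ˢ A) := measurableSet_Ioc.prod mA
  -- comparison on the slices `x₁ = const`
  have s1 : ∫ x in Ioi R ×ˢ A, H0 x ≤ ∫ x in Tube1 R, (gradSq3 w x - lamG * (w x) ^ 2) := by
    rw [← integral_indicator mIA, ← integral_indicator (Tube1_meas R), Measure.volume_eq_prod,
      integral_prod _ (iH0.indicator mIA), integral_prod _ (iQ.indicator (Tube1_meas R))]
    apply integral_mono (iH0.indicator mIA).integral_prod_left (iQ.indicator (Tube1_meas R)).integral_prod_left
    intro t
    beta_reduce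
    by_cases ht : R < t
    swap
    · have e1 : ∀ p : ℝ × ℝ, (Ioi R ×ˢ A).indicator H0 (t, p) = 0 := fun p =>
        indicator_of_notMem (fun h => ht h.1) _
      have e2 : ∀ p : ℝ × ℝ, (Tube1 R).indicator (fun x => gradSq3 w x - lamG * (w x) ^ 2) (t, p) = 0 := fun p =>
        indicator_of_notMem (fun h => ht h.1) _
      simp only [e1, e2, integral_zero, le_refl]
    have ht0 : 0 < t := hR0.trans ht
    have hT2 := test2_slice hw ht0.le
    have hs := slice ht0 hT2
    set S : Set (ℝ × ℝ) := {p | p.1 < t ∧ p.2 < t} with hS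
    have mS : MeasurableSet S :=
      (measurableSet_lt measurable_fst measurable_const).inter (measurableSet_lt measurable_snd measurable_const)
    have e1 : (fun p : ℝ × ℝ => (Ioi R ×ˢ A).indicator H0 (t, p)) = A.indicator (fun p => H0 (t, p)) := by
      ext p
      by_cases hp : p ∈ A
      · rw [indicator_of_mem hp, indicator_of_mem (show (t, p) ∈ Ioi R ×ˢ A from ⟨ht, hp⟩)]
      · rw [indicator_of_notMem hp, indicator_of_notMem (fun h => hp h.2)]
    have e2 : (fun p : ℝ × ℝ => (Tube1 R).indicator (fun x => gradSq3 w x - lamG * (w x) ^ 2) (t, p))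
        = S.indicator (fun p => gradSq3 w (t, p) - lamG * (w (t, p)) ^ 2) := by
      ext p
      by_cases hp : p ∈ S
      · rw [indicator_of_mem hp, indicator_of_mem (show (t, p) ∈ Tube1 R from ⟨ht, hp⟩)]
      · rw [indicator_of_notMem hp, indicator_of_notMem (fun h => hp h.2)]
    rw [e1, e2, integral_indicator mA, integral_indicator mS]
    have hct : Continuous (fun p : ℝ × ℝ => (t, p)) := by fun_prop
    have j1 : Integrable (fun p : ℝ × ℝ => (fderiv ℝ w (t, p) (1, 0, 0)) ^ 2) :=
      Continuous.integrable_of_hasCompactSupport (((fderiv_apply_cont h1 (1, 0, 0)).comp hct).pow 2)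
        (sq_hcs (hcs_slice_snd (fderiv_apply_hcs h2 (1, 0, 0)) t))
    have j2 : Integrable (fun p : ℝ × ℝ => (w (t, p)) ^ 2) :=
      Continuous.integrable_of_hasCompactSupport ((h1.continuous.comp hct).pow 2)
        (sq_hcs (hcs_slice_snd h2 t))
    have j3 : Integrable (gradSq2 (fun p => w (t, p))) :=
      (gradSq2_cont hT2.1).integrable_of_hasCompactSupport (gradSq2_hcs hT2.2.1)
    have e3 : (fun p : ℝ × ℝ => gradSq3 w (t, p) - lamG * (w (t, p)) ^ 2) = fun p =>
        (fderiv ℝ w (t, p) (1, 0, 0)) ^ 2 + (gradSq2 (fun p => w (t, p)) p - lamG * (w (t, p)) ^ 2) := by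
      ext p
      simp only [gradSq3, gradSq2, slice_snd_fderiv h1]
      ring
    have j4 : Integrable (fun p => gradSq2 (fun p => w (t, p)) p - lamG * (w (t, p)) ^ 2) :=
      j3.sub (j2.const_mul _)
    rw [e3, integral_add j1.integrableOn j4.integrableOn]
    have e4 : ∫ p in A, H0 (t, p) = (∫ p in A, (fderiv ℝ w (t, p) (1, 0, 0)) ^ 2)
        - K0 / t ^ 4 * ∫ p in A, (w (t, p)) ^ 2 := by
      simp only [hH0, max_eq_left ht.le]
      rw [integral_sub j1.integrableOn (j2.const_mul _).integrableOn, integral_const_mul]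
    have h8 : ∫ p in A, (fderiv ℝ w (t, p) (1, 0, 0)) ^ 2 ≤ ∫ p in S, (fderiv ℝ w (t, p) (1, 0, 0)) ^ 2 := by
      apply setIntegral_mono_set j1.integrableOn
      · filter_upwards with p using sq_nonneg _
      · apply LE.le.eventuallyLE
        intro p hp
        exact ⟨hp.1.trans_le (hRt.trans ht.le), hp.2.trans_le (hRt.trans ht.le)⟩
    rw [e4]
    linarith
  -- comparison on the lines `(x₂, x₃) = const`
  have s2 : ∫ x in Ioc (R - 1) R ×ˢ A, -(1 / 6) * Z0 x ≤ ∫ x in Ioi R ×ˢ A, H0 x := by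
    have iZ := (iZ0.const_mul (-(1 / 6))).indicator mJA
    have iH := iH0.indicator mIA
    rw [← integral_indicator mIA, ← integral_indicator mJA]
    rw [Measure.volume_eq_prod] at iZ iH ⊢
    rw [integral_prod_symm _ iH, integral_prod_symm _ iZ]
    apply integral_mono iZ.integral_prod_right iH.integral_prod_right
    intro p
    beta_reduce
    by_cases hp : p ∈ A
    swap
    · have e1 : ∀ t : ℝ, (Ioi R ×ˢ A).indicator H0 (t, p) = 0 := fun t =>
        indicator_of_notMem (fun h => hp h.2) _
      have e2 : ∀ t : ℝ, (Ioc (R - 1) R ×ˢ A).indicator (fun x => -(1 / 6) * Z0 x) (t, p) = 0 := fun t =>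
        indicator_of_notMem (fun h => hp h.2) _
      simp only [e1, e2, integral_zero, le_refl]
    have e1 : (fun t : ℝ => (Ioi R ×ˢ A).indicator H0 (t, p)) = (Ioi R).indicator (fun t => H0 (t, p)) := by
      ext t
      by_cases ht : t ∈ Ioi R
      · rw [indicator_of_mem ht, indicator_of_mem (show (t, p) ∈ Ioi R ×ˢ A from ⟨ht, hp⟩)]
      · rw [indicator_of_notMem ht, indicator_of_notMem (fun h => ht h.1)]
    have e2 : (fun t : ℝ => (Ioc (R - 1) R ×ˢ A).indicator (fun x => -(1 / 6) * Z0 x) (t, p))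
        = (Ioc (R - 1) R).indicator (fun t => -(1 / 6) * Z0 (t, p)) := by
      ext t
      by_cases ht : t ∈ Ioc (R - 1) R
      · rw [indicator_of_mem ht, indicator_of_mem (show (t, p) ∈ Ioc (R - 1) R ×ˢ A from ⟨ht, hp⟩)]
      · rw [indicator_of_notMem ht, indicator_of_notMem (fun h => ht h.1)]
    rw [e1, e2, integral_indicator measurableSet_Ioi, integral_indicator measurableSet_Ioc, integral_const_mul]
    exact hardy_tube hR hK (slice_fst_hasDerivAt h1 p)
      ((fderiv_apply_cont h1 (1, 0, 0)).comp (by fun_prop)) (hcs_slice_fst h2 p)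
  refine le_trans ?_ (s2.trans s1)
  rw [integral_const_mul]
  apply mul_le_mul_of_nonpos_left _ (by norm_num)
  apply setIntegral_mono_set iZ0.integrableOn
  · filter_upwards with x
    simp only [hZ0, Pi.zero_apply]; positivity
  · apply LE.le.eventuallyLE
    intro x hx
    exact ⟨hx.1.2, hx.2.1.le.trans hRt, hx.2.2.le.trans hRt⟩

/-! ### Reduction to the core -/

/-- The exchange of the first two coordinates. -/
def sw12 : ℝ × ℝ × ℝ →L[ℝ] ℝ × ℝ × ℝ :=
  ((ContinuousLinearMap.fst ℝ ℝ ℝ).comp (ContinuousLinearMap.snd ℝ ℝ (ℝ × ℝ))).prod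
    ((ContinuousLinearMap.fst ℝ ℝ (ℝ × ℝ)).prod
      ((ContinuousLinearMap.snd ℝ ℝ ℝ).comp (ContinuousLinearMap.snd ℝ ℝ (ℝ × ℝ))))

/-- The exchange of the first and third coordinates. -/
def sw13 : ℝ × ℝ × ℝ →L[ℝ] ℝ × ℝ × ℝ :=
  ((ContinuousLinearMap.snd ℝ ℝ ℝ).comp (ContinuousLinearMap.snd ℝ ℝ (ℝ × ℝ))).prod
    (((ContinuousLinearMap.fst ℝ ℝ ℝ).comp (ContinuousLinearMap.snd ℝ ℝ (ℝ × ℝ))).prod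
      (ContinuousLinearMap.fst ℝ ℝ (ℝ × ℝ)))

@[simp] theorem sw12_apply (x : ℝ × ℝ × ℝ) : sw12 x = (x.2.1, x.1, x.2.2) := rfl
@[simp] theorem sw13_apply (x : ℝ × ℝ × ℝ) : sw13 x = (x.2.2, x.2.1, x.1) := rfl

theorem sw12_mp : MeasurePreserving (sw12 : ℝ × ℝ × ℝ → ℝ × ℝ × ℝ) volume volume := by
  have h1 : MeasurePreserving (MeasurableEquiv.prodAssoc : (ℝ × ℝ) × ℝ ≃ᵐ ℝ × ℝ × ℝ)
      (((volume : Measure ℝ).prod volume).prod volume) (volume.prod (volume.prod volume)) :=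
    measurePreserving_prodAssoc _ _ _
  have h2 : MeasurePreserving (Prod.map (Prod.swap : ℝ × ℝ → ℝ × ℝ) (id : ℝ → ℝ))
      (((volume : Measure ℝ).prod volume).prod volume) ((volume.prod volume).prod volume) :=
    Measure.measurePreserving_swap.prod (MeasurePreserving.id _)
  exact h1.comp (h2.comp h1.symm)

theorem sw13_mp : MeasurePreserving (sw13 : ℝ × ℝ × ℝ → ℝ × ℝ × ℝ) volume volume := by
  have h2 : MeasurePreserving (Prod.map (id : ℝ → ℝ) (Prod.swap : ℝ × ℝ → ℝ × ℝ))
      ((volume : Measure ℝ).prod (volume.prod volume)) (volume.prod (volume.prod volume)) :=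
    (MeasurePreserving.id _).prod Measure.measurePreserving_swap
  exact sw12_mp.comp (h2.comp sw12_mp)

/-- The tube estimate transported by a coordinate permutation `σ`. -/
theorem tube_sym {R : ℝ} (hR : 1 ≤ R) (hRt : t0 ≤ R) (hK : 24 * K0 ≤ R ^ 2) (σ : ℝ × ℝ × ℝ →L[ℝ] ℝ × ℝ × ℝ)
    (mp : MeasurePreserving (σ : ℝ × ℝ × ℝ → ℝ × ℝ × ℝ) volume volume) (hinv : ∀ x, σ (σ x) = x)
    (hLam : ∀ x, σ x ∈ Lam3 → x ∈ Lam3) (hCore : ∀ x, x ∈ Core R ↔ σ x ∈ Core R)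
    (hgrad : ∀ L : ℝ × ℝ × ℝ →L[ℝ] ℝ, (L (σ (1, 0, 0))) ^ 2 + (L (σ (0, 1, 0))) ^ 2 + (L (σ (0, 0, 1))) ^ 2
      = (L (1, 0, 0)) ^ 2 + (L (0, 1, 0)) ^ 2 + (L (0, 0, 1)) ^ 2)
    {w : ℝ × ℝ × ℝ → ℝ} (hw : Test3 w) :
    -(1 / 6) * ∫ x in Core R, ((fderiv ℝ w x (σ (1, 0, 0))) ^ 2 + (w x) ^ 2) ≤
      ∫ x in σ ⁻¹' Tube1 R, (gradSq3 w x - lamG * (w x) ^ 2) := by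
  have hinj : Function.Injective σ := Function.LeftInverse.injective hinv
  have me : MeasurableEmbedding (σ : ℝ × ℝ × ℝ → ℝ × ℝ × ℝ) := σ.continuous.measurableEmbedding hinj
  obtain ⟨h1, h2, h3⟩ := hw
  have hfd : ∀ x v, fderiv ℝ (fun x => w (σ x)) x v = fderiv ℝ w (σ x) (σ v) := by
    intro x v
    have h5 := ((h1.differentiable (by norm_num)) (σ x)).hasFDerivAt
    have h7 : HasFDerivAt (fun x => w (σ x)) _ x := h5.comp x σ.hasFDerivAt
    rw [h7.fderiv]; simp
  have hw' : Test3 (fun x => w (σ x)) := by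
    refine ⟨h1.comp σ.contDiff, ?_, ?_⟩
    · apply HasCompactSupport.of_support_subset_isCompact (IsCompact.image h2 σ.continuous)
      intro x hx
      exact ⟨σ x, subset_tsupport _ hx, hinv x⟩
    · intro x hx
      exact hLam x (h3 (tsupport_comp_subset_preimage w σ.continuous hx))
  have key := tube1 hR hRt hK hw'
  have e1 : Core R = σ ⁻¹' Core R := by ext x; exact hCore x
  have e2 : Tube1 R = σ ⁻¹' (σ ⁻¹' Tube1 R) := by ext x; simp only [mem_preimage, hinv]
  have e3 : ∀ x, gradSq3 (fun x => w (σ x)) x = gradSq3 w (σ x) := fun x => by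
    simp only [gradSq3, hfd, hgrad]
  simp only [hfd, e3] at key
  rw [e1, e2, mp.setIntegral_preimage_emb me (fun x => (fderiv ℝ w x (σ (1, 0, 0))) ^ 2 + (w x) ^ 2),
    mp.setIntegral_preimage_emb me (fun x => gradSq3 w x - lamG * (w x) ^ 2)] at key
  exact key

theorem haar3 : (volume : Measure (ℝ × ℝ × ℝ)).IsAddHaarMeasure := by
  have h2 : ((volume : Measure ℝ).prod (volume : Measure ℝ)).IsAddHaarMeasure :=
    Measure.prod.instIsAddHaarMeasure _ _
  exact Measure.prod.instIsAddHaarMeasure (volume : Measure ℝ) ((volume : Measure ℝ).prod (volume : Measure ℝ))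

/-- The kernel of a nonzero linear form is a null set. -/
theorem null_of_eq (l : ℝ × ℝ × ℝ →ₗ[ℝ] ℝ) {x : ℝ × ℝ × ℝ} (hx : l x ≠ 0) : ∀ᵐ y : ℝ × ℝ × ℝ, l y ≠ 0 := by
  have := haar3
  have h := Measure.addHaar_submodule (volume : Measure (ℝ × ℝ × ℝ)) (LinearMap.ker l) (by
    intro h
    apply hx
    have : x ∈ LinearMap.ker l := by rw [h]; trivial
    exact this)
  rw [ae_iff]
  refine Eq.trans (congrArg _ ?_) h
  ext y; simp

theorem indicator_if {X : Type*} {S : Set X} {q : X → ℝ} {x : X} {P : Prop} [Decidable P] (h : x ∈ S ↔ P) :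
    S.indicator q x = if P then q x else 0 := by
  classical
  rw [indicator_apply]
  simp only [h]

/-- A point off the diagonals lies in the core or in exactly one of the three tubes. -/
theorem split_max {a b c R Q : ℝ} (h1 : a ≠ b) (h2 : a ≠ c) (h3 : b ≠ c) :
    Q = (if a ≤ R ∧ b ≤ R ∧ c ≤ R then Q else 0) + (if R < a ∧ b < a ∧ c < a then Q else 0)
      + (if R < b ∧ a < b ∧ c < b then Q else 0) + (if R < c ∧ b < c ∧ a < c then Q else 0) := by
  by_cases hC : a ≤ R ∧ b ≤ R ∧ c ≤ R
  · obtain ⟨x, y, z⟩ := hC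
    rw [if_pos ⟨x, y, z⟩, if_neg fun h => absurd h.1 (not_lt.2 x), if_neg fun h => absurd h.1 (not_lt.2 y),
      if_neg fun h => absurd h.1 (not_lt.2 z)]
    ring
  rw [if_neg hC]
  by_cases ha : b < a ∧ c < a
  · have : R < a := by
      by_contra h
      exact hC ⟨by linarith, by linarith, by linarith⟩
    rw [if_pos ⟨this, ha⟩, if_neg fun h => by linarith [h.2.1, ha.1], if_neg fun h => by linarith [h.2.2, ha.2]]
    ring
  rw [if_neg fun h => ha h.2]
  by_cases hb : a < b ∧ c < b
  · have : R < b := by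
      by_contra h
      exact hC ⟨by linarith, by linarith, by linarith⟩
    rw [if_pos ⟨this, hb⟩, if_neg fun h => by linarith [h.2.1, hb.2]]
    ring
  rw [if_neg fun h => hb h.2]
  have hc : b < c ∧ a < c := by
    rcases lt_or_gt_of_ne h1 with m1 | m1 <;> rcases lt_or_gt_of_ne h2 with m2 | m2 <;>
      rcases lt_or_gt_of_ne h3 with m3 | m3
    · exact ⟨m3, m2⟩
    · exact absurd ⟨m1, m3⟩ hb
    · linarith
    · exact absurd ⟨m1, m3⟩ hb
    · exact ⟨m3, m2⟩
    · linarith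
    · exact absurd ⟨m1, m2⟩ ha
    · exact absurd ⟨m1, m2⟩ ha
  have : R < c := by
    by_contra h
    exact hC ⟨by linarith, by linarith, by linarith⟩
  rw [if_pos ⟨this, hc⟩]
  ring

/-- The form on `Λ` is bounded below by quantities living on the bounded core. -/
theorem core_bound {R : ℝ} (hR : 1 ≤ R) (hRt : t0 ≤ R) (hK : 24 * K0 ≤ R ^ 2) {w : ℝ × ℝ × ℝ → ℝ} (hw : Test3 w) :
    (1 / 2) * (∫ x in Core R, gradSq3 w x) - (lamG + 1) * (∫ x in Core R, (w x) ^ 2) ≤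
      ∫ x, (gradSq3 w x - lamG * (w x) ^ 2) := by
  have t1 := tube1 hR hRt hK hw
  have t2 := tube_sym hR hRt hK sw12 sw12_mp (fun x => rfl)
    (fun x hx => by
      simp only [Lam3, mem_ofPred_eq, sw12_apply] at hx ⊢
      rwa [min_left_comm])
    (fun x => by simp only [Core, mem_ofPred_eq, sw12_apply]; tauto)
    (fun L => by simp only [sw12_apply]; ring) hw
  have t3 := tube_sym hR hRt hK sw13 sw13_mp (fun x => rfl)
    (fun x hx => by
      simp only [Lam3, mem_ofPred_eq, sw13_apply] at hx ⊢
      have : min x.1 (min x.2.1 x.2.2) = min x.2.2 (min x.2.1 x.1) := by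
        rw [min_comm x.2.1, min_left_comm, min_comm x.1, min_comm x.2.1]
      rwa [this])
    (fun x => by simp only [Core, mem_ofPred_eq, sw13_apply]; tauto)
    (fun L => by simp only [sw13_apply]; ring) hw
  simp only [sw12_apply, sw13_apply] at t2 t3
  obtain ⟨h1, h2, h3⟩ := hw
  have i1 := int_pd h1 h2 (1, 0, 0)
  have i2 := int_pd h1 h2 (0, 1, 0)
  have i3 := int_pd h1 h2 (0, 0, 1)
  have i0 := int_sq h1 h2
  have iQ : Integrable (fun x => gradSq3 w x - lamG * (w x) ^ 2) := (int_grad h1 h2).sub (i0.const_mul _)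
  have mT2 : MeasurableSet (sw12 ⁻¹' Tube1 R) := sw12.continuous.measurable (Tube1_meas R)
  have mT3 : MeasurableSet (sw13 ⁻¹' Tube1 R) := sw13.continuous.measurable (Tube1_meas R)
  set q : ℝ × ℝ × ℝ → ℝ := fun x => gradSq3 w x - lamG * (w x) ^ 2 with hq
  have hsum : ∫ x, q x = (∫ x in Core R, q x) + (∫ x in Tube1 R, q x) + (∫ x in sw12 ⁻¹' Tube1 R, q x)
      + ∫ x in sw13 ⁻¹' Tube1 R, q x := by
    have f1 := integral_add' (iQ.indicator (Core_meas R)) (iQ.indicator (Tube1_meas R))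
    have f2 := integral_add' ((iQ.indicator (Core_meas R)).add (iQ.indicator (Tube1_meas R))) (iQ.indicator mT2)
    have f3 := integral_add' (((iQ.indicator (Core_meas R)).add (iQ.indicator (Tube1_meas R))).add
        (iQ.indicator mT2)) (iQ.indicator mT3)
    rw [← integral_indicator (Core_meas R), ← integral_indicator (Tube1_meas R), ← integral_indicator mT2,
      ← integral_indicator mT3, ← f1, ← f2, ← f3]
    apply integral_congr_ae
    have n1 := null_of_eq (LinearMap.fst ℝ ℝ (ℝ × ℝ) - (LinearMap.fst ℝ ℝ ℝ).comp (LinearMap.snd ℝ ℝ (ℝ × ℝ)))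
      (x := (1, 0, 0)) (by simp)
    have n2 := null_of_eq (LinearMap.fst ℝ ℝ (ℝ × ℝ) - (LinearMap.snd ℝ ℝ ℝ).comp (LinearMap.snd ℝ ℝ (ℝ × ℝ)))
      (x := (1, 0, 0)) (by simp)
    have n3 := null_of_eq ((LinearMap.fst ℝ ℝ ℝ).comp (LinearMap.snd ℝ ℝ (ℝ × ℝ)) -
      (LinearMap.snd ℝ ℝ ℝ).comp (LinearMap.snd ℝ ℝ (ℝ × ℝ))) (x := (0, 1, 0)) (by simp)
    filter_upwards [n1, n2, n3] with x m1 m2 m3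
    simp only [LinearMap.sub_apply, LinearMap.fst_apply, LinearMap.comp_apply, LinearMap.snd_apply, sub_ne_zero]
      at m1 m2 m3
    have g1 : (Core R).indicator q x = if x.1 ≤ R ∧ x.2.1 ≤ R ∧ x.2.2 ≤ R then q x else 0 := by
      exact indicator_if Iff.rfl
    have g2 : (Tube1 R).indicator q x = if R < x.1 ∧ x.2.1 < x.1 ∧ x.2.2 < x.1 then q x else 0 := by
      exact indicator_if Iff.rfl
    have g3 : (sw12 ⁻¹' Tube1 R).indicator q x =
        if R < x.2.1 ∧ x.1 < x.2.1 ∧ x.2.2 < x.2.1 then q x else 0 := by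
      exact indicator_if Iff.rfl
    have g4 : (sw13 ⁻¹' Tube1 R).indicator q x =
        if R < x.2.2 ∧ x.2.1 < x.2.2 ∧ x.1 < x.2.2 then q x else 0 := by
      exact indicator_if Iff.rfl
    rw [Pi.add_apply, Pi.add_apply, Pi.add_apply, g1, g2, g3, g4]
    exact split_max m1 m2 m3
  have eC : ∫ x in Core R, q x = (∫ x in Core R, gradSq3 w x) - lamG * ∫ x in Core R, (w x) ^ 2 := by
    rw [hq, integral_sub (int_grad h1 h2).integrableOn (i0.const_mul _).integrableOn, integral_const_mul]
  have eG : ∫ x in Core R, gradSq3 w x = (∫ x in Core R, (fderiv ℝ w x (1, 0, 0)) ^ 2)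
      + (∫ x in Core R, (fderiv ℝ w x (0, 1, 0)) ^ 2) + ∫ x in Core R, (fderiv ℝ w x (0, 0, 1)) ^ 2 := by
    rw [← integral_add' i1.integrableOn i2.integrableOn,
      ← integral_add' (i1.integrableOn.add i2.integrableOn) i3.integrableOn]
    rfl
  rw [integral_add i1.integrableOn i0.integrableOn] at t1
  rw [integral_add i2.integrableOn i0.integrableOn] at t2
  rw [integral_add i3.integrableOn i0.integrableOn] at t3
  have p1 : 0 ≤ ∫ x in Core R, (fderiv ℝ w x (1, 0, 0)) ^ 2 := integral_nonneg fun x => sq_nonneg _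
  have p2 : 0 ≤ ∫ x in Core R, (fderiv ℝ w x (0, 1, 0)) ^ 2 := integral_nonneg fun x => sq_nonneg _
  have p3 : 0 ≤ ∫ x in Core R, (fderiv ℝ w x (0, 0, 1)) ^ 2 := integral_nonneg fun x => sq_nonneg _
  have p0 : 0 ≤ ∫ x in Core R, (w x) ^ 2 := integral_nonneg fun x => sq_nonneg _
  rw [hsum, eC, eG]
  linarith

/-! ### Poincaré's inequality on a cube -/

theorem pcont {X : Type*} [TopologicalSpace X] {f : X → ℝ → ℝ}
    (hf : Continuous (Function.uncurry f)) (a : ℝ) {h : ℝ} (hh : 0 < h) :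
    Continuous (fun x => ∫ t in Ioc a (a + h), f x t) := by
  have := intervalIntegral.continuous_parametric_intervalIntegral_of_continuous' (μ := volume) hf a (a + h)
  simpa only [intervalIntegral.integral_of_le (by linarith : a ≤ a + h)] using this

/-- Differentiation under the integral sign. -/
theorem pderiv {f f' : ℝ → ℝ → ℝ} (hf : ∀ s t, HasDerivAt (fun s => f s t) (f' s t) s)
    (hc : Continuous (Function.uncurry f)) (hc' : Continuous (Function.uncurry f')) (a h s : ℝ) :
    HasDerivAt (fun s => ∫ t in Ioc a (a + h), f s t) (∫ t in Ioc a (a + h), f' s t) s := by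
  obtain ⟨C, hC⟩ := (isCompact_Icc (a := s - 1) (b := s + 1)).prod (isCompact_Icc (a := a) (b := a + h))
    |>.exists_bound_of_continuousOn hc'.continuousOn
  have hs : ∀ s, Continuous (f s) := fun s => hc.comp (by fun_prop : Continuous fun t : ℝ => (s, t))
  have hs' : ∀ s, Continuous (f' s) := fun s => hc'.comp (by fun_prop : Continuous fun t : ℝ => (s, t))
  refine (hasDerivAt_integral_of_dominated_loc_of_deriv_le (bound := fun _ => C)
    (s := Icc (s - 1) (s + 1)) (Icc_mem_nhds (by linarith) (by linarith))
    (Eventually.of_forall fun s => (hs s).aestronglyMeasurable) (hs s).integrableOn_Ioc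
    (hs' s).aestronglyMeasurable ?_ (integrable_const _) ?_).2
  · refine (ae_restrict_iff' measurableSet_Ioc).2 (Eventually.of_forall fun t ht s hs => ?_)
    exact hC (s, t) ⟨hs, ht.1.le, ht.2⟩
  · exact Eventually.of_forall fun t s _ => hf s t

theorem slice2_hasDerivAt {w : ℝ × ℝ × ℝ → ℝ} (hw : ContDiff ℝ 1 w) (x s t : ℝ) :
    HasDerivAt (fun s => w (x, s, t)) (fderiv ℝ w (x, s, t) (0, 1, 0)) s := by
  have h5 := ((hw.differentiable (by norm_num)) (x, s, t)).hasFDerivAt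
  have h6 : HasDerivAt (fun s : ℝ => (x, s, t)) ((0:ℝ), (1:ℝ), (0:ℝ)) s :=
    (hasDerivAt_const s x).prodMk ((hasDerivAt_id s).prodMk (hasDerivAt_const s t))
  exact h5.comp_hasDerivAt s h6

theorem slice3_hasDerivAt {w : ℝ × ℝ × ℝ → ℝ} (hw : ContDiff ℝ 1 w) (x s t : ℝ) :
    HasDerivAt (fun t => w (x, s, t)) (fderiv ℝ w (x, s, t) (0, 0, 1)) t := by
  have h5 := ((hw.differentiable (by norm_num)) (x, s, t)).hasFDerivAt
  have h6 : HasDerivAt (fun t : ℝ => (x, s, t)) ((0:ℝ), (0:ℝ), (1:ℝ)) t :=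
    (hasDerivAt_const t x).prodMk ((hasDerivAt_const t s).prodMk (hasDerivAt_id t))
  exact h5.comp_hasDerivAt t h6

/-- Poincaré inequality on a cube of side `h`, by applying `poincare1` in each variable in turn. -/
theorem poincare_iter {w : ℝ × ℝ × ℝ → ℝ} (hw : ContDiff ℝ 1 w) (a b c : ℝ) {h : ℝ} (hh : 0 < h) :
    (∫ x in Ioc a (a + h), ∫ y in Ioc b (b + h), ∫ z in Ioc c (c + h), (w (x, y, z)) ^ 2) ≤
      1 / h ^ 3 * (∫ x in Ioc a (a + h), ∫ y in Ioc b (b + h), ∫ z in Ioc c (c + h), w (x, y, z)) ^ 2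
      + h ^ 2 * ((∫ x in Ioc a (a + h), ∫ y in Ioc b (b + h), ∫ z in Ioc c (c + h), (fderiv ℝ w (x, y, z) (1, 0, 0)) ^ 2)
        + (∫ x in Ioc a (a + h), ∫ y in Ioc b (b + h), ∫ z in Ioc c (c + h), (fderiv ℝ w (x, y, z) (0, 1, 0)) ^ 2)
        + ∫ x in Ioc a (a + h), ∫ y in Ioc b (b + h), ∫ z in Ioc c (c + h), (fderiv ℝ w (x, y, z) (0, 0, 1)) ^ 2) := by
  have cw := hw.continuous
  have c1 := fderiv_apply_cont hw (1, 0, 0)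
  have c2 := fderiv_apply_cont hw (0, 1, 0)
  have c3 := fderiv_apply_cont hw (0, 0, 1)
  -- continuity of iterated integrals of continuous functions
  have K1 : ∀ {g : ℝ × ℝ × ℝ → ℝ}, Continuous g →
      Continuous (fun p : ℝ × ℝ => ∫ z in Ioc c (c + h), g (p.1, p.2, z)) := fun {g} hg =>
    pcont (f := fun (p : ℝ × ℝ) z => g (p.1, p.2, z)) (by
      show Continuous (fun q : (ℝ × ℝ) × ℝ => g (q.1.1, q.1.2, q.2)); fun_prop) c hh
  have K2 : ∀ {g : ℝ × ℝ → ℝ}, Continuous g →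
      Continuous (fun x : ℝ => ∫ y in Ioc b (b + h), g (x, y)) := fun {g} hg =>
    pcont (f := fun x y => g (x, y)) (by
      show Continuous (fun q : ℝ × ℝ => g (q.1, q.2)); fun_prop) b hh
  have K0 : ∀ {g : ℝ × ℝ → ℝ}, Continuous g → ∀ x, Continuous (fun y : ℝ => g (x, y)) := fun hg x => by
    fun_prop
  have M : ∀ {f g : ℝ → ℝ} (a : ℝ), Continuous f → Continuous g → (∀ x, f x ≤ g x) →
      ∫ x in Ioc a (a + h), f x ≤ ∫ x in Ioc a (a + h), g x := fun a hf hg hfg =>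
    setIntegral_mono hf.integrableOn_Ioc hg.integrableOn_Ioc hfg
  have A : ∀ {f g : ℝ → ℝ} (a α β : ℝ), Continuous f → Continuous g →
      ∫ x in Ioc a (a + h), (α * f x + β * g x) =
        α * (∫ x in Ioc a (a + h), f x) + β * ∫ x in Ioc a (a + h), g x := fun a α β hf hg => by
    rw [integral_add (hf.integrableOn_Ioc.const_mul _) (hg.integrableOn_Ioc.const_mul _),
      integral_const_mul, integral_const_mul]
  set F : ℝ × ℝ → ℝ := fun p => ∫ z in Ioc c (c + h), w (p.1, p.2, z) with hF
  set G : ℝ → ℝ := fun x => ∫ y in Ioc b (b + h), F (x, y) with hG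
  have cF : Continuous F := K1 cw
  have cG : Continuous G := K2 cF
  have cs0 : Continuous fun x => (w x) ^ 2 := by fun_prop
  have cs1 : Continuous fun x => (fderiv ℝ w x (1, 0, 0)) ^ 2 := by fun_prop
  have cs2 : Continuous fun x => (fderiv ℝ w x (0, 1, 0)) ^ 2 := by fun_prop
  have cs3 : Continuous fun x => (fderiv ℝ w x (0, 0, 1)) ^ 2 := by fun_prop
  have cF2 : Continuous fun p => (F p) ^ 2 := by fun_prop
  have cG2 : Continuous fun x => (G x) ^ 2 := by fun_prop
  -- third variable
  have s3 : (∫ x in Ioc a (a + h), ∫ y in Ioc b (b + h), ∫ z in Ioc c (c + h), (w (x, y, z)) ^ 2) ≤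
      1 / h * (∫ x in Ioc a (a + h), ∫ y in Ioc b (b + h), (F (x, y)) ^ 2) +
      h ^ 2 * ∫ x in Ioc a (a + h), ∫ y in Ioc b (b + h), ∫ z in Ioc c (c + h), (fderiv ℝ w (x, y, z) (0, 0, 1)) ^ 2 := by
    rw [← A a _ _ (K2 cF2) (K2 (K1 cs3))]
    refine M a (K2 (K1 cs0)) (((K2 cF2).const_mul _).add ((K2 (K1 cs3)).const_mul _)) fun x => ?_
    rw [← A b _ _ (K0 cF2 x) (K0 (K1 cs3) x)]
    refine M b (K0 (K1 cs0) x) (((K0 cF2 x).const_mul _).add ((K0 (K1 cs3) x).const_mul _)) fun y => ?_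
    exact poincare1 (fun z => slice3_hasDerivAt hw x y z)
      (c3.comp (by fun_prop : Continuous fun z : ℝ => (x, y, z))) c hh
  -- second variable
  have s2 : (∫ x in Ioc a (a + h), ∫ y in Ioc b (b + h), (F (x, y)) ^ 2) ≤
      1 / h * (∫ x in Ioc a (a + h), (G x) ^ 2) +
      h ^ 3 * ∫ x in Ioc a (a + h), ∫ y in Ioc b (b + h), ∫ z in Ioc c (c + h), (fderiv ℝ w (x, y, z) (0, 1, 0)) ^ 2 := by
    rw [← A a _ _ cG2 (K2 (K1 cs2))]
    refine M a (K2 cF2) ((cG2.const_mul _).add ((K2 (K1 cs2)).const_mul _)) fun x => ?_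
    have h1 := poincare1 (f := fun y => F (x, y))
      (f' := fun y => ∫ z in Ioc c (c + h), fderiv ℝ w (x, y, z) (0, 1, 0))
      (fun y => pderiv (f := fun y z => w (x, y, z)) (f' := fun y z => fderiv ℝ w (x, y, z) (0, 1, 0))
        (fun y z => slice2_hasDerivAt hw x y z)
        (by show Continuous fun q : ℝ × ℝ => w (x, q.1, q.2); fun_prop)
        (c2.comp (by fun_prop : Continuous fun q : ℝ × ℝ => (x, q.1, q.2))) c h y)
      (K0 (K1 c2) x) b hh
    refine h1.trans (add_le_add le_rfl ?_)
    have h2 : ∫ y in Ioc b (b + h), (∫ z in Ioc c (c + h), fderiv ℝ w (x, y, z) (0, 1, 0)) ^ 2 ≤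
        ∫ y in Ioc b (b + h), h * ∫ z in Ioc c (c + h), (fderiv ℝ w (x, y, z) (0, 1, 0)) ^ 2 :=
      M b ((K0 (K1 c2) x).pow 2) ((K0 (K1 cs2) x).const_mul _) fun y =>
        cs_interval (c2.comp (by fun_prop : Continuous fun z : ℝ => (x, y, z))) c hh
    rw [integral_const_mul] at h2
    calc _ ≤ h ^ 2 * _ := mul_le_mul_of_nonneg_left h2 (sq_nonneg _)
      _ = _ := by ring
  -- first variable
  have s1 : (∫ x in Ioc a (a + h), (G x) ^ 2) ≤ 1 / h * (∫ x in Ioc a (a + h), G x) ^ 2 +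
      h ^ 4 * ∫ x in Ioc a (a + h), ∫ y in Ioc b (b + h), ∫ z in Ioc c (c + h), (fderiv ℝ w (x, y, z) (1, 0, 0)) ^ 2 := by
    have h1 := poincare1 (f := G)
      (f' := fun x => ∫ y in Ioc b (b + h), ∫ z in Ioc c (c + h), fderiv ℝ w (x, y, z) (1, 0, 0))
      (fun x => pderiv (f := fun x y => F (x, y)) (f' := fun x y => ∫ z in Ioc c (c + h), fderiv ℝ w (x, y, z) (1, 0, 0))
        (fun x y => pderiv (f := fun x z => w (x, y, z)) (f' := fun x z => fderiv ℝ w (x, y, z) (1, 0, 0))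
          (fun x z => slice_fst_hasDerivAt hw (y, z) x)
          (by show Continuous fun q : ℝ × ℝ => w (q.1, y, q.2); fun_prop)
          (c1.comp (by fun_prop : Continuous fun q : ℝ × ℝ => (q.1, y, q.2))) c h x)
        cF (K1 c1) b h x) (K2 (K1 c1)) a hh
    refine h1.trans (add_le_add le_rfl ?_)
    have h2 : ∫ x in Ioc a (a + h), (∫ y in Ioc b (b + h), ∫ z in Ioc c (c + h), fderiv ℝ w (x, y, z) (1, 0, 0)) ^ 2 ≤
        ∫ x in Ioc a (a + h), h * ∫ y in Ioc b (b + h), h * ∫ z in Ioc c (c + h), (fderiv ℝ w (x, y, z) (1, 0, 0)) ^ 2 := by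
      refine M a ((K2 (K1 c1)).pow 2) ((K2 ((K1 cs1).const_mul _)).const_mul _) fun x => ?_
      refine (cs_interval (K0 (K1 c1) x) b hh).trans (mul_le_mul_of_nonneg_left ?_ hh.le)
      refine M b ((K0 (K1 c1) x).pow 2) ((K0 (K1 cs1) x).const_mul _) fun y => ?_
      exact cs_interval (c1.comp (by fun_prop : Continuous fun z : ℝ => (x, y, z))) c hh
    simp only [integral_const_mul] at h2
    calc _ ≤ h ^ 2 * _ := mul_le_mul_of_nonneg_left h2 (sq_nonneg _)
      _ = _ := by ring
  refine s3.trans ?_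
  have hi : 0 ≤ 1 / h := by positivity
  have s4 := mul_le_mul_of_nonneg_left s2 hi
  have s5 := mul_le_mul_of_nonneg_left (mul_le_mul_of_nonneg_left s1 hi) hi
  refine (add_le_add_left s4 _).trans ?_
  rw [mul_add (1 / h)]
  refine (add_le_add_left (add_le_add_left s5 _) _).trans (le_of_eq ?_)
  show _ = 1 / h ^ 3 * (∫ x in Ioc a (a + h), G x) ^ 2 + _
  field_simp
  ring

/-! ### Cell averages control the form on test functions -/

/-- The half-open cell of side `h` with index `v` in the grid based at `(-1,-1,-1)`. -/
def Cell (h : ℝ) {N : ℕ} (v : Fin N × Fin N × Fin N) : Set (ℝ × ℝ × ℝ) :=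
  Ioc (-1 + (v.1 : ℝ) * h) (-1 + (v.1 : ℝ) * h + h) ×ˢ
    (Ioc (-1 + (v.2.1 : ℝ) * h) (-1 + (v.2.1 : ℝ) * h + h) ×ˢ
      Ioc (-1 + (v.2.2 : ℝ) * h) (-1 + (v.2.2 : ℝ) * h + h))

theorem Cell_meas (h : ℝ) {N : ℕ} (v : Fin N × Fin N × Fin N) : MeasurableSet (Cell h v) :=
  measurableSet_Ioc.prod (measurableSet_Ioc.prod measurableSet_Ioc)

theorem Cell_bdd (h : ℝ) {N : ℕ} (v : Fin N × Fin N × Fin N) : Bornology.IsBounded (Cell h v) :=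
  (Metric.isBounded_Ioc _ _).prod ((Metric.isBounded_Ioc _ _).prod (Metric.isBounded_Ioc _ _))

theorem integrableOn_bdd {E : Type*} [MeasurableSpace E] [MetricSpace E] [ProperSpace E]
    [OpensMeasurableSpace E] {μ : Measure E} [IsFiniteMeasureOnCompacts μ]
    {g : E → ℝ} (hg : Continuous g) {s : Set E} (hs : Bornology.IsBounded s) : IntegrableOn g s μ :=
  (hg.continuousOn.integrableOn_compact hs.isCompact_closure).mono_set subset_closure

theorem cell_integral {g : ℝ × ℝ × ℝ → ℝ} (hg : Continuous g) (h : ℝ) {N : ℕ} (v : Fin N × Fin N × Fin N) :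
    ∫ x in Cell h v, g x = ∫ x in Ioc (-1 + (v.1 : ℝ) * h) (-1 + (v.1 : ℝ) * h + h),
      ∫ y in Ioc (-1 + (v.2.1 : ℝ) * h) (-1 + (v.2.1 : ℝ) * h + h),
      ∫ z in Ioc (-1 + (v.2.2 : ℝ) * h) (-1 + (v.2.2 : ℝ) * h + h), g (x, y, z) := by
  have i := integrableOn_bdd (μ := volume) hg (Cell_bdd h v)
  rw [Cell, Measure.volume_eq_prod] at i ⊢
  rw [setIntegral_prod _ i]
  refine integral_congr_ae (Eventually.of_forall fun x => ?_)
  have i' : IntegrableOn (fun p => g (x, p)) (Ioc (-1 + (v.2.1 : ℝ) * h) (-1 + (v.2.1 : ℝ) * h + h) ×ˢ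
      Ioc (-1 + (v.2.2 : ℝ) * h) (-1 + (v.2.2 : ℝ) * h + h)) (volume : Measure (ℝ × ℝ)) :=
    integrableOn_bdd (by fun_prop) ((Metric.isBounded_Ioc _ _).prod (Metric.isBounded_Ioc _ _))
  rw [Measure.volume_eq_prod] at i'
  beta_reduce
  rw [Measure.volume_eq_prod, setIntegral_prod _ i']

/-- Poincaré's inequality on a grid cell. -/
theorem poincare_cell {w : ℝ × ℝ × ℝ → ℝ} (hw : ContDiff ℝ 1 w) {h : ℝ} (hh : 0 < h) {N : ℕ}
    (v : Fin N × Fin N × Fin N) :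
    ∫ x in Cell h v, (w x) ^ 2 ≤ 1 / h ^ 3 * (∫ x in Cell h v, w x) ^ 2 +
      h ^ 2 * ∫ x in Cell h v, gradSq3 w x := by
  have cw := hw.continuous
  have c1 := fderiv_apply_cont hw (1, 0, 0)
  have c2 := fderiv_apply_cont hw (0, 1, 0)
  have c3 := fderiv_apply_cont hw (0, 0, 1)
  have cs1 : Continuous fun x => (fderiv ℝ w x (1, 0, 0)) ^ 2 := by fun_prop
  have cs2 : Continuous fun x => (fderiv ℝ w x (0, 1, 0)) ^ 2 := by fun_prop
  have cs3 : Continuous fun x => (fderiv ℝ w x (0, 0, 1)) ^ 2 := by fun_prop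
  have eG : ∫ x in Cell h v, gradSq3 w x = (∫ x in Cell h v, (fderiv ℝ w x (1, 0, 0)) ^ 2)
      + (∫ x in Cell h v, (fderiv ℝ w x (0, 1, 0)) ^ 2) + ∫ x in Cell h v, (fderiv ℝ w x (0, 0, 1)) ^ 2 := by
    have i1 := integrableOn_bdd (μ := volume) cs1 (Cell_bdd h v)
    have i2 := integrableOn_bdd (μ := volume) cs2 (Cell_bdd h v)
    have i3 := integrableOn_bdd (μ := volume) cs3 (Cell_bdd h v)
    rw [← integral_add' i1 i2, ← integral_add' (i1.add i2) i3]
    rfl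
  rw [eG, cell_integral (by fun_prop : Continuous fun x => (w x) ^ 2), cell_integral cw,
    cell_integral cs1, cell_integral cs2, cell_integral cs3]
  exact poincare_iter hw _ _ _ hh

theorem exists_index {N : ℕ} {h x : ℝ} (hh : 0 < h) (hx : -1 < x) (hx' : x ≤ -1 + N * h) :
    ∃ i : Fin N, x ∈ Ioc (-1 + (i : ℝ) * h) (-1 + (i : ℝ) * h + h) := by
  have h1 : x ∈ ⋃ n : ℤ, Ioc (-1 + n • h) (-1 + (n + 1) • h) := by
    rw [iUnion_Ioc_add_zsmul hh]; trivial
  obtain ⟨n, hn⟩ := mem_iUnion.1 h1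
  simp only [zsmul_eq_mul, mem_Ioc] at hn
  push_cast at hn
  have n0 : 0 ≤ n := by
    by_contra hc
    have : (n : ℝ) + 1 ≤ 0 := by exact_mod_cast (by omega : n + 1 ≤ 0)
    nlinarith
  have n1 : n < N := by
    by_contra hc
    have : (N : ℝ) ≤ n := by exact_mod_cast (by omega : (N : ℤ) ≤ n)
    nlinarith
  lift n to ℕ using n0
  refine ⟨⟨n, by exact_mod_cast n1⟩, ?_⟩
  simp only [mem_Ioc]
  push_cast at hn
  exact ⟨hn.1, by linarith [hn.2]⟩

theorem index_unique {N : ℕ} {h x : ℝ} (hh : 0 < h) {i j : Fin N}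
    (hi : x ∈ Ioc (-1 + (i : ℝ) * h) (-1 + (i : ℝ) * h + h))
    (hj : x ∈ Ioc (-1 + (j : ℝ) * h) (-1 + (j : ℝ) * h + h)) : i = j := by
  by_contra hne
  rcases lt_or_gt_of_ne hne with hl | hl
  · have : ((i : ℕ) : ℝ) + 1 ≤ (j : ℕ) := by exact_mod_cast hl
    nlinarith [hi.2, hj.1]
  · have : ((j : ℕ) : ℝ) + 1 ≤ (i : ℕ) := by exact_mod_cast hl
    nlinarith [hj.2, hi.1]

theorem cells_disjoint {h : ℝ} (hh : 0 < h) (N : ℕ) :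
    Pairwise (Function.onFun Disjoint (fun v : Fin N × Fin N × Fin N => Cell h v)) := by
  intro v v' hne
  refine disjoint_left.2 fun x hx hx' => hne ?_
  exact Prod.ext (index_unique hh hx.1 hx'.1)
    (Prod.ext (index_unique hh hx.2.1 hx'.2.1) (index_unique hh hx.2.2 hx'.2.2))

theorem Lam3_gt {x : ℝ × ℝ × ℝ} (hx : x ∈ Lam3) : -1 < x.1 ∧ -1 < x.2.1 ∧ -1 < x.2.2 := by
  have h := hx.1
  rw [lt_min_iff, lt_min_iff] at h
  exact h

theorem Cell_subset_Core {R h : ℝ} (hh : 0 < h) {N : ℕ} (hN : N * h = R + 1) (v : Fin N × Fin N × Fin N) :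
    Cell h v ⊆ Core R := by
  have key : ∀ (i : Fin N) (t : ℝ), t ∈ Ioc (-1 + (i : ℝ) * h) (-1 + (i : ℝ) * h + h) → t ≤ R := by
    intro i t ht
    have : ((i : ℕ) : ℝ) + 1 ≤ N := by exact_mod_cast i.2
    nlinarith [ht.2]
  exact fun x hx => ⟨key _ _ hx.1, key _ _ hx.2.1, key _ _ hx.2.2⟩

/-- The cells fill the part of the core that meets `Λ`. -/
theorem core_integral {R h : ℝ} (hh : 0 < h) {N : ℕ} (hN : N * h = R + 1) {g : ℝ × ℝ × ℝ → ℝ}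
    (hg : Integrable g) (h0 : ∀ x ∉ Lam3, g x = 0) :
    ∫ x in Core R, g x = ∑ v : Fin N × Fin N × Fin N, ∫ x in Cell h v, g x := by
  rw [← integral_iUnion_fintype (fun v => Cell_meas h v) (cells_disjoint hh N) (fun v => hg.integrableOn)]
  apply setIntegral_eq_of_subset_of_forall_sdiff_eq_zero (Core_meas R) (iUnion_subset fun v => Cell_subset_Core hh hN v)
  intro x hx
  by_contra hne
  apply hx.2
  have hL : x ∈ Lam3 := by
    by_contra hL
    exact hne (h0 x hL)
  obtain ⟨a1, a2, a3⟩ := Lam3_gt hL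
  obtain ⟨b1, b2, b3⟩ := hx.1
  obtain ⟨i, hi⟩ := exists_index (N := N) hh a1 (by linarith)
  obtain ⟨j, hj⟩ := exists_index (N := N) hh a2 (by linarith)
  obtain ⟨k, hk⟩ := exists_index (N := N) hh a3 (by linarith)
  exact mem_iUnion.2 ⟨(i, j, k), hi, hj, hk⟩

/-- The shifted quadratic form is nonnegative on test functions up to finitely many cell averages. -/
theorem form_bound : ∃ (N : ℕ) (h C : ℝ), ∀ w, Test3 w →
    0 ≤ (∫ x, (gradSq3 w x - lamG * (w x) ^ 2)) +
      C * ∑ v : Fin N × Fin N × Fin N, (∫ x in Cell h v, w x) ^ 2 := by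
  set R : ℝ := 1 + t0 + 24 * K0 with hRdef
  have hK0 := K0_nonneg
  have ht0 := t0_pos
  have hR : 1 ≤ R := by linarith
  have hRt : t0 ≤ R := by linarith
  have hK : 24 * K0 ≤ R ^ 2 := by nlinarith
  have hl := lamG_nonneg
  -- a mesh so fine that the Poincaré constant absorbs the zeroth order term
  obtain ⟨N, hN⟩ := exists_nat_gt ((R + 1) * (2 * (lamG + 1)) + 1 + (R + 1))
  have hR1 : 0 < R + 1 := by linarith
  have hNp : (0 : ℝ) < N := lt_trans (by positivity) hN
  set h : ℝ := (R + 1) / N with hh'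
  have hh : 0 < h := by positivity
  have hNh : N * h = R + 1 := by rw [hh']; field_simp
  have hsmall : (lamG + 1) * h ^ 2 ≤ 1 / 2 := by
    have h1 : h ≤ 1 := by
      rw [hh', div_le_one hNp]
      nlinarith [mul_nonneg hR1.le (by linarith : 0 ≤ 2 * (lamG + 1))]
    have h2 : 2 * (lamG + 1) * h ≤ 1 := by
      rw [hh', ← mul_div_assoc, div_le_one hNp]
      nlinarith
    nlinarith
  refine ⟨N, h, (lamG + 1) * (1 / h ^ 3), fun w hw => ?_⟩
  have cb := core_bound hR hRt hK hw
  obtain ⟨h1, h2, h3⟩ := hw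
  have e0 := core_integral hh hNh (int_sq h1 h2) (fun x hx => by
    have : w x = 0 := image_eq_zero_of_notMem_tsupport fun h => hx (h3 h)
    simp [this])
  have e1 := core_integral hh hNh (int_grad h1 h2) (fun x hx => by
    have : fderiv ℝ w x = 0 := fderiv_eq_zero_of_notMem fun h => hx (h3 h)
    simp [gradSq3, this])
  have hs : ∫ x in Core R, (w x) ^ 2 ≤
      1 / h ^ 3 * (∑ v : Fin N × Fin N × Fin N, (∫ x in Cell h v, w x) ^ 2) +
      h ^ 2 * ∫ x in Core R, gradSq3 w x := by
    rw [e0, e1, Finset.mul_sum, Finset.mul_sum, ← Finset.sum_add_distrib]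
    exact Finset.sum_le_sum fun v _ => poincare_cell h1 hh v
  have p : 0 ≤ ∫ x in Core R, gradSq3 w x := integral_nonneg fun x => by
    simp only [gradSq3, Pi.zero_apply]; positivity
  have hs' := mul_le_mul_of_nonneg_left hs (by linarith : 0 ≤ lamG + 1)
  have hp := mul_le_mul_of_nonneg_right hsmall p
  rw [mul_assoc]
  nlinarith

/-! ### Approximation by test functions -/

/-- On the zero set of a function every directional derivative vanishes almost everywhere: along a
line, zeros with nonvanishing derivative are isolated. -/
theorem ae_fderiv_zero {v : ℝ × ℝ × ℝ → ℝ} (hv : Measurable v) (e : ℝ × ℝ × ℝ) :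
    ∀ᵐ x, v x = 0 → fderiv ℝ v x e = 0 := by
  have := haar3
  have hm : MeasurableSet {x | v x = 0 → fderiv ℝ v x e = 0} := by
    have : {x | v x = 0 → fderiv ℝ v x e = 0} = {x | v x = 0}ᶜ ∪ {x | fderiv ℝ v x e = 0} := by
      ext x; simp only [mem_ofPred_eq, mem_union, mem_compl_iff]; tauto
    rw [this]
    exact (hv (measurableSet_singleton 0)).compl.union
      (measurable_fderiv_apply_const ℝ v e (measurableSet_singleton 0))
  refine ae_mem_of_ae_add_linearMap_mem (LinearMap.toSpanSingleton ℝ (ℝ × ℝ × ℝ) e) (volume : Measure ℝ)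
    volume hm fun y => ?_
  set Z : Set ℝ := {t | v (y + t • e) = 0} with hZ
  have hcount : {t ∈ Z | 𝓝[Z ∩ Ioi t] t = ⊥}.Countable := countable_setOfPred_isolated_right_within
  refine measure_mono_null ?_ (hcount.measure_zero volume)
  intro t ht
  have ht' : ¬ (v (y + t • e) = 0 → fderiv ℝ v (y + t • e) e = 0) := ht
  rw [Classical.not_imp] at ht'
  obtain ⟨h1, h2⟩ := ht'
  refine ⟨h1, ?_⟩
  have hd : DifferentiableAt ℝ v (y + t • e) := by
    by_contra hc
    rw [fderiv_zero_of_not_differentiableAt hc] at h2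
    simp at h2
  have h6 : HasDerivAt (fun s : ℝ => y + s • e) e t := by
    simpa using ((hasDerivAt_id t).smul_const e).const_add y
  have h7 : HasDerivAt (fun s : ℝ => v (y + s • e)) (fderiv ℝ v (y + t • e) e) t :=
    hd.hasFDerivAt.comp_hasDerivAt t h6
  have h8 := h7.eventually_ne (c := 0) h2
  rw [← Filter.empty_mem_iff_bot]
  have h9 : ∀ᶠ s in 𝓝[Z ∩ Ioi t] t, v (y + s • e) ≠ 0 :=
    h8.filter_mono (nhdsWithin_mono t fun s hs => ne_of_gt hs.2)
  filter_upwards [h9, self_mem_nhdsWithin] with s hs hs'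
  exact hs hs'.1

/-- Compactly supported cutoffs tending to `1` with gradients of size `O(1/n)`. -/
theorem exists_cutoffs : ∃ (χ : ℕ → ℝ × ℝ × ℝ → ℝ) (C : ℝ), 0 ≤ C ∧ (∀ n, ContDiff ℝ 1 (χ n)) ∧
    (∀ n, HasCompactSupport (χ n)) ∧ (∀ n x, |χ n x| ≤ 1) ∧
    (∀ n x e, |fderiv ℝ (χ n) x e| ≤ C * ‖e‖ * (1 / ((n:ℝ) + 1))) ∧
    ∀ x, Tendsto (fun n => χ n x) atTop (𝓝 1) := by
  let f : ContDiffBump (0 : ℝ × ℝ × ℝ) := ⟨1, 2, one_pos, one_lt_two⟩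
  have hf : ContDiff ℝ 1 f := f.contDiff
  obtain ⟨C, hC⟩ := (hf.continuous_fderiv (by norm_num)).bounded_above_of_compact_support
    (f.hasCompactSupport.fderiv ℝ)
  have hC0 : 0 ≤ C := (norm_nonneg _).trans (hC 0)
  have hk : ∀ n : ℕ, (0:ℝ) < 1 / ((n:ℝ) + 1) := fun n => by positivity
  refine ⟨fun n x => f ((1 / ((n:ℝ) + 1)) • x), C, hC0, fun n => hf.comp (by fun_prop), fun n => ?_,
    fun n x => ?_, fun n x e => ?_, fun x => ?_⟩
  · exact f.hasCompactSupport.comp_smul (hk n).ne'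
  · rw [abs_of_nonneg f.nonneg]; exact f.le_one
  · have h5 := ((hf.differentiable (by norm_num)) ((1 / ((n:ℝ) + 1)) • x)).hasFDerivAt
    have h6 : HasFDerivAt (fun x : ℝ × ℝ × ℝ => (1 / ((n:ℝ) + 1)) • x)
        ((1 / ((n:ℝ) + 1)) • ContinuousLinearMap.id ℝ (ℝ × ℝ × ℝ)) x :=
      ((1 / ((n:ℝ) + 1)) • ContinuousLinearMap.id ℝ (ℝ × ℝ × ℝ)).hasFDerivAt
    have h7 : HasFDerivAt (fun x => f ((1 / ((n:ℝ) + 1)) • x)) _ x := h5.comp x h6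
    rw [h7.fderiv, ContinuousLinearMap.comp_apply, smul_apply, map_smul, smul_eq_mul,
      abs_mul, abs_of_pos (hk n), mul_comm]
    refine mul_le_mul_of_nonneg_right ?_ (hk n).le
    exact (ContinuousLinearMap.le_opNorm _ _).trans (mul_le_mul_of_nonneg_right (hC _) (norm_nonneg _))
  · apply tendsto_const_nhds.congr'
    obtain ⟨m, hm⟩ := exists_nat_gt ‖x‖
    filter_upwards [eventually_ge_atTop m] with n hn
    symm
    apply f.one_of_mem_closedBall
    rw [mem_closedBall_zero_iff, norm_smul, Real.norm_of_nonneg (hk n).le, one_div, inv_mul_le_iff₀ (by positivity)]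
    have : (m:ℝ) ≤ n := by exact_mod_cast hn
    show ‖x‖ ≤ ((n:ℝ) + 1) * 1
    linarith

/-- Functions vanishing off `Λ`, continuous, `C²` in `Λ` and of finite energy. -/
def Nice (v : ℝ × ℝ × ℝ → ℝ) : Prop :=
  Continuous v ∧ (∀ x ∉ Lam3, v x = 0) ∧ ContDiffOn ℝ 2 v Lam3 ∧
  IntegrableOn (fun x => (v x) ^ 2) Lam3 ∧ IntegrableOn (fun x => gradSq3 v x) Lam3

theorem Lam3_open : IsOpen Lam3 := by
  have c : Continuous fun x : ℝ × ℝ × ℝ => min x.1 (min x.2.1 x.2.2) := by fun_prop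
  exact (isOpen_lt continuous_const c).inter (isOpen_lt c continuous_const)

/-- Approximation of `Nice` functions by test functions, with domination. -/
theorem exists_approx {v : ℝ × ℝ × ℝ → ℝ} (hv : Nice v) : ∃ (w : ℕ → ℝ × ℝ × ℝ → ℝ) (C : ℝ), 0 ≤ C ∧
    (∀ n, Test3 (w n)) ∧ (∀ n x, |w n x| ≤ |v x|) ∧
    (∀ e : ℝ × ℝ × ℝ, ‖e‖ ≤ 1 → ∀ n x, |fderiv ℝ (w n) x e| ≤ C * (|fderiv ℝ v x e| + |v x|)) ∧
    (∀ x, Tendsto (fun n => w n x) atTop (𝓝 (v x))) ∧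
    (∀ e, ∀ᵐ x, Tendsto (fun n => fderiv ℝ (w n) x e) atTop (𝓝 (fderiv ℝ v x e))) := by
  obtain ⟨vc, v0, v2, -, -⟩ := hv
  have v1 : ContDiffOn ℝ 1 v Lam3 := v2.of_le (by norm_num)
  obtain ⟨χ, C, hC0, c1, c2, c3, c4, c5⟩ := exists_cutoffs
  obtain ⟨D, hD1, hD⟩ := phi_deriv_bdd
  have t1 := trunc_contDiff vc Lam3_open v1 v0
  have fd : ∀ n x e, fderiv ℝ (fun x => χ n x * phin n (v x)) x e =
      χ n x * (phid n (v x) * fderiv ℝ v x e) + phin n (v x) * fderiv ℝ (χ n) x e := by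
    intro n x e
    have a1 := ((c1 n).differentiable (by norm_num) x).hasFDerivAt
    have a2 := ((t1 n).differentiable (by norm_num) x).hasFDerivAt
    rw [trunc_fderiv vc Lam3_open v1 v0 n x] at a2
    have a3 : HasFDerivAt (fun x => χ n x * phin n (v x)) _ x := a1.mul a2
    rw [a3.fderiv]
    simp
  refine ⟨fun n x => χ n x * phin n (v x), D + C, by linarith, fun n => ⟨(c1 n).mul (t1 n), (c2 n).mul_right, ?_⟩,
    fun n x => ?_, fun e he n x => ?_, fun x => ?_, fun e => ?_⟩
  · refine (tsupport_mul_subset_right).trans ?_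
    have := trunc_tsupport vc v0 n
    exact this.1.trans this.2
  · rw [abs_mul]
    calc |χ n x| * |phin n (v x)| ≤ 1 * |v x| := mul_le_mul (c3 n x) (phin_le n _) (abs_nonneg _) zero_le_one
      _ = _ := one_mul _
  · rw [fd]
    refine (abs_add_le _ _).trans ?_
    rw [abs_mul, abs_mul, abs_mul]
    have b1 : |χ n x| * (|phid n (v x)| * |fderiv ℝ v x e|) ≤ 1 * (D * |fderiv ℝ v x e|) :=
      mul_le_mul (c3 n x) (mul_le_mul_of_nonneg_right (hD _) (abs_nonneg _)) (by positivity) zero_le_one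
    have b2 : |fderiv ℝ (χ n) x e| ≤ C := by
      refine (c4 n x e).trans ?_
      have : 1 / ((n:ℝ) + 1) ≤ 1 := by
        rw [div_le_one (by positivity)]; linarith [(Nat.cast_nonneg n : (0:ℝ) ≤ n)]
      calc C * ‖e‖ * (1 / ((n:ℝ) + 1)) ≤ C * 1 * 1 := by gcongr
        _ = C := by ring
    have b3 : |phin n (v x)| * |fderiv ℝ (χ n) x e| ≤ |v x| * C :=
      mul_le_mul (phin_le n _) b2 (abs_nonneg _) (abs_nonneg _)
    nlinarith [mul_nonneg hC0 (abs_nonneg (fderiv ℝ v x e)), mul_nonneg (by linarith : 0 ≤ D) (abs_nonneg (v x))]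
  · simpa using (c5 x).mul (phin_tendsto (v x))
  · filter_upwards [ae_fderiv_zero vc.measurable e] with x hx
    simp only [fd]
    have l1 : Tendsto (fun n => phid n (v x) * fderiv ℝ v x e) atTop (𝓝 (fderiv ℝ v x e)) := by
      by_cases h : v x = 0
      · simp [hx h]
      · simpa using (phid_tendsto h).mul_const (fderiv ℝ v x e)
    have l2 : Tendsto (fun n => fderiv ℝ (χ n) x e) atTop (𝓝 0) := by
      have : Tendsto (fun n : ℕ => C * ‖e‖ * (1 / ((n:ℝ) + 1))) atTop (𝓝 0) := by
        simpa using tendsto_one_div_add_atTop_nhds_zero_nat.const_mul (C * ‖e‖)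
      exact squeeze_zero_norm (fun n => c4 n x e) this
    simpa using ((c5 x).mul l1).add ((phin_tendsto (v x)).mul l2)

/-! ### Green's formula and passage to finite-energy functions -/

/-- The pointwise scalar product `∇v · ∇u`. -/
def gdot (v u : ℝ × ℝ × ℝ → ℝ) (x : ℝ × ℝ × ℝ) : ℝ :=
  fderiv ℝ v x (1, 0, 0) * fderiv ℝ u x (1, 0, 0) + fderiv ℝ v x (0, 1, 0) * fderiv ℝ u x (0, 1, 0)
    + fderiv ℝ v x (0, 0, 1) * fderiv ℝ u x (0, 0, 1)

theorem gdot_self (u) (x) : gdot u u x = gradSq3 u x := by simp only [gdot, gradSq3]; ring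

theorem gdot_comm (u v) (x) : gdot u v x = gdot v u x := by simp only [gdot]; ring

theorem gdot_meas (u v) : Measurable (gdot u v) := by
  have := fun (w : ℝ × ℝ × ℝ → ℝ) (e : ℝ × ℝ × ℝ) => measurable_fderiv_apply_const ℝ w e
  exact (((this u _).mul (this v _)).add ((this u _).mul (this v _))).add ((this u _).mul (this v _))

theorem gdot_le (u v) (x) : |gdot u v x| ≤ gradSq3 u x + gradSq3 v x := by
  simp only [gdot, gradSq3]
  rw [abs_le]
  constructor <;>
  nlinarith [sq_nonneg (fderiv ℝ u x (1, 0, 0) + fderiv ℝ v x (1, 0, 0)), sq_nonneg (fderiv ℝ u x (1, 0, 0) - fderiv ℝ v x (1, 0, 0)),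
    sq_nonneg (fderiv ℝ u x (0, 1, 0) + fderiv ℝ v x (0, 1, 0)), sq_nonneg (fderiv ℝ u x (0, 1, 0) - fderiv ℝ v x (0, 1, 0)),
    sq_nonneg (fderiv ℝ u x (0, 0, 1) + fderiv ℝ v x (0, 0, 1)), sq_nonneg (fderiv ℝ u x (0, 0, 1) - fderiv ℝ v x (0, 0, 1))]

theorem gradSq3_nonneg (u) (x) : 0 ≤ gradSq3 u x := by simp only [gradSq3]; positivity

theorem Nice.int_gdot {u v : ℝ × ℝ × ℝ → ℝ} (hu : Nice u) (hv : Nice v) : IntegrableOn (gdot u v) Lam3 := by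
  refine Integrable.mono' (hu.2.2.2.2.add hv.2.2.2.2) (gdot_meas u v).aestronglyMeasurable ?_
  exact Eventually.of_forall fun x => gdot_le u v x

theorem Nice.int_mul {u v : ℝ × ℝ × ℝ → ℝ} (hu : Nice u) (hv : Nice v) :
    IntegrableOn (fun x => u x * v x) Lam3 := by
  refine Integrable.mono' (hu.2.2.2.1.add hv.2.2.2.1) (hu.1.mul hv.1).aestronglyMeasurable ?_
  refine Eventually.of_forall fun x => ?_
  simp only [Real.norm_eq_abs, Pi.add_apply]
  rw [abs_le]
  constructor <;> nlinarith [sq_nonneg (u x + v x), sq_nonneg (u x - v x)]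

theorem test_off {w : ℝ × ℝ × ℝ → ℝ} (hw : Test3 w) {x : ℝ × ℝ × ℝ} (hx : x ∉ Lam3) :
    w x = 0 ∧ fderiv ℝ w x = 0 :=
  ⟨image_eq_zero_of_notMem_tsupport fun h => hx (hw.2.2 h), fderiv_eq_zero_of_notMem fun h => hx (hw.2.2 h)⟩

/-- The integral of a directional derivative of a compactly supported `C¹` function vanishes. -/
theorem integral_fderiv_zero {F : ℝ × ℝ × ℝ → ℝ} (hF : ContDiff ℝ 1 F) (hc : HasCompactSupport F) (e : ℝ × ℝ × ℝ) :
    ∫ x, fderiv ℝ F x e = 0 := by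
  have := haar3
  have i0 : Integrable F := hF.continuous.integrable_of_hasCompactSupport hc
  have i1 : Integrable (fun x => fderiv ℝ F x e) :=
    (fderiv_apply_cont hF e).integrable_of_hasCompactSupport (fderiv_apply_hcs hc e)
  have h := integral_mul_fderiv_eq_neg_fderiv_mul_of_integrable (μ := (volume : Measure (ℝ × ℝ × ℝ)))
    (f := fun _ => (1:ℝ)) (g := F) (v := e) (by simp) (by simpa using i1) (by simpa using i0)
    (fun x _ => differentiableAt_const _) (fun x _ => hF.differentiable (by norm_num) x)
  simpa using h

/-- Green's formula against a test function. -/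
theorem green {lam : ℝ} {u w : ℝ × ℝ × ℝ → ℝ} (hu : IsEigenLam lam u) (hw : Test3 w) :
    ∫ x, gdot w u x = lam * ∫ x, w x * u x := by
  obtain ⟨uc, u0, u2, -, -, ul, -⟩ := hu
  have du : ∀ e : ℝ × ℝ × ℝ, ContDiffOn ℝ 1 (fun x => fderiv ℝ u x e) Lam3 := fun e =>
    (u2.fderiv_of_isOpen Lam3_open (by norm_num)).clm_apply contDiffOn_const
  have hF : ∀ e, ContDiff ℝ 1 (fun x => w x * fderiv ℝ u x e) := by
    intro e
    rw [contDiff_iff_contDiffAt]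
    intro x
    by_cases hx : x ∈ Lam3
    · exact hw.1.contDiffAt.mul ((du e).contDiffAt (Lam3_open.mem_nhds hx))
    · refine contDiffAt_const (c := (0:ℝ)) |>.congr_of_eventuallyEq ?_
      filter_upwards [notMem_tsupport_iff_eventuallyEq.1 fun h => hx (hw.2.2 h)] with y hy
      rw [hy]; simp
  have hFc : ∀ e, HasCompactSupport (fun x => w x * fderiv ℝ u x e) := fun e => hw.2.1.mul_right
  have fd : ∀ e x, fderiv ℝ (fun x => w x * fderiv ℝ u x e) x e =
      fderiv ℝ w x e * fderiv ℝ u x e + w x * pd3 e (pd3 e u) x := by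
    intro e x
    by_cases hx : x ∈ Lam3
    · have a1 := (hw.1.differentiable (by norm_num) x).hasFDerivAt
      have a2 := (((du e).contDiffAt (Lam3_open.mem_nhds hx)).differentiableAt (by norm_num)).hasFDerivAt
      have a3 : HasFDerivAt (fun x => w x * fderiv ℝ u x e) _ x := a1.mul a2
      rw [a3.fderiv]
      show w x * fderiv ℝ (fun x => fderiv ℝ u x e) x e + fderiv ℝ u x e * fderiv ℝ w x e = _
      rw [add_comm, mul_comm (fderiv ℝ u x e)]
      rfl
    · have : x ∉ tsupport (fun x => w x * fderiv ℝ u x e) := fun h =>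
        hx (hw.2.2 (tsupport_mul_subset_left h))
      rw [fderiv_eq_zero_of_notMem this, (test_off hw hx).1, (test_off hw hx).2]
      simp
  have ie : ∀ e : ℝ × ℝ × ℝ, Integrable (fun x => fderiv ℝ (fun x => w x * fderiv ℝ u x e) x e) := fun e =>
    (fderiv_apply_cont (hF e) e).integrable_of_hasCompactSupport (fderiv_apply_hcs (hFc e) e)
  have iwu : Integrable (fun x => w x * u x) :=
    (hw.1.continuous.mul uc).integrable_of_hasCompactSupport hw.2.1.mul_right
  have hsum : ∀ x, fderiv ℝ (fun x => w x * fderiv ℝ u x (1, 0, 0)) x (1, 0, 0)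
      + fderiv ℝ (fun x => w x * fderiv ℝ u x (0, 1, 0)) x (0, 1, 0)
      + fderiv ℝ (fun x => w x * fderiv ℝ u x (0, 0, 1)) x (0, 0, 1) = gdot w u x - lam * (w x * u x) := by
    intro x
    rw [fd, fd, fd, gdot]
    by_cases hx : x ∈ Lam3
    · have := ul x hx
      rw [lap3] at this
      linear_combination (-w x) * this
    · rw [(test_off hw hx).1]; ring
  have igd : Integrable (gdot w u) := by
    have : gdot w u = fun x => (fderiv ℝ (fun x => w x * fderiv ℝ u x (1, 0, 0)) x (1, 0, 0)
      + fderiv ℝ (fun x => w x * fderiv ℝ u x (0, 1, 0)) x (0, 1, 0)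
      + fderiv ℝ (fun x => w x * fderiv ℝ u x (0, 0, 1)) x (0, 0, 1)) + lam * (w x * u x) := by
      funext x; rw [hsum x]; ring
    rw [this]
    exact (((ie _).add (ie _)).add (ie _)).add (iwu.const_mul _)
  have h1 : ∫ x, (gdot w u x - lam * (w x * u x)) = 0 := by
    simp_rw [← hsum]
    have i12 : Integrable fun x => fderiv ℝ (fun x => w x * fderiv ℝ u x (1, 0, 0)) x (1, 0, 0)
      + fderiv ℝ (fun x => w x * fderiv ℝ u x (0, 1, 0)) x (0, 1, 0) := (ie _).add (ie _)
    rw [integral_add i12 (ie _), integral_add (ie _) (ie _), integral_fderiv_zero (hF _) (hFc _),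
      integral_fderiv_zero (hF _) (hFc _), integral_fderiv_zero (hF _) (hFc _)]
    norm_num
  rw [integral_sub igd (iwu.const_mul _), integral_const_mul] at h1
  linarith

/-- Dominated convergence for functions living on `Λ`. -/
theorem conv_ae {F : ℕ → ℝ × ℝ × ℝ → ℝ} {G H : ℝ × ℝ × ℝ → ℝ}
    (hm : ∀ n, Measurable (F n)) (h0 : ∀ n, ∀ x ∉ Lam3, F n x = 0)
    (hb : ∀ n, ∀ x, |F n x| ≤ H x) (hH : IntegrableOn H Lam3)
    (hl : ∀ᵐ x, Tendsto (fun n => F n x) atTop (𝓝 (G x))) :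
    Tendsto (fun n => ∫ x, F n x) atTop (𝓝 (∫ x in Lam3, G x)) := by
  have e : ∀ n, ∫ x, F n x = ∫ x in Lam3, F n x := fun n =>
    (setIntegral_eq_integral_of_forall_compl_eq_zero (h0 n)).symm
  simp_rw [e]
  exact tendsto_integral_of_dominated_convergence H (fun n => (hm n).aestronglyMeasurable) hH
    (fun n => Eventually.of_forall fun x => hb n x) (ae_restrict_of_ae hl)

theorem norm_e : ‖((1:ℝ), (0:ℝ), (0:ℝ))‖ ≤ 1 ∧ ‖((0:ℝ), (1:ℝ), (0:ℝ))‖ ≤ 1 ∧ ‖((0:ℝ), (0:ℝ), (1:ℝ))‖ ≤ 1 := by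
  simp [Prod.norm_def]

theorem approx_gradSq {C a a1 b : ℝ} (h : |a1| ≤ C * (|a| + |b|)) :
    a1 ^ 2 ≤ 2 * C ^ 2 * (a ^ 2 + b ^ 2) := by
  have h1 : a1 ^ 2 ≤ (C * (|a| + |b|)) ^ 2 := by
    rw [← sq_abs]; exact pow_le_pow_left₀ (abs_nonneg _) h 2
  have h2 : (|a| + |b|) ^ 2 ≤ 2 * (a ^ 2 + b ^ 2) := by
    rw [← sq_abs a, ← sq_abs b]; nlinarith [sq_nonneg (|a| - |b|)]
  nlinarith [mul_le_mul_of_nonneg_left h2 (sq_nonneg C)]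

/-- Weak form of the eigenvalue equation against every `Nice` function, by approximation in `green`. -/
theorem green_nice {lam : ℝ} {u v : ℝ × ℝ × ℝ → ℝ} (hu : IsEigenLam lam u) (hu' : Nice u) (hv : Nice v) :
    ∫ x in Lam3, gdot v u x = lam * ∫ x in Lam3, v x * u x := by
  obtain ⟨w, C, hC, t, b0, b1, l0, l1⟩ := exists_approx hv
  obtain ⟨n1, n2, n3⟩ := norm_e
  have hgr : ∀ n x, gradSq3 (w n) x ≤ 2 * C ^ 2 * (gradSq3 v x + 3 * (v x) ^ 2) := by
    intro n x
    simp only [gradSq3]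
    linarith [approx_gradSq (b1 _ n1 n x), approx_gradSq (b1 _ n2 n x), approx_gradSq (b1 _ n3 n x)]
  have c1 : Tendsto (fun n => ∫ x, gdot (w n) u x) atTop (𝓝 (∫ x in Lam3, gdot v u x)) := by
    refine conv_ae (H := fun x => 2 * C ^ 2 * (gradSq3 v x + 3 * (v x) ^ 2) + gradSq3 u x)
      (fun n => gdot_meas _ _) (fun n x hx => ?_) (fun n x => ?_) ?_ ?_
    · simp [gdot, (test_off (t n) hx).2]
    · exact (gdot_le _ _ x).trans (add_le_add (hgr n x) le_rfl)
    · exact ((hv.2.2.2.2.add (hv.2.2.2.1.const_mul 3)).const_mul _).add hu'.2.2.2.2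
    · filter_upwards [l1 (1, 0, 0), l1 (0, 1, 0), l1 (0, 0, 1)] with x h1 h2 h3
      exact ((h1.mul_const _).add (h2.mul_const _)).add (h3.mul_const _)
  have c2 : Tendsto (fun n => ∫ x, w n x * u x) atTop (𝓝 (∫ x in Lam3, v x * u x)) := by
    refine conv_ae (H := fun x => (v x) ^ 2 + (u x) ^ 2)
      (fun n => (((t n).1.continuous).mul hu'.1).measurable) (fun n x hx => ?_) (fun n x => ?_) ?_ ?_
    · simp [(test_off (t n) hx).1]
    · rw [abs_mul]
      have := mul_le_mul_of_nonneg_right (b0 n x) (abs_nonneg (u x))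
      rw [← sq_abs (v x), ← sq_abs (u x)]
      nlinarith [sq_nonneg (|v x| - |u x|), sq_nonneg (|v x| + |u x|)]
    · exact hv.2.2.2.1.add hu'.2.2.2.1
    · exact Eventually.of_forall fun x => (l0 x).mul_const _
  have c3 := c2.const_mul lam
  simp_rw [← green hu (t _)] at c3
  exact tendsto_nhds_unique c1 c3

/-- The bound `form_bound` extended to functions of finite energy. -/
theorem form_bound_nice : ∃ (N : ℕ) (h C : ℝ), ∀ v, Nice v →
    0 ≤ (∫ x in Lam3, gdot v v x) - lamG * (∫ x in Lam3, v x * v x) +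
      C * ∑ k : Fin N × Fin N × Fin N, (∫ x in Cell h k, v x) ^ 2 := by
  obtain ⟨N, h, D, hD⟩ := form_bound
  refine ⟨N, h, D, fun v hv => ?_⟩
  obtain ⟨w, C, hC, t, b0, b1, l0, l1⟩ := exists_approx hv
  obtain ⟨n1, n2, n3⟩ := norm_e
  have hgr : ∀ n x, gradSq3 (w n) x ≤ 2 * C ^ 2 * (gradSq3 v x + 3 * (v x) ^ 2) := by
    intro n x
    simp only [gradSq3]
    linarith [approx_gradSq (b1 _ n1 n x), approx_gradSq (b1 _ n2 n x), approx_gradSq (b1 _ n3 n x)]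
  have c1 : Tendsto (fun n => ∫ x, gradSq3 (w n) x) atTop (𝓝 (∫ x in Lam3, gdot v v x)) := by
    refine conv_ae (H := fun x => 2 * C ^ 2 * (gradSq3 v x + 3 * (v x) ^ 2))
      (fun n => ?_) (fun n x hx => ?_) (fun n x => ?_) ?_ ?_
    · have e : gdot (w n) (w n) = gradSq3 (w n) := funext fun x => gdot_self _ x
      rw [← e]; exact gdot_meas _ _
    · simp [gradSq3, (test_off (t n) hx).2]
    · rw [abs_of_nonneg (gradSq3_nonneg _ _)]; exact hgr n x
    · exact (hv.2.2.2.2.add (hv.2.2.2.1.const_mul 3)).const_mul _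
    · filter_upwards [l1 (1, 0, 0), l1 (0, 1, 0), l1 (0, 0, 1)] with x h1 h2 h3
      simp only [← gdot_self]
      exact ((h1.mul h1).add (h2.mul h2)).add (h3.mul h3)
  have c2 : Tendsto (fun n => ∫ x, (w n x) ^ 2) atTop (𝓝 (∫ x in Lam3, v x * v x)) := by
    refine conv_ae (H := fun x => (v x) ^ 2)
      (fun n => (((t n).1.continuous).pow 2).measurable) (fun n x hx => ?_) (fun n x => ?_) hv.2.2.2.1 ?_
    · simp [(test_off (t n) hx).1]
    · rw [abs_of_nonneg (sq_nonneg _)]; exact sq_le_sq.2 (b0 n x)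
    · refine Eventually.of_forall fun x => ?_
      simpa only [sq] using (l0 x).mul (l0 x)
  have c3 : ∀ k : Fin N × Fin N × Fin N,
      Tendsto (fun n => ∫ x in Cell h k, w n x) atTop (𝓝 (∫ x in Cell h k, v x)) := fun k =>
    tendsto_integral_of_dominated_convergence (fun x => |v x|)
      (fun n => (t n).1.continuous.aestronglyMeasurable) (integrableOn_bdd hv.1.abs (Cell_bdd h k))
      (fun n => Eventually.of_forall fun x => b0 n x) (Eventually.of_forall l0)
  have c4 := (c1.sub (c2.const_mul lamG)).add
    ((tendsto_finsetSum Finset.univ fun k _ => (c3 k).pow 2).const_mul D)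
  refine ge_of_tendsto' c4 fun n => ?_
  have := hD (w n) (t n)
  rwa [integral_sub (int_grad (t n).1 (t n).2.1) ((int_sq (t n).1 (t n).2.1).const_mul _),
    integral_const_mul] at this

/-! ### Linear algebra and conclusion -/

/-- Linear algebra behind the counting: if `a - L b` is nonnegative on the kernel of a finite-rank
map `T`, the eigenvectors of `a` relative to `b` with eigenvalue below `L` span a finite-dimensional
space, because `a - L b` is negative definite on that span and so `T` is injective there. -/
theorem finite_of_form {N W : Type*} [AddCommGroup N] [Module ℝ N] [AddCommGroup W] [Module ℝ W]
    [FiniteDimensional ℝ W] (a b : N →ₗ[ℝ] N →ₗ[ℝ] ℝ) (ha : ∀ u v, a u v = a v u) (hb : ∀ u v, b u v = b v u)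
    (hb0 : ∀ u, 0 ≤ b u u) (hb1 : ∀ u, b u u = 0 → u = 0) (L : ℝ) (T : N →ₗ[ℝ] W)
    (hT : ∀ u, T u = 0 → 0 ≤ a u u - L * b u u) :
    FiniteDimensional ℝ ↥(⨆ i : {lam : ℝ // lam < L}, LinearMap.ker (a.flip - i.1 • b.flip)) := by
  set U := ⨆ i : {lam : ℝ // lam < L}, LinearMap.ker (a.flip - i.1 • b.flip) with hU
  suffices h : Function.Injective (T.domRestrict U) from FiniteDimensional.of_injective _ h
  rw [← LinearMap.ker_eq_bot, LinearMap.ker_eq_bot']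
  rintro ⟨u, hu⟩ hTu
  have hTu' : T u = 0 := hTu
  obtain ⟨f, hf, hfu⟩ := (Submodule.mem_iSup_iff_exists_finsupp _ _).1 hu
  have hE : ∀ i v, a v (f i) = i.1 * b v (f i) := by
    intro i v
    have h1 := LinearMap.congr_fun (LinearMap.mem_ker.1 (hf i)) v
    simp only [LinearMap.sub_apply, LinearMap.smul_apply, LinearMap.flip_apply, LinearMap.zero_apply,
      smul_eq_mul] at h1
    linarith
  have horth : ∀ i j, i ≠ j → b (f i) (f j) = 0 := by
    intro i j hij
    have h1 := hE j (f i)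
    have h2 := hE i (f j)
    rw [ha, h2, hb] at h1
    have h3 : i.1 - j.1 ≠ 0 := sub_ne_zero.2 fun h => hij (Subtype.ext h)
    have h4 : (i.1 - j.1) * b (f i) (f j) = 0 := by linear_combination h1
    exact (mul_eq_zero.1 h4).resolve_left h3
  have hbu : ∀ j ∈ f.support, b u (f j) = b (f j) (f j) := by
    intro j hj
    rw [← hfu, Finsupp.sum, map_sum, LinearMap.sum_apply]
    exact Finset.sum_eq_single_of_mem j hj fun i _ hij => horth i j hij
  have e1 : a u u = ∑ j ∈ f.support, j.1 * b (f j) (f j) := by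
    conv_lhs => rw [← hfu]
    rw [Finsupp.sum, map_sum]
    have : a (∑ i ∈ f.support, f i) = a u := by rw [← hfu, Finsupp.sum]
    rw [this]
    refine Finset.sum_congr rfl fun j hj => ?_
    rw [hE, hbu j hj]
  have e2 : b u u = ∑ j ∈ f.support, b (f j) (f j) := by
    conv_lhs => rw [← hfu]
    rw [Finsupp.sum, map_sum]
    have : b (∑ i ∈ f.support, f i) = b u := by rw [← hfu, Finsupp.sum]
    rw [this]
    exact Finset.sum_congr rfl fun j hj => hbu j hj
  have h0 := hT u hTu'
  rw [e1, e2, Finset.mul_sum, ← Finset.sum_sub_distrib] at h0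
  have hz : ∀ j ∈ f.support, f j = 0 := by
    by_contra hc
    push Not at hc
    obtain ⟨j, hj, hne⟩ := hc
    refine absurd h0 (not_le.2 (Finset.sum_neg' (fun i _ => ?_) ⟨j, hj, ?_⟩))
    · nlinarith [hb0 (f i), i.2]
    · have := (hb0 (f j)).lt_of_ne fun h => hne (hb1 _ h.symm)
      nlinarith [j.2]
  have : u = 0 := by
    rw [← hfu, Finsupp.sum]
    exact Finset.sum_eq_zero hz
  exact Subtype.ext this

theorem Nice.fderiv_add {u v : ℝ × ℝ × ℝ → ℝ} (hu : Nice u) (hv : Nice v) {x : ℝ × ℝ × ℝ} (hx : x ∈ Lam3) :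
    fderiv ℝ (u + v) x = fderiv ℝ u x + fderiv ℝ v x :=
  _root_.fderiv_add ((hu.2.2.1.contDiffAt (Lam3_open.mem_nhds hx)).differentiableAt (by norm_num))
    ((hv.2.2.1.contDiffAt (Lam3_open.mem_nhds hx)).differentiableAt (by norm_num))

theorem fderiv_smul' (c : ℝ) (u : ℝ × ℝ × ℝ → ℝ) (x : ℝ × ℝ × ℝ) :
    fderiv ℝ (c • u) x = c • fderiv ℝ u x := by
  simp [fderiv_const_smul_field]

theorem Lam3_meas : MeasurableSet Lam3 := Lam3_open.measurableSet

/-- The space of finite-energy functions `Nice`. -/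
def NiceSpace : Submodule ℝ (ℝ × ℝ × ℝ → ℝ) where
  carrier := {u | Nice u}
  zero_mem' := by
    refine ⟨continuous_zero, fun x _ => rfl, contDiffOn_const, by simp, ?_⟩
    have : (fun x => gradSq3 (0 : ℝ × ℝ × ℝ → ℝ) x) = fun _ => 0 := by
      funext x; simp [gradSq3]
    rw [this]
    exact integrableOn_zero
  add_mem' := by
    intro u v hu hv
    refine ⟨hu.1.add hv.1, fun x hx => by simp [hu.2.1 x hx, hv.2.1 x hx], hu.2.2.1.add hv.2.2.1, ?_, ?_⟩
    · have h : IntegrableOn (fun x => (u x) ^ 2 + (v x) ^ 2 + 2 * (u x * v x)) Lam3 :=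
        (hu.2.2.2.1.add hv.2.2.2.1).add ((hu.int_mul hv).const_mul 2)
      refine h.congr_fun (fun x _ => ?_) Lam3_meas
      simp only [Pi.add_apply]; ring
    · have h : IntegrableOn (fun x => gradSq3 u x + gradSq3 v x + 2 * gdot u v x) Lam3 :=
        (hu.2.2.2.2.add hv.2.2.2.2).add ((hu.int_gdot hv).const_mul 2)
      refine h.congr_fun (fun x hx => ?_) Lam3_meas
      simp only [gradSq3, gdot, hu.fderiv_add hv hx, add_apply]
      ring
  smul_mem' := by
    intro c u hu
    refine ⟨hu.1.const_smul c, fun x hx => by simp [hu.2.1 x hx], hu.2.2.1.const_smul c, ?_, ?_⟩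
    · have h : IntegrableOn (fun x => c ^ 2 * (u x) ^ 2) Lam3 := hu.2.2.2.1.const_mul _
      refine h.congr_fun (fun x _ => ?_) Lam3_meas
      simp only [Pi.smul_apply, smul_eq_mul]; ring
    · have h : IntegrableOn (fun x => c ^ 2 * gradSq3 u x) Lam3 := hu.2.2.2.2.const_mul _
      refine h.congr_fun (fun x _ => ?_) Lam3_meas
      simp only [gradSq3, fderiv_smul', smul_apply, smul_eq_mul]
      ring

/-- The energy form `∫_Λ ∇u · ∇v`. -/
def aForm : NiceSpace →ₗ[ℝ] NiceSpace →ₗ[ℝ] ℝ :=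
  LinearMap.mk₂ ℝ (fun u v => ∫ x in Lam3, gdot u.1 v.1 x)
    (fun u u' v => by
      rw [← integral_add (u.2.int_gdot v.2) (u'.2.int_gdot v.2)]
      refine setIntegral_congr_fun Lam3_meas fun x hx => ?_
      simp only [gdot, Submodule.coe_add, u.2.fderiv_add u'.2 hx, add_apply]; ring)
    (fun c u v => by
      rw [smul_eq_mul, ← integral_const_mul]
      refine setIntegral_congr_fun Lam3_meas fun x hx => ?_
      simp only [gdot, Submodule.coe_smul, fderiv_smul', smul_apply, smul_eq_mul]; ring)
    (fun u v v' => by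
      rw [← integral_add (u.2.int_gdot v.2) (u.2.int_gdot v'.2)]
      refine setIntegral_congr_fun Lam3_meas fun x hx => ?_
      simp only [gdot, Submodule.coe_add, v.2.fderiv_add v'.2 hx, add_apply]; ring)
    (fun c u v => by
      rw [smul_eq_mul, ← integral_const_mul]
      refine setIntegral_congr_fun Lam3_meas fun x hx => ?_
      simp only [gdot, Submodule.coe_smul, fderiv_smul', smul_apply, smul_eq_mul]; ring)

/-- The `L²(Λ)` scalar product. -/
def bForm : NiceSpace →ₗ[ℝ] NiceSpace →ₗ[ℝ] ℝ :=
  LinearMap.mk₂ ℝ (fun u v => ∫ x in Lam3, u.1 x * v.1 x)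
    (fun u u' v => by
      rw [← integral_add (u.2.int_mul v.2) (u'.2.int_mul v.2)]
      refine setIntegral_congr_fun Lam3_meas fun x hx => ?_
      simp only [Submodule.coe_add, Pi.add_apply]; ring)
    (fun c u v => by
      rw [smul_eq_mul, ← integral_const_mul]
      refine setIntegral_congr_fun Lam3_meas fun x hx => ?_
      simp only [Submodule.coe_smul, Pi.smul_apply, smul_eq_mul]; ring)
    (fun u v v' => by
      rw [← integral_add (u.2.int_mul v.2) (u.2.int_mul v'.2)]
      refine setIntegral_congr_fun Lam3_meas fun x hx => ?_
      simp only [Submodule.coe_add, Pi.add_apply]; ring)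
    (fun c u v => by
      rw [smul_eq_mul, ← integral_const_mul]
      refine setIntegral_congr_fun Lam3_meas fun x hx => ?_
      simp only [Submodule.coe_smul, Pi.smul_apply, smul_eq_mul]; ring)

/-- The integrals over the grid cells. -/
def cellMap (h : ℝ) (N : ℕ) : NiceSpace →ₗ[ℝ] (Fin N × Fin N × Fin N → ℝ) where
  toFun u k := ∫ x in Cell h k, u.1 x
  map_add' u v := by
    funext k
    exact integral_add (integrableOn_bdd u.2.1 (Cell_bdd h k)) (integrableOn_bdd v.2.1 (Cell_bdd h k))
  map_smul' c u := by
    funext k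
    exact integral_const_mul c _

/-- Definiteness uses continuity: a continuous function vanishing almost everywhere is zero. -/
theorem bForm_pos {u : NiceSpace} (h : bForm u u = 0) : u = 0 := by
  have := haar3
  have h1 : ∫ x in Lam3, u.1 x * u.1 x = 0 := h
  have hc : Continuous fun x => u.1 x * u.1 x := u.2.1.mul u.2.1
  have off : ∀ x ∉ Lam3, u.1 x * u.1 x = 0 := fun x hx => by simp [u.2.2.1 x hx]
  rw [setIntegral_eq_integral_of_forall_compl_eq_zero off] at h1
  have hi : Integrable fun x => u.1 x * u.1 x :=
    (integrableOn_iff_integrable_of_support_subset (by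
      intro x hx
      by_contra hn
      exact hx (off x hn))).1 (u.2.int_mul u.2)
  rw [integral_eq_zero_iff_of_nonneg (fun x => mul_self_nonneg _) hi] at h1
  have h2 := (hc.ae_eq_iff_eq volume continuous_zero).1 h1
  apply Subtype.ext
  funext x
  exact mul_self_eq_zero.1 (congrFun h2 x)

/-- Theorem 1.2 ii: the Dirichlet Laplacian on the Fichera layer `Λ`
has at most finitely many bound states below the threshold `λ₁(Γ)`: the linear span of
all eigenfunctions with eigenvalue below `λ₁(Γ)` is finite-dimensional. -/
theorem finitely_many_bound_states :
    FiniteDimensional ℝ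
      ↥(Submodule.span ℝ {u : ℝ × ℝ × ℝ → ℝ | ∃ lam < lamG, IsEigenLam lam u}) := by
  obtain ⟨N, h, C, hC⟩ := form_bound_nice
  have hfin := finite_of_form aForm bForm
    (fun u v => integral_congr_ae (Eventually.of_forall fun x => gdot_comm u.1 v.1 x))
    (fun u v => integral_congr_ae (Eventually.of_forall fun x => mul_comm (u.1 x) (v.1 x)))
    (fun u => integral_nonneg fun x => mul_self_nonneg (u.1 x)) (fun u hu => bForm_pos hu) lamG
    (cellMap h N) (fun u hu => by
      have h1 := hC u.1 u.2
      have h2 : ∑ k : Fin N × Fin N × Fin N, (∫ x in Cell h k, u.1 x) ^ 2 = 0 := by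
        refine Finset.sum_eq_zero fun k _ => ?_
        have h3 : ∫ x in Cell h k, u.1 x = 0 := congrFun hu k
        rw [h3]; norm_num
      rw [h2, mul_zero, add_zero] at h1
      exact h1)
  set U := ⨆ i : {lam : ℝ // lam < lamG}, LinearMap.ker (aForm.flip - i.1 • bForm.flip) with hU
  have hle : Submodule.span ℝ {u : ℝ × ℝ × ℝ → ℝ | ∃ lam < lamG, IsEigenLam lam u} ≤ U.map NiceSpace.subtype := by
    rw [Submodule.span_le]
    rintro u ⟨lam, hl, hu⟩
    have hn : Nice u := ⟨hu.1, hu.2.1, hu.2.2.1, hu.2.2.2.1, hu.2.2.2.2.1⟩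
    refine ⟨⟨u, hn⟩, ?_, rfl⟩
    have hk : (⟨u, hn⟩ : NiceSpace) ∈ LinearMap.ker (aForm.flip - lam • bForm.flip) := by
      rw [LinearMap.mem_ker]
      ext v
      exact sub_eq_zero.2 (green_nice hu hn v.2)
    exact Submodule.mem_iSup_of_mem (p := fun i : {lam : ℝ // lam < lamG} => LinearMap.ker (aForm.flip - i.1 • bForm.flip))
      ⟨lam, hl⟩ hk
  exact Submodule.finiteDimensional_of_le hle
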